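/- (Continuity of the time derivative of the solution.) Let the collision kernel b : (0, π/2] → [0,∞) be measurable and satisfy, for some α₀ ∈ (0,2], ∫₀^{π/2} sin^{α₀}(θ/2) · b(cos θ) · sin θ dθ < ∞, let α ∈ [α₀, 2], ψ₀ ∈ 𝒦^α, and let ψ be a solution of the Fourier-transformed (Bobylev) homogeneous Boltzmann Cauchy problem with initial datum ψ₀, with ψ(t,·) ∈ 𝒦^α for each t and t ↦ ψ(t,·) continuous into 𝒦^α. Then the map (t, ξ) ↦ ∂_t ψ(t, ξ) is continuous on [0,∞) × ℝ³. -/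

import Mathlib

noncomputable section

open MeasureTheory Real Filter Metric Set
open scoped RealInnerProductSpace Topology

/-- ℝ³ as a Euclidean space. -/
abbrev E3 : Type := EuclideanSpace ℝ (Fin 3)

/-- The surface measure on the unit sphere S² ⊂ ℝ³. -/
def sphμ : Measure (sphere (0 : E3) 1) := (volume : Measure E3).toSphere

/-- The characteristic function (Fourier transform) of a Borel measure on ℝ³,
`ψ(ξ) = ∫ e^{-i v·ξ} dΨ(v)`. -/
def charFn (Ψ : Measure E3) (ξ : E3) : ℂ :=
  ∫ v, Complex.exp (-(Complex.I * (⟪v, ξ⟫ : ℂ))) ∂Ψ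

/-- `ψ` is a characteristic function of some Borel probability measure on ℝ³. -/
def IsCharFn (ψ : E3 → ℂ) : Prop :=
  ∃ Ψ : Measure E3, IsProbabilityMeasure Ψ ∧ ψ = charFn Ψ

/-- Finiteness of `‖φ - 1‖_α`, i.e. the quantitative part of membership in `𝒦^α`. -/
def KBdd (α : ℝ) (φ : E3 → ℂ) : Prop :=
  ∃ C : ℝ, ∀ ξ : E3, ξ ≠ 0 → ‖φ ξ - 1‖ ≤ C * ‖ξ‖ ^ α

/-- Membership in the space `𝒦^α`. -/
def memK (α : ℝ) (φ : E3 → ℂ) : Prop := IsCharFn φ ∧ KBdd α φ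

/-- The distance `‖φ - φ'‖_α = sup_{ξ ≠ 0} |φ(ξ) - φ'(ξ)|/|ξ|^α` on `𝒦^α`. -/
def Kdist (α : ℝ) (φ φ' : E3 → ℂ) : ℝ :=
  ⨆ ξ : {ξ : E3 // ξ ≠ 0}, ‖φ ξ.1 - φ' ξ.1‖ / ‖(ξ.1 : E3)‖ ^ α

/-- `ξ⁺ = ξ/2 + (|ξ|/2)σ`. -/
def xiPlus (ξ : E3) (σ : sphere (0 : E3) 1) : E3 := (1/2 : ℝ) • ξ + (‖ξ‖ / 2) • (σ : E3)

/-- `ξ⁻ = ξ/2 - (|ξ|/2)σ`. -/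
def xiMinus (ξ : E3) (σ : sphere (0 : E3) 1) : E3 := (1/2 : ℝ) • ξ - (‖ξ‖ / 2) • (σ : E3)

/-- The Bobylev collision integrand at time `t`, frequency `ξ`, direction `σ`. -/
def bobylevIntegrand (b : ℝ → ℝ) (ψ : ℝ → E3 → ℂ) (t : ℝ) (ξ : E3)
    (σ : sphere (0 : E3) 1) : ℂ :=
  (b (⟪ξ, (σ : E3)⟫ / ‖ξ‖) : ℂ) *
    (ψ t (xiPlus ξ σ) * ψ t (xiMinus ξ σ) - ψ t ξ)

/-- `ψ : [0,∞) × ℝ³ → ℂ` is a solution of the Fourier-transformed (Bobylev)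
homogeneous Boltzmann Cauchy problem with collision kernel `b` and initial datum `ψ₀`. -/
structure IsBobylevSolution (b : ℝ → ℝ) (ψ : ℝ → E3 → ℂ) (ψ₀ : E3 → ℂ) : Prop where
  cont : ContinuousOn (fun p : ℝ × E3 => ψ p.1 p.2) (Set.Ici 0 ×ˢ Set.univ)
  init : ψ 0 = ψ₀
  isCharFn : ∀ t ≥ 0, IsCharFn (ψ t)
  integrable : ∀ t ≥ 0, ∀ ξ : E3, Integrable (bobylevIntegrand b ψ t ξ) sphμ
  eq : ∀ t ≥ 0, ∀ ξ : E3, HasDerivWithinAt (fun τ => ψ τ ξ)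
      (∫ σ, bobylevIntegrand b ψ t ξ σ ∂sphμ) (Set.Ici 0) t

/-- Continuity of `t ↦ ψ(t,·)` from `[0,∞)` into the metric space `(𝒦^α, ‖·‖_α)`. -/
def KContinuous (α : ℝ) (ψ : ℝ → E3 → ℂ) : Prop :=
  ∀ t₀ ∈ Set.Ici (0:ℝ), Tendsto (fun t => Kdist α (ψ t) (ψ t₀)) (𝓝[Set.Ici (0:ℝ)] t₀) (𝓝 0)

/-- The angular singularity assumption `b(cos θ) θ^{2+2s} → K` as `θ → 0+`. -/
def KernelSingular (b : ℝ → ℝ) (s K : ℝ) : Prop :=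
  Tendsto (fun θ : ℝ => b (Real.cos θ) * θ ^ (2 + 2*s)) (𝓝[>] 0) (𝓝 K)

/-!
In a frame at `ξ` the collision integral is `∫ (ψ(ξ⁺)ψ(ξ⁻) - ψ(ξ)) dm` for one rotation invariant
measure `m` on the hemisphere around the pole. Write `s = sin²(θ/2)`, where `θ` is the angle to the
pole, and let `Ψₜ` be the law with characteristic function `ψ(t)`.

If `s` is not `m`-integrable, then integrability of the bracket alone forces `Ψₜ` to be a point mass
or an isotropic Gaussian. These are equilibria: the bracket vanishes identically, and so does `∂ₜψ`.

If `s` is `m`-integrable, continuity follows by dominated convergence. Averaging the bracket over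
antipodal azimuths bounds it by a multiple of `(1 + |ξ|²)(s + Dₜ(s))`, where
`Dₜ(S) = ∫ (1 - e^{-S|V|²}) dΘₜ(V)` and `Θₜ` is the symmetrization of `Ψₜ`; the integrability of the
bracket makes `Dₜ(s)` integrable against `m`. What remains is to bound `Dₜ(s)` locally uniformly in
`t`. Averaging the equation for `|ψ|²` over Gaussian frequencies yields a Gronwall inequality which
runs backwards in time, `D_a(S) ≤ e^{β(c - a)} D_c(S)` for `a ≤ c` with `β = ∫ s dm`, so that a
single later time dominates a whole neighbourhood. Differentiating under the Gaussian average needs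
a local bound on `∫ (s + Dₜ(s)) dm`; lower semicontinuity and Baire's theorem give it on a dense
open set, and the Gronwall inequality spreads it to all times.
-/

section SphereMeasure

variable {E : Type*} [NormedAddCommGroup E] [InnerProductSpace ℝ E] [MeasurableSpace E]
  [BorelSpace E] [FiniteDimensional ℝ E]

variable (E) in
/-- The surface measure of the unit sphere, as a measure on the ambient space. It lets linear
isometries act on directions without leaving the ambient space. -/
def ambientSphereMeasure : Measure E := (volume : Measure E).toSphere.map Subtype.val

instance : IsFiniteMeasure (ambientSphereMeasure E) := by
  unfold ambientSphereMeasure; infer_instance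

section

variable {F : Type*} [NormedAddCommGroup F] (f : E → F)

lemma integral_ambientSphereMeasure [NormedSpace ℝ F] :
    ∫ σ, f σ ∂(ambientSphereMeasure E) =
      ∫ σ : sphere (0 : E) 1, f σ ∂(volume : Measure E).toSphere :=
  (MeasurableEmbedding.subtype_coe isClosed_sphere.measurableSet).integral_map f

lemma integrable_ambientSphereMeasure_iff :
    Integrable f (ambientSphereMeasure E) ↔
      Integrable (fun σ : sphere (0 : E) 1 ↦ f σ) (volume : Measure E).toSphere :=
  (MeasurableEmbedding.subtype_coe isClosed_sphere.measurableSet).integrable_map_iff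

end

open scoped Pointwise in
lemma ambientSphereMeasure_apply {s : Set E} (hs : MeasurableSet s) :
    ambientSphereMeasure E s =
      Module.finrank ℝ E * volume (Ioo (0 : ℝ) 1 • (s ∩ sphere (0 : E) 1)) := by
  rw [ambientSphereMeasure, Measure.map_apply measurable_subtype_coe hs,
    Measure.toSphere_apply' _ (measurable_subtype_coe hs), Subtype.image_preimage_coe,
    Set.inter_comm]

lemma measurePreserving_ambientSphereMeasure (R : E ≃ₗᵢ[ℝ] E) :
    MeasurePreserving R (ambientSphereMeasure E) (ambientSphereMeasure E) := by
  have hR : Measurable R := R.continuous.measurable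
  refine ⟨hR, ?_⟩
  ext s hs
  rw [Measure.map_apply hR hs, ambientSphereMeasure_apply (hR hs), ambientSphereMeasure_apply hs]
  open scoped Pointwise in
  have hcone : R ⁻¹' (Ioo (0 : ℝ) 1 • (s ∩ sphere (0 : E) 1)) =
      Ioo (0 : ℝ) 1 • (R ⁻¹' s ∩ sphere (0 : E) 1) := by
    ext x
    simp only [Set.mem_smul, Set.mem_preimage, Set.mem_inter_iff, mem_sphere_zero_iff_norm]
    constructor
    · rintro ⟨a, ha, y, ⟨hys, hy⟩, h⟩
      exact ⟨a, ha, R.symm y, ⟨by simpa using hys, by simpa using hy⟩,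
        R.injective (by simpa using h)⟩
    · rintro ⟨a, ha, y, ⟨hys, hy⟩, rfl⟩
      exact ⟨a, ha, R y, ⟨hys, by simpa using hy⟩, by simp⟩
  rw [← hcone,
    R.measurePreserving.measure_preimage_emb R.toHomeomorph.measurableEmbedding]

lemma ae_norm_eq_one_ambientSphereMeasure : ∀ᵐ σ ∂(ambientSphereMeasure E), ‖σ‖ = 1 := by
  rw [ambientSphereMeasure, ae_map_iff measurable_subtype_coe.aemeasurable
    (measurableSet_eq_fun continuous_norm.measurable measurable_const)]
  filter_upwards with σ
  simp

end SphereMeasure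

section Hemisphere

/-- The pole of the reference sphere. Collision directions `σ` for the frequency `ξ` are written
`σ = L ω`, where the linear isometry `L` takes the pole to `ξ/|ξ|`. -/
def pole : E3 := EuclideanSpace.single 0 1

@[simp] lemma norm_pole : ‖pole‖ = 1 := by simp [pole]

lemma pole_ne_zero : pole ≠ 0 := norm_ne_zero_iff.1 (by simp)

@[simp] lemma pole_zero : pole 0 = 1 := by simp [pole]

@[simp] lemma pole_one : pole 1 = 0 := by simp [pole]

@[simp] lemma pole_two : pole 2 = 0 := by simp [pole]

lemma inner_pole_left (ω : E3) : ⟪pole, ω⟫ = ω 0 := by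
  simp [pole, EuclideanSpace.inner_single_left]

lemma inner_pole_right (ω : E3) : ⟪ω, pole⟫ = ω 0 := by
  rw [real_inner_comm, inner_pole_left]

lemma coord_zero_eq_of_map_pole {R : E3 ≃ₗᵢ[ℝ] E3} (hR : R pole = pole) (ω : E3) :
    (R ω) 0 = ω 0 := by
  rw [← inner_pole_left, ← inner_pole_left, ← R.inner_map_map pole ω, hR]

/-- The closed unit hemisphere around the pole. -/
def upperHemisphere : Set E3 := {ω | ‖ω‖ = 1 ∧ 0 ≤ ω 0}

lemma measurableSet_upperHemisphere : MeasurableSet upperHemisphere :=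
  (measurableSet_eq_fun continuous_norm.measurable measurable_const).inter
    (measurableSet_le measurable_const (f := fun _ ↦ (0 : ℝ)) (g := fun ω : E3 ↦ ω 0) (by fun_prop))

/-- The map folding the unit sphere onto the upper hemisphere by `ω ↦ -ω`. -/
def foldToHemisphere (ω : E3) : E3 := if ω 0 < 0 then -ω else ω

lemma measurable_foldToHemisphere : Measurable foldToHemisphere :=
  Measurable.ite (measurableSet_lt (by fun_prop) measurable_const) measurable_neg measurable_id

lemma foldToHemisphere_mem {ω : E3} (hω : ‖ω‖ = 1) : foldToHemisphere ω ∈ upperHemisphere := by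
  unfold foldToHemisphere
  split_ifs with h
  · exact ⟨by simpa using hω, by simpa using h.le⟩
  · exact ⟨hω, not_lt.1 h⟩

lemma map_foldToHemisphere {R : E3 ≃ₗᵢ[ℝ] E3} (hR : R pole = pole) (ω : E3) :
    R (foldToHemisphere ω) = foldToHemisphere (R ω) := by
  simp only [foldToHemisphere, coord_zero_eq_of_map_pole hR]
  split_ifs <;> simp

end Hemisphere

section AxialKernel

/-- A collision kernel in frame coordinates: a measure on the upper hemisphere which is invariant
under the isometries fixing the pole. -/
structure IsAxialKernel (m : Measure E3) : Prop where
  ae_mem : ∀ᵐ ω ∂m, ω ∈ upperHemisphere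
  measurePreserving : ∀ R : E3 ≃ₗᵢ[ℝ] E3, R pole = pole → MeasurePreserving R m m

namespace IsAxialKernel

variable {m : Measure E3} (hm : IsAxialKernel m) {F : Type*} [NormedAddCommGroup F]
  {R : E3 ≃ₗᵢ[ℝ] E3} (hR : R pole = pole)
include hm hR

lemma integrable_comp {f : E3 → F} : Integrable (fun ω ↦ f (R ω)) m ↔ Integrable f m :=
  (hm.measurePreserving R hR).integrable_comp_emb R.toHomeomorph.measurableEmbedding

lemma integral_comp [NormedSpace ℝ F] (f : E3 → F) : ∫ ω, f (R ω) ∂m = ∫ ω, f ω ∂m :=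
  (hm.measurePreserving R hR).integral_comp R.toHomeomorph.measurableEmbedding f

end IsAxialKernel

/-- The measure `b(ω₀) dω` on the sphere. -/
def sphereKernel (b : ℝ → ℝ) : Measure E3 :=
  (ambientSphereMeasure E3).withDensity fun ω ↦ ENNReal.ofReal (b (ω 0))

/-- The measure `b(ω₀) dω` on the sphere, folded onto the upper hemisphere. The collision
integrand is even in `σ`, so folding loses nothing, and on the hemisphere `|ξ⁻| ≤ |ξ⁺|`. -/
def foldedKernel (b : ℝ → ℝ) : Measure E3 := (sphereKernel b).map foldToHemisphere

instance (b : ℝ → ℝ) : SFinite (sphereKernel b) := by unfold sphereKernel; infer_instance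

instance (b : ℝ → ℝ) : SFinite (foldedKernel b) := by unfold foldedKernel; infer_instance

variable {b : ℝ → ℝ}

lemma measurable_ofReal_kernel_coord (hb : Measurable b) :
    Measurable fun ω : E3 ↦ ENNReal.ofReal (b (ω 0)) :=
  ENNReal.measurable_ofReal.comp (hb.comp (by fun_prop))

lemma measurePreserving_sphereKernel (hb : Measurable b) {R : E3 ≃ₗᵢ[ℝ] E3} (hR : R pole = pole) :
    MeasurePreserving R (sphereKernel b) (sphereKernel b) := by
  have hRm : Measurable R := R.continuous.measurable
  refine ⟨hRm, ?_⟩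
  ext s hs
  rw [Measure.map_apply hRm hs, sphereKernel, withDensity_apply _ (hRm hs),
    withDensity_apply _ hs, ← (measurePreserving_ambientSphereMeasure R).setLIntegral_comp_preimage
      hs (measurable_ofReal_kernel_coord hb)]
  simp only [coord_zero_eq_of_map_pole hR]

lemma isAxialKernel_foldedKernel (hb : Measurable b) : IsAxialKernel (foldedKernel b) where
  ae_mem := by
    refine (ae_map_iff measurable_foldToHemisphere.aemeasurable measurableSet_upperHemisphere).2 ?_
    filter_upwards [(withDensity_absolutelyContinuous (ambientSphereMeasure E3) _).ae_le
      ae_norm_eq_one_ambientSphereMeasure] with ω hω using foldToHemisphere_mem hω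
  measurePreserving R hR := by
    have hRm : Measurable R := R.continuous.measurable
    refine ⟨hRm, ?_⟩
    have hcomm : R ∘ foldToHemisphere = foldToHemisphere ∘ R := funext (map_foldToHemisphere hR)
    rw [foldedKernel, Measure.map_map hRm measurable_foldToHemisphere, hcomm,
      ← Measure.map_map measurable_foldToHemisphere hRm,
      (measurePreserving_sphereKernel hb hR).map_eq]

end AxialKernel

section CollisionDefect

/-- The frequency `ξ⁺`, for a direction `σ` in the ambient space. -/
def freqPlus (ξ σ : E3) : E3 := (1 / 2 : ℝ) • ξ + (‖ξ‖ / 2) • σ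

/-- The frequency `ξ⁻`, for a direction `σ` in the ambient space. -/
def freqMinus (ξ σ : E3) : E3 := (1 / 2 : ℝ) • ξ - (‖ξ‖ / 2) • σ

lemma freqMinus_eq_sub (ξ σ : E3) : freqMinus ξ σ = ξ - freqPlus ξ σ := by
  unfold freqMinus freqPlus; module

lemma freqPlus_neg (ξ σ : E3) : freqPlus ξ (-σ) = freqMinus ξ σ := by
  unfold freqMinus freqPlus; module

lemma freqMinus_neg (ξ σ : E3) : freqMinus ξ (-σ) = freqPlus ξ σ := by
  rw [← freqPlus_neg, neg_neg]

@[simp] lemma freqPlus_zero (σ : E3) : freqPlus 0 σ = 0 := by simp [freqPlus]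

@[simp] lemma freqMinus_zero (σ : E3) : freqMinus 0 σ = 0 := by simp [freqMinus]

/-- The bracket `φ(ξ⁺)φ(ξ⁻) - φ(ξ)` of the Bobylev integrand. -/
def collisionDefect (φ : E3 → ℂ) (ξ σ : E3) : ℂ := φ (freqPlus ξ σ) * φ (freqMinus ξ σ) - φ ξ

lemma collisionDefect_neg (φ : E3 → ℂ) (ξ σ : E3) :
    collisionDefect φ ξ (-σ) = collisionDefect φ ξ σ := by
  simp only [collisionDefect, freqPlus_neg, freqMinus_neg, mul_comm]

lemma continuous_collisionDefect {φ : E3 → ℂ} (hφ : Continuous φ) (ξ : E3) :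
    Continuous (collisionDefect φ ξ) := by
  unfold collisionDefect freqPlus freqMinus; fun_prop

lemma collisionDefect_map_foldToHemisphere (φ : E3 → ℂ) (ξ : E3) (L : E3 ≃ₗᵢ[ℝ] E3) (ω : E3) :
    collisionDefect φ ξ (L (foldToHemisphere ω)) = collisionDefect φ ξ (L ω) := by
  unfold foldToHemisphere; split_ifs <;> simp [collisionDefect_neg]

/-- `L` is a frame at `ξ` if it takes the pole to the direction of `ξ`. Every isometry is a frame
at `0`. -/
def IsFrameAt (L : E3 ≃ₗᵢ[ℝ] E3) (ξ : E3) : Prop := ‖ξ‖ • L pole = ξ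

lemma isFrameAt_zero (L : E3 ≃ₗᵢ[ℝ] E3) : IsFrameAt L 0 := by simp [IsFrameAt]

lemma IsFrameAt.inner_div_norm {ξ : E3} {L : E3 ≃ₗᵢ[ℝ] E3} (hL : IsFrameAt L ξ) (hξ : ξ ≠ 0)
    (ω : E3) : ⟪ξ, L ω⟫ / ‖ξ‖ = ω 0 := by
  have hinner : ⟪ξ, L ω⟫ = ‖ξ‖ * ω 0 := by
    nth_rewrite 1 [← hL]
    rw [real_inner_smul_left, L.inner_map_map, inner_pole_left]
  rw [hinner, mul_div_cancel_left₀ _ (norm_ne_zero_iff.2 hξ)]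

lemma IsFrameAt.precomp {ξ : E3} {L R : E3 ≃ₗᵢ[ℝ] E3} (hL : IsFrameAt L ξ) (hR : R pole = pole) :
    IsFrameAt (R.trans L) ξ := by
  rwa [IsFrameAt, LinearIsometryEquiv.trans_apply, hR]

lemma IsFrameAt.postcomp {ξ : E3} {L : E3 ≃ₗᵢ[ℝ] E3} (hL : IsFrameAt L ξ) (R : E3 ≃ₗᵢ[ℝ] E3) :
    IsFrameAt (L.trans R) (R ξ) := by
  rw [IsFrameAt, LinearIsometryEquiv.trans_apply, R.norm_map, ← map_smul, hL]

lemma collisionDefect_zero_freq {φ : E3 → ℂ} (hφ : φ 0 = 1) (σ : E3) :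
    collisionDefect φ 0 σ = 0 := by
  simp [collisionDefect, hφ]

end CollisionDefect

section BobylevIntegrand

variable {b : ℝ → ℝ} {ψ : ℝ → E3 → ℂ} {t : ℝ}

lemma bobylevIntegrand_eq_smul (ξ : E3) (σ : sphere (0 : E3) 1) :
    bobylevIntegrand b ψ t ξ σ = b (⟪ξ, (σ : E3)⟫ / ‖ξ‖) • collisionDefect (ψ t) ξ σ :=
  rfl

lemma bobylevIntegrand_zero_freq (h : ψ t 0 = 1) (σ : sphere (0 : E3) 1) :
    bobylevIntegrand b ψ t 0 σ = 0 := by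
  rw [bobylevIntegrand_eq_smul, collisionDefect_zero_freq h, smul_zero]

variable {ξ : E3} {L : E3 ≃ₗᵢ[ℝ] E3} (hb : Measurable b) (hb_nonneg : ∀ x, 0 ≤ b x)
  (hψ : Continuous (ψ t)) (hξ : ξ ≠ 0) (hL : IsFrameAt L ξ)

include hξ hL in
lemma kernel_smul_collisionDefect_frame (hb_nonneg : ∀ x, 0 ≤ b x) (φ : E3 → ℂ) (ω : E3) :
    (ENNReal.ofReal (b (ω 0))).toReal • collisionDefect φ ξ (L ω) =
      b (⟪ξ, L ω⟫ / ‖ξ‖) • collisionDefect φ ξ (L ω) := by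
  rw [hL.inner_div_norm hξ, ENNReal.toReal_ofReal (hb_nonneg _)]

include hb hb_nonneg hψ hξ hL

lemma integral_bobylevIntegrand :
    ∫ σ, bobylevIntegrand b ψ t ξ σ ∂sphμ =
      ∫ ω, collisionDefect (ψ t) ξ (L ω) ∂(foldedKernel b) := by
  have hcont : StronglyMeasurable fun ω ↦ collisionDefect (ψ t) ξ (L ω) :=
    ((continuous_collisionDefect hψ ξ).comp L.continuous).stronglyMeasurable
  calc ∫ σ, bobylevIntegrand b ψ t ξ σ ∂sphμ
      = ∫ σ, b (⟪ξ, σ⟫ / ‖ξ‖) • collisionDefect (ψ t) ξ σ ∂(ambientSphereMeasure E3) :=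
        (integral_ambientSphereMeasure fun σ ↦ b (⟪ξ, σ⟫ / ‖ξ‖) • collisionDefect (ψ t) ξ σ).symm
    _ = ∫ ω, b (⟪ξ, L ω⟫ / ‖ξ‖) • collisionDefect (ψ t) ξ (L ω) ∂(ambientSphereMeasure E3) :=
        ((measurePreserving_ambientSphereMeasure L).integral_comp
          L.toHomeomorph.measurableEmbedding _).symm
    _ = ∫ ω, collisionDefect (ψ t) ξ (L ω) ∂(sphereKernel b) := by
        rw [sphereKernel, integral_withDensity_eq_integral_toReal_smul
          (measurable_ofReal_kernel_coord hb) (ae_of_all _ fun _ ↦ ENNReal.ofReal_lt_top)]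
        simp only [kernel_smul_collisionDefect_frame hξ hL hb_nonneg]
    _ = ∫ ω, collisionDefect (ψ t) ξ (L ω) ∂(foldedKernel b) := by
        rw [foldedKernel, integral_map measurable_foldToHemisphere.aemeasurable
          hcont.aestronglyMeasurable]
        simp only [collisionDefect_map_foldToHemisphere]

lemma integrable_bobylevIntegrand_iff :
    Integrable (bobylevIntegrand b ψ t ξ) sphμ ↔
      Integrable (fun ω ↦ collisionDefect (ψ t) ξ (L ω)) (foldedKernel b) := by
  have hcont : StronglyMeasurable fun ω ↦ collisionDefect (ψ t) ξ (L ω) :=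
    ((continuous_collisionDefect hψ ξ).comp L.continuous).stronglyMeasurable
  calc Integrable (bobylevIntegrand b ψ t ξ) sphμ
      ↔ Integrable (fun σ ↦ b (⟪ξ, σ⟫ / ‖ξ‖) • collisionDefect (ψ t) ξ σ)
          (ambientSphereMeasure E3) :=
        (integrable_ambientSphereMeasure_iff fun σ ↦
          b (⟪ξ, σ⟫ / ‖ξ‖) • collisionDefect (ψ t) ξ σ).symm
    _ ↔ Integrable (fun ω ↦ b (⟪ξ, L ω⟫ / ‖ξ‖) • collisionDefect (ψ t) ξ (L ω))
          (ambientSphereMeasure E3) :=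
        ((measurePreserving_ambientSphereMeasure L).integrable_comp_emb
          L.toHomeomorph.measurableEmbedding).symm
    _ ↔ Integrable (fun ω ↦ collisionDefect (ψ t) ξ (L ω)) (sphereKernel b) := by
        rw [sphereKernel, integrable_withDensity_iff_integrable_smul'
          (measurable_ofReal_kernel_coord hb) (ae_of_all _ fun _ ↦ ENNReal.ofReal_lt_top)]
        simp only [kernel_smul_collisionDefect_frame hξ hL hb_nonneg]
    _ ↔ Integrable (fun ω ↦ collisionDefect (ψ t) ξ (L ω)) (foldedKernel b) := by
        rw [foldedKernel, integrable_map_measure hcont.aestronglyMeasurable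
          measurable_foldToHemisphere.aemeasurable]
        simp only [Function.comp_def, collisionDefect_map_foldToHemisphere]

end BobylevIntegrand

section Frames

/-- The half-turn about the bisector of the pole and `e`; it takes the pole to the unit
vector `e`. -/
def halfTurn (e : E3) : E3 ≃ₗᵢ[ℝ] E3 := (ℝ ∙ (pole + e)).reflection

lemma halfTurn_apply (e ω : E3) :
    halfTurn e ω = 2 • (⟪pole + e, ω⟫ / ‖pole + e‖ ^ 2) • (pole + e) - ω :=
  Submodule.reflection_singleton_apply (𝕜 := ℝ) _ _

lemma halfTurn_pole {e : E3} (he : ‖e‖ = 1) : halfTurn e pole = e := by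
  have h := Submodule.reflection_sub (v := pole) (w := -e) (by simp [he])
  rw [sub_neg_eq_add, Submodule.reflection_orthogonal_apply, neg_inj] at h
  exact h

lemma isFrameAt_of_map_pole {L : E3 ≃ₗᵢ[ℝ] E3} {ξ : E3} (h : L pole = ‖ξ‖⁻¹ • ξ) :
    IsFrameAt L ξ := by
  rcases eq_or_ne ξ 0 with rfl | hξ
  · exact isFrameAt_zero L
  · rw [IsFrameAt, h, smul_inv_smul₀ (norm_ne_zero_iff.2 hξ)]

lemma IsFrameAt.map_pole {L : E3 ≃ₗᵢ[ℝ] E3} {ξ : E3} (hL : IsFrameAt L ξ) (hξ : ξ ≠ 0) :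
    L pole = ‖ξ‖⁻¹ • ξ := by
  conv_rhs => rw [← hL]
  rw [norm_smul, norm_norm, L.norm_map, norm_pole, mul_one,
    inv_smul_smul₀ (norm_ne_zero_iff.2 hξ)]

/-- A frame at `ξ` depending measurably on `ξ`. -/
def frame (ξ : E3) : E3 ≃ₗᵢ[ℝ] E3 := halfTurn (‖ξ‖⁻¹ • ξ)

lemma isFrameAt_frame (ξ : E3) : IsFrameAt (frame ξ) ξ := by
  rcases eq_or_ne ξ 0 with rfl | hξ
  · exact isFrameAt_zero _
  · exact isFrameAt_of_map_pole (halfTurn_pole (norm_smul_inv_norm hξ))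

lemma measurable_frame : Measurable fun p : E3 × E3 ↦ frame p.1 p.2 := by
  simp only [frame, halfTurn_apply]
  fun_prop

lemma continuousAt_halfTurn_pole (ω : E3) : ContinuousAt (fun e ↦ halfTurn e ω) pole := by
  have hne : ‖pole + pole‖ ^ 2 ≠ 0 := by
    simpa [← two_smul ℝ pole] using pole_ne_zero
  simp only [halfTurn_apply]
  fun_prop (disch := exact hne)

/-- By topology there is no continuous choice of frames on the whole sphere, so the family is only
required to be continuous at one point. -/
lemma exists_frames_continuousAt (ξ₀ : E3) : ∃ L : E3 → E3 ≃ₗᵢ[ℝ] E3, (∀ ξ, IsFrameAt (L ξ) ξ) ∧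
    ∀ ω, ContinuousAt (fun ξ ↦ ‖ξ‖ • L ξ ω) ξ₀ := by
  rcases eq_or_ne ξ₀ 0 with rfl | hξ₀
  · refine ⟨frame, isFrameAt_frame, fun ω ↦ ?_⟩
    rw [ContinuousAt, norm_zero, zero_smul]
    refine squeeze_zero_norm (a := fun ξ : E3 ↦ ‖ξ‖ * ‖ω‖) (fun ξ ↦ ?_) ?_
    · rw [norm_smul, norm_norm, LinearIsometryEquiv.norm_map]
    · exact Continuous.tendsto' (by fun_prop) _ _ (by simp)
  · let L₀ := frame ξ₀
    have hn₀ : ‖ξ₀‖ ≠ 0 := norm_ne_zero_iff.2 hξ₀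
    have hL₀ : L₀.symm (‖ξ₀‖⁻¹ • ξ₀) = pole := by
      rw [← (isFrameAt_frame ξ₀).map_pole hξ₀, L₀.symm_apply_apply]
    refine ⟨fun ξ ↦ (halfTurn (L₀.symm (‖ξ‖⁻¹ • ξ))).trans L₀, fun ξ ↦ ?_, fun ω ↦ ?_⟩
    · rcases eq_or_ne ξ 0 with rfl | hξ
      · exact isFrameAt_zero _
      · refine isFrameAt_of_map_pole ?_
        rw [LinearIsometryEquiv.trans_apply, halfTurn_pole, L₀.apply_symm_apply]
        rw [L₀.symm.norm_map]
        exact norm_smul_inv_norm hξ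
    · have hdir : ContinuousAt (fun ξ : E3 ↦ L₀.symm (‖ξ‖⁻¹ • ξ)) ξ₀ :=
        L₀.symm.continuous.continuousAt.comp
          ((continuous_norm.continuousAt.inv₀ hn₀).smul continuousAt_id)
      have hturn : ContinuousAt (fun ξ ↦ halfTurn (L₀.symm (‖ξ‖⁻¹ • ξ)) ω) ξ₀ :=
        ContinuousAt.comp (g := fun e ↦ halfTurn e ω)
          (hL₀.symm ▸ continuousAt_halfTurn_pole ω) hdir
      exact continuous_norm.continuousAt.smul (L₀.continuous.continuousAt.comp hturn)

end Frames

section AxialRotation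

/-- The rotation by the angle `φ` about the pole. -/
def axialRotation (φ : ℝ) : E3 ≃ₗᵢ[ℝ] E3 :=
  LinearIsometry.toLinearIsometryEquiv
    { toFun := fun x ↦ !₂[x 0, cos φ * x 1 - sin φ * x 2, sin φ * x 1 + cos φ * x 2]
      map_add' := fun x y ↦ by ext i; fin_cases i <;> simp <;> ring
      map_smul' := fun a x ↦ by ext i; fin_cases i <;> simp <;> ring
      norm_map' := fun x ↦ by
        simp only [EuclideanSpace.norm_eq, Fin.sum_univ_three, Real.norm_eq_abs, sq_abs,
          LinearMap.coe_mk, AddHom.coe_mk]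
        congr 1
        simp only [Matrix.cons_val]
        linear_combination (x 1 ^ 2 + x 2 ^ 2) * sin_sq_add_cos_sq φ } rfl

lemma axialRotation_apply (φ : ℝ) (x : E3) :
    axialRotation φ x = !₂[x 0, cos φ * x 1 - sin φ * x 2, sin φ * x 1 + cos φ * x 2] :=
  rfl

@[simp] lemma axialRotation_coord_zero (φ : ℝ) (x : E3) : axialRotation φ x 0 = x 0 := rfl

@[simp] lemma axialRotation_pole (φ : ℝ) : axialRotation φ pole = pole := by
  ext i; fin_cases i <;> simp [axialRotation_apply]

lemma axialRotation_zero_angle (x : E3) : axialRotation 0 x = x := by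
  ext i; fin_cases i <;> simp [axialRotation_apply]

lemma axialRotation_pi (x : E3) : axialRotation π x = (2 * x 0) • pole - x := by
  ext i; fin_cases i <;> simp [axialRotation_apply]; ring

lemma continuous_axialRotation : Continuous fun p : ℝ × E3 ↦ axialRotation p.1 p.2 := by
  simp only [axialRotation_apply]
  refine (PiLp.continuous_toLp 2 _).comp (continuous_pi fun i ↦ ?_)
  fin_cases i <;> simp only [Fin.reduceFinMk, Matrix.cons_val] <;> fun_prop

lemma axialRotation_mem_upperHemisphere {ω : E3} (hω : ω ∈ upperHemisphere) (φ : ℝ) :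
    axialRotation φ ω ∈ upperHemisphere :=
  ⟨by rw [LinearIsometryEquiv.norm_map, hω.1], by rw [axialRotation_coord_zero]; exact hω.2⟩

end AxialRotation

section CollisionGeometry

/-- `sin²(θ/2)` for a direction `ω` at angle `θ` from the pole. -/
def halfAngleSinSq (ω : E3) : ℝ := (1 - ω 0) / 2

@[fun_prop]
lemma continuous_halfAngleSinSq : Continuous halfAngleSinSq := by
  unfold halfAngleSinSq; fun_prop

lemma halfAngleSinSq_nonneg {ω : E3} (hω : ω ∈ upperHemisphere) : 0 ≤ halfAngleSinSq ω := by
  have h := abs_real_inner_le_norm pole ω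
  rw [inner_pole_left, norm_pole, hω.1, one_mul] at h
  unfold halfAngleSinSq
  linarith [le_abs_self (ω 0)]

lemma halfAngleSinSq_le_half {ω : E3} (hω : ω ∈ upperHemisphere) : halfAngleSinSq ω ≤ 1 / 2 := by
  unfold halfAngleSinSq
  linarith [hω.2]

@[simp] lemma halfAngleSinSq_axialRotation (φ : ℝ) (ω : E3) :
    halfAngleSinSq (axialRotation φ ω) = halfAngleSinSq ω := by
  simp [halfAngleSinSq]

/-- The component of `ξ⁺` orthogonal to `ξ`, for the direction `σ = L ω` in a frame `L` at `ξ`. -/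
def transversal (ξ : E3) (L : E3 ≃ₗᵢ[ℝ] E3) (ω : E3) : E3 := (‖ξ‖ / 2) • L (ω - ω 0 • pole)

lemma transversal_axialRotation_pi (ξ : E3) (L : E3 ≃ₗᵢ[ℝ] E3) (ω : E3) :
    transversal ξ L (axialRotation π ω) = -transversal ξ L ω := by
  rw [transversal, transversal, axialRotation_coord_zero, axialRotation_pi, ← smul_neg, ← map_neg]
  congr 2; module

lemma norm_transversal_sq (ξ : E3) (L : E3 ≃ₗᵢ[ℝ] E3) {ω : E3} (hω : ‖ω‖ = 1) :
    ‖transversal ξ L ω‖ ^ 2 = halfAngleSinSq ω * (1 - halfAngleSinSq ω) * ‖ξ‖ ^ 2 := by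
  rw [transversal, halfAngleSinSq, norm_smul, mul_pow, L.norm_map, @norm_sub_sq_real, norm_smul,
    norm_pole, hω, inner_smul_right, inner_pole_right, Real.norm_eq_abs, Real.norm_eq_abs, sq_abs,
    mul_pow, sq_abs]
  ring

lemma norm_transversal_sq_le (ξ : E3) (L : E3 ≃ₗᵢ[ℝ] E3) {ω : E3} (hω : ω ∈ upperHemisphere) :
    ‖transversal ξ L ω‖ ^ 2 ≤ halfAngleSinSq ω * ‖ξ‖ ^ 2 := by
  rw [norm_transversal_sq ξ L hω.1]
  have hs := halfAngleSinSq_nonneg hω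
  gcongr
  nlinarith

namespace IsFrameAt

variable {ξ : E3} {L : E3 ≃ₗᵢ[ℝ] E3} (hL : IsFrameAt L ξ)
include hL

lemma freqPlus_eq (ω : E3) :
    freqPlus ξ (L ω) = (1 - halfAngleSinSq ω) • ξ + transversal ξ L ω := by
  have haxis : (‖ξ‖ / 2 * ω 0) • L pole = (ω 0 / 2) • ξ := by
    nth_rewrite 2 [← hL]
    module
  rw [freqPlus, transversal, halfAngleSinSq, map_sub, map_smul, smul_sub, smul_smul, haxis]
  module

lemma freqMinus_eq (ω : E3) :
    freqMinus ξ (L ω) = halfAngleSinSq ω • ξ - transversal ξ L ω := by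
  rw [freqMinus_eq_sub, hL.freqPlus_eq]; module

lemma freqPlus_axialRotation_pi (ω : E3) :
    freqPlus ξ (L (axialRotation π ω)) = (1 - halfAngleSinSq ω) • ξ - transversal ξ L ω := by
  rw [hL.freqPlus_eq, transversal_axialRotation_pi, halfAngleSinSq_axialRotation, ← sub_eq_add_neg]

lemma freqMinus_axialRotation_pi (ω : E3) :
    freqMinus ξ (L (axialRotation π ω)) = halfAngleSinSq ω • ξ + transversal ξ L ω := by
  rw [hL.freqMinus_eq, transversal_axialRotation_pi, halfAngleSinSq_axialRotation, sub_neg_eq_add]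

lemma inner_transversal (ω : E3) : ⟪ξ, transversal ξ L ω⟫ = 0 := by
  nth_rewrite 1 [← hL]
  rw [transversal, inner_smul_right, real_inner_smul_left, L.inner_map_map, inner_sub_right,
    inner_pole_left, inner_smul_right, inner_pole_left, pole_zero]
  ring

variable {ω : E3} (hω : ω ∈ upperHemisphere)
include hω

lemma norm_freqPlus_sq : ‖freqPlus ξ (L ω)‖ ^ 2 = (1 - halfAngleSinSq ω) * ‖ξ‖ ^ 2 := by
  rw [hL.freqPlus_eq, @norm_add_sq_real, real_inner_smul_left, hL.inner_transversal, norm_smul,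
    mul_pow, norm_transversal_sq ξ L hω.1, Real.norm_eq_abs, sq_abs]
  ring

lemma norm_freqMinus_sq : ‖freqMinus ξ (L ω)‖ ^ 2 = halfAngleSinSq ω * ‖ξ‖ ^ 2 := by
  rw [hL.freqMinus_eq, @norm_sub_sq_real, real_inner_smul_left, hL.inner_transversal, norm_smul,
    mul_pow, norm_transversal_sq ξ L hω.1, Real.norm_eq_abs, sq_abs]
  ring

lemma norm_freqPlus_le : ‖freqPlus ξ (L ω)‖ ≤ ‖ξ‖ := by
  refine le_of_sq_le_sq ?_ (norm_nonneg _)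
  rw [hL.norm_freqPlus_sq hω]
  exact mul_le_of_le_one_left (sq_nonneg _) (by linarith [halfAngleSinSq_nonneg hω])

lemma norm_freqMinus_le : ‖freqMinus ξ (L ω)‖ ≤ ‖ξ‖ := by
  refine le_of_sq_le_sq ?_ (norm_nonneg _)
  rw [hL.norm_freqMinus_sq hω]
  exact mul_le_of_le_one_left (sq_nonneg _) (by linarith [halfAngleSinSq_le_half hω])

end IsFrameAt

end CollisionGeometry

section Wave

/-- The unimodular exponential `e^{-ix}` of which characteristic functions are averages. -/
def wave (x : ℝ) : ℂ := Complex.exp (-(Complex.I * x))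

lemma wave_eq_exp_mul_I (x : ℝ) : wave x = Complex.exp ((-x : ℝ) * Complex.I) := by
  rw [wave, Complex.ofReal_neg, neg_mul, mul_comm]

@[simp] lemma norm_wave (x : ℝ) : ‖wave x‖ = 1 := by
  rw [wave_eq_exp_mul_I, Complex.norm_exp_ofReal_mul_I]

@[simp] lemma wave_zero : wave 0 = 1 := by simp [wave]

lemma wave_add (x y : ℝ) : wave (x + y) = wave x * wave y := by
  rw [wave, wave, wave, ← Complex.exp_add]
  push_cast
  ring_nf

@[fun_prop]
lemma continuous_wave : Continuous wave := by
  unfold wave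
  fun_prop

lemma wave_add_wave_neg (x : ℝ) : wave x + wave (-x) = 2 * (cos x : ℝ) := by
  rw [wave_eq_exp_mul_I, wave_eq_exp_mul_I, neg_neg, Complex.ofReal_cos, Complex.cos]
  push_cast
  ring

lemma norm_one_sub_wave_le_abs (x : ℝ) : ‖1 - wave x‖ ≤ |x| := by
  rw [norm_sub_rev, wave_eq_exp_mul_I, mul_comm]
  simpa using Real.norm_exp_I_mul_ofReal_sub_one_le (x := -x)

lemma norm_one_sub_wave_le_two (x : ℝ) : ‖1 - wave x‖ ≤ 2 :=
  (norm_sub_le _ _).trans_eq (by norm_num)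

lemma integrable_wave {X : Type*} [MeasurableSpace X] {μ : Measure X} [IsFiniteMeasure μ]
    {f : X → ℝ} (hf : AEMeasurable f μ) : Integrable (fun x ↦ wave (f x)) μ :=
  .of_bound (by fun_prop) 1 (.of_forall fun x ↦ (norm_wave _).le)

end Wave

section CharFn

variable (Ψ : Measure E3)

lemma charFn_eq_integral_wave (ξ : E3) : charFn Ψ ξ = ∫ v, wave ⟪v, ξ⟫ ∂Ψ := rfl

lemma charFn_eq_charFun_neg (ξ : E3) : charFn Ψ ξ = charFun Ψ (-ξ) := by
  simp [charFn, charFun_apply, mul_comm]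

lemma charFn_neg (ξ : E3) : charFn Ψ (-ξ) = (starRingEnd ℂ) (charFn Ψ ξ) := by
  rw [charFn_eq_charFun_neg, charFn_eq_charFun_neg, charFun_neg]

variable [IsProbabilityMeasure Ψ]

lemma norm_charFn_le_one (ξ : E3) : ‖charFn Ψ ξ‖ ≤ 1 :=
  charFn_eq_charFun_neg Ψ ξ ▸ norm_charFun_le_one _

@[simp] lemma charFn_zero : charFn Ψ 0 = 1 := by
  simp [charFn_eq_charFun_neg]

@[fun_prop]
lemma continuous_charFn : Continuous (charFn Ψ) := by
  rw [funext (charFn_eq_charFun_neg Ψ)]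
  exact continuous_charFun.comp continuous_neg

/-- Symmetrizing over the two independent velocities makes only their difference enter the
nontrivial factor. -/
lemma charFn_mul_charFn (u w : E3) :
    charFn Ψ u * charFn Ψ w = ∫ p : E3 × E3, wave ⟪p.2, u + w⟫ *
      ((wave ⟪p.1 - p.2, u⟫ + wave ⟪p.1 - p.2, w⟫) / 2) ∂(Ψ.prod Ψ) := by
  have h_mul (u w : E3) :
      charFn Ψ u * charFn Ψ w = ∫ p : E3 × E3, wave (⟪p.1, u⟫ + ⟪p.2, w⟫) ∂(Ψ.prod Ψ) := by
    simp only [charFn_eq_integral_wave, wave_add, ← integral_prod_mul]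
  have h_split (p : E3 × E3) : wave ⟪p.2, u + w⟫ *
      ((wave ⟪p.1 - p.2, u⟫ + wave ⟪p.1 - p.2, w⟫) / 2) =
      (wave (⟪p.1, u⟫ + ⟪p.2, w⟫) + wave (⟪p.1, w⟫ + ⟪p.2, u⟫)) / 2 := by
    rw [mul_div_assoc', mul_add, ← wave_add, ← wave_add]
    simp only [inner_add_right, inner_sub_left]
    ring_nf
  simp only [h_split]
  rw [integral_div, integral_add (integrable_wave (by fun_prop)) (integrable_wave (by fun_prop)),
    ← h_mul, ← h_mul]
  ring

end CharFn

section Deficits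

variable {E : Type*} [NormedAddCommGroup E] [MeasurableSpace E] [BorelSpace E]
  [SecondCountableTopology E]

/-- The law of the difference of two independent copies of a random vector with law `Ψ`. -/
def symmetrization (Ψ : Measure E) : Measure E := (Ψ.prod Ψ).map fun p ↦ p.1 - p.2

instance (Ψ : Measure E) [IsProbabilityMeasure Ψ] : IsProbabilityMeasure (symmetrization Ψ) :=
  Measure.isProbabilityMeasure_map (by fun_prop)

lemma one_sub_exp_neg_mem_Icc {y : ℝ} (hy : 0 ≤ y) : 1 - exp (-y) ∈ Icc (0 : ℝ) 1 :=
  ⟨sub_nonneg.2 (exp_le_one_iff.2 (neg_nonpos.2 hy)), sub_le_self _ (exp_nonneg _)⟩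

lemma min_one_le_two_mul_one_sub_exp_neg {y : ℝ} (hy : 0 ≤ y) : min 1 y ≤ 2 * (1 - exp (-y)) := by
  have h_exp : exp (-y) ≤ 1 / (1 + y) := by
    rw [exp_neg, one_div]
    exact inv_anti₀ (by linarith) (by linarith [add_one_le_exp y])
  have h_frac : min 1 y ≤ 2 * (1 - 1 / (1 + y)) := by
    rw [one_sub_div (by linarith), add_sub_cancel_left, mul_div_assoc', le_div_iff₀ (by linarith)]
    rcases min_cases 1 y with ⟨h, h'⟩ | ⟨h, h'⟩ <;> rw [h] <;> nlinarith
  linarith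

section Gaussian

/-- `∫ (1 - e^{-S|V|²}) dΘ(V)`, the Gaussian mean of `cosDeficit Θ` at scale `√S`. -/
def gaussianDeficit (Θ : Measure E) (S : ℝ) : ℝ := ∫ V, (1 - exp (-(S * ‖V‖ ^ 2))) ∂Θ

variable (Θ : Measure E) {S : ℝ} (hS : 0 ≤ S)
include hS

lemma integrable_gaussianDeficit [IsFiniteMeasure Θ] :
    Integrable (fun V ↦ 1 - exp (-(S * ‖V‖ ^ 2))) Θ := by
  refine .of_bound (by fun_prop) 1 (.of_forall fun V ↦ ?_)
  have h := one_sub_exp_neg_mem_Icc (mul_nonneg hS (sq_nonneg ‖V‖))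
  rw [Real.norm_of_nonneg h.1]
  exact h.2

omit [BorelSpace E] [SecondCountableTopology E] in
lemma gaussianDeficit_nonneg : 0 ≤ gaussianDeficit Θ S :=
  integral_nonneg fun V ↦ (one_sub_exp_neg_mem_Icc (mul_nonneg hS (sq_nonneg ‖V‖))).1

lemma gaussianDeficit_le_one [IsProbabilityMeasure Θ] : gaussianDeficit Θ S ≤ 1 := by
  simpa [gaussianDeficit] using integral_mono (integrable_gaussianDeficit Θ hS)
    (integrable_const (1 : ℝ)) fun V ↦ (one_sub_exp_neg_mem_Icc (mul_nonneg hS (sq_nonneg ‖V‖))).2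

end Gaussian

variable [InnerProductSpace ℝ E]

/-- `∫ (1 - cos⟨V, ξ⟩) dΘ(V)`; for `Θ = symmetrization Ψ` this is `1 - |ψ(ξ)|²`, where `ψ` is the
characteristic function of `Ψ`. -/
def cosDeficit (Θ : Measure E) (ξ : E) : ℝ := ∫ V, (1 - cos ⟪V, ξ⟫) ∂Θ

lemma integrable_cosDeficit (Θ : Measure E) [IsFiniteMeasure Θ] (ξ : E) :
    Integrable (fun V ↦ 1 - cos ⟪V, ξ⟫) Θ :=
  (integrable_const 1).sub
    (.of_bound (by fun_prop) 1 (.of_forall fun V ↦ abs_cos_le_one _))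

omit [BorelSpace E] [SecondCountableTopology E] in
lemma cosDeficit_nonneg (Θ : Measure E) (ξ : E) : 0 ≤ cosDeficit Θ ξ :=
  integral_nonneg fun _ ↦ sub_nonneg.2 (cos_le_one _)

lemma one_sub_cos_sub_le (a b : ℝ) : 1 - cos (a - b) ≤ 2 * (1 - cos a) + 2 * (1 - cos b) := by
  rw [cos_sub]
  nlinarith [sq_nonneg (sin a + sin b), sq_nonneg (cos a + cos b - 2), cos_sq_add_sin_sq a,
    cos_sq_add_sin_sq b]

lemma cosDeficit_sub_le (Θ : Measure E) [IsFiniteMeasure Θ] (u w : E) :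
    cosDeficit Θ (u - w) ≤ 2 * cosDeficit Θ u + 2 * cosDeficit Θ w := by
  have hu := (integrable_cosDeficit Θ u).const_mul 2
  have hw := (integrable_cosDeficit Θ w).const_mul 2
  unfold cosDeficit
  rw [← integral_const_mul, ← integral_const_mul, ← integral_add hu hw]
  refine integral_mono (integrable_cosDeficit Θ _) (hu.add hw) fun V ↦ ?_
  simpa only [inner_sub_right] using one_sub_cos_sub_le _ _

end Deficits

lemma norm_charFn_sq (Ψ : Measure E3) [IsProbabilityMeasure Ψ] (ξ : E3) :
    ‖charFn Ψ ξ‖ ^ 2 = 1 - cosDeficit (symmetrization Ψ) ξ := by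
  have h_cos : cosDeficit (symmetrization Ψ) ξ =
      ∫ p : E3 × E3, (1 - cos ⟪p.1 - p.2, ξ⟫) ∂(Ψ.prod Ψ) :=
    integral_map (by fun_prop) (by fun_prop)
  have h_sq : ((‖charFn Ψ ξ‖ ^ 2 : ℝ) : ℂ) =
      (∫ p : E3 × E3, cos ⟪p.1 - p.2, ξ⟫ ∂(Ψ.prod Ψ) : ℝ) := by
    push_cast
    rw [← Complex.mul_conj', ← charFn_neg, charFn_mul_charFn, ← integral_complex_ofReal]
    refine integral_congr_ae (.of_forall fun p ↦ ?_)
    simp [inner_neg_right, wave_add_wave_neg]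
  rw [Complex.ofReal_inj.1 h_sq, h_cos, integral_sub (integrable_const _)
    (.of_bound (by fun_prop) 1 (.of_forall fun V ↦ abs_cos_le_one _))]
  simp

section SymmetrizedBounds

/-- Here `n = |V|` and `r = |ξ|`; `z` stands for a first-order difference across `sξ`, and `Y` for
the phase of the transversal part. -/
lemma one_sub_cos_add_le {n r s x Y z : ℝ} (hs : 0 ≤ s) (hY : Y ^ 2 ≤ s * r ^ 2 * n ^ 2)
    (hx : |x| ≤ s * r * n) (hz : z ≤ |x|) (hz2 : z ≤ 2) :
    (1 - cos Y) + z ≤ 8 * (1 + r ^ 2) * (s + (1 - exp (-(s * n ^ 2)))) := by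
  have hy : 0 ≤ s * n ^ 2 := by positivity
  have h_min := min_one_le_two_mul_one_sub_exp_neg hy
  set p := 1 - exp (-(s * n ^ 2))
  have hp : 0 ≤ p := (one_sub_exp_neg_mem_Icc hy).1
  have h_cos : 1 - cos Y ≤ (4 + r ^ 2) * p := by
    rcases min_cases 1 (s * n ^ 2) with ⟨h, -⟩ | ⟨h, -⟩ <;> rw [h] at h_min <;>
      nlinarith [sq_nonneg r, neg_one_le_cos Y, one_sub_sq_div_two_le_cos (x := Y)]
  have h_lin : z ≤ s * r ^ 2 + 4 * p := by
    rcases min_cases 1 (s * n ^ 2) with ⟨h, -⟩ | ⟨h, -⟩ <;> rw [h] at h_min <;>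
      nlinarith [mul_nonneg hs (sq_nonneg r), mul_nonneg hs (sq_nonneg (r - n))]
  nlinarith [mul_nonneg hs (sq_nonneg r), mul_nonneg hp (sq_nonneg r)]

lemma abs_inner_smul_le {E : Type*} [NormedAddCommGroup E] [InnerProductSpace ℝ E] (V ξ : E)
    {s : ℝ} (hs : 0 ≤ s) : |s * ⟪V, ξ⟫| ≤ s * ‖ξ‖ * ‖V‖ := by
  rw [abs_mul, abs_of_nonneg hs, mul_assoc, mul_comm ‖ξ‖]
  exact mul_le_mul_of_nonneg_left (abs_real_inner_le_norm _ _) hs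

lemma sq_inner_le {E : Type*} [NormedAddCommGroup E] [InnerProductSpace ℝ E] (V : E) {ξ η : E}
    {s : ℝ} (hη : ‖η‖ ^ 2 ≤ s * ‖ξ‖ ^ 2) : ⟪V, η⟫ ^ 2 ≤ s * ‖ξ‖ ^ 2 * ‖V‖ ^ 2 := by
  have h := real_inner_mul_inner_self_le V η
  rw [real_inner_self_eq_norm_sq, real_inner_self_eq_norm_sq] at h
  nlinarith [sq_nonneg ‖V‖]

lemma norm_symmetrized_wave_le {n r s X x Y : ℝ} (hs : 0 ≤ s) (hY : Y ^ 2 ≤ s * r ^ 2 * n ^ 2)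
    (hx : |x| ≤ s * r * n) :
    ‖(wave (X + Y) + wave (x - Y)) / 2 + (wave (X - Y) + wave (x + Y)) / 2
        - 2 * ((wave (X + x) + 1) / 2)‖ ≤
      16 * (1 + r ^ 2) * (s + (1 - exp (-(s * n ^ 2)))) := by
  have h_factor : (wave (X + Y) + wave (x - Y)) / 2 + (wave (X - Y) + wave (x + Y)) / 2
      - 2 * ((wave (X + x) + 1) / 2) =
      -((wave X + wave x) * (1 - cos Y : ℝ)) - (1 - wave X) * (1 - wave x) := by
    have h := wave_add_wave_neg Y
    simp only [sub_eq_add_neg, wave_add, Complex.ofReal_add, Complex.ofReal_neg,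
      Complex.ofReal_one]
    linear_combination (wave X + wave x) / 2 * h
  have h_cos : ‖(wave X + wave x) * (1 - cos Y : ℝ)‖ ≤ 2 * (1 - cos Y) := by
    have h0 : 0 ≤ 1 - cos Y := sub_nonneg.2 (cos_le_one Y)
    rw [norm_mul, Complex.norm_real, Real.norm_of_nonneg h0]
    gcongr
    exact (norm_add_le _ _).trans_eq (by norm_num)
  have h_lin : ‖(1 - wave X) * (1 - wave x)‖ ≤ 2 * ‖1 - wave x‖ := by
    rw [norm_mul]
    gcongr
    exact norm_one_sub_wave_le_two X
  have h_sum := one_sub_cos_add_le (z := ‖1 - wave x‖) hs hY hx (norm_one_sub_wave_le_abs x)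
    (norm_one_sub_wave_le_two x)
  rw [h_factor]
  refine (norm_sub_le _ _).trans ?_
  rw [norm_neg]
  linarith

lemma abs_symmetrized_cos_le {n r s X x Y : ℝ} (hs : 0 ≤ s) (hY : Y ^ 2 ≤ s * r ^ 2 * n ^ 2)
    (hx : |x| ≤ s * r * n) :
    |(1 - cos (X + Y)) + (1 - cos (X - Y)) - 2 * (1 - cos (X + x))| ≤
      16 * (1 + r ^ 2) * (s + (1 - exp (-(s * n ^ 2)))) := by
  have h_factor : (1 - cos (X + Y)) + (1 - cos (X - Y)) - 2 * (1 - cos (X + x)) =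
      2 * (cos X * (1 - cos Y)) + 2 * (cos (X + x) - cos X) := by
    rw [cos_add X Y, cos_sub X Y]
    ring
  have h_cos : |cos X * (1 - cos Y)| ≤ 1 - cos Y := by
    rw [abs_mul, abs_of_nonneg (sub_nonneg.2 (cos_le_one Y))]
    exact mul_le_of_le_one_left (sub_nonneg.2 (cos_le_one Y)) (abs_cos_le_one X)
  have h_sum := one_sub_cos_add_le (z := |cos (X + x) - cos X|) hs hY hx
    ((abs_cos_sub_cos_le _ _).trans_eq (by rw [add_sub_cancel_left]))
    ((abs_sub _ _).trans (by linarith [abs_cos_le_one (X + x), abs_cos_le_one X]))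
  rw [h_factor, ← mul_add, abs_mul, abs_two]
  linarith [abs_add_le (cos X * (1 - cos Y)) (cos (X + x) - cos X)]

variable {ξ η : E3} {s : ℝ} (hs : 0 ≤ s) (hη : ‖η‖ ^ 2 ≤ s * ‖ξ‖ ^ 2)
include hs hη

lemma norm_symmetrized_charFn_le (Ψ : Measure E3) [IsProbabilityMeasure Ψ] :
    ‖charFn Ψ ((1 - s) • ξ + η) * charFn Ψ (s • ξ - η)
      + charFn Ψ ((1 - s) • ξ - η) * charFn Ψ (s • ξ + η) - 2 * charFn Ψ ξ‖ ≤
      16 * (1 + ‖ξ‖ ^ 2) * (s + gaussianDeficit (symmetrization Ψ) s) := by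
  have h_sub : AEMeasurable (fun p : E3 × E3 ↦ p.1 - p.2) (Ψ.prod Ψ) := by fun_prop
  have h_int : Integrable (fun p : E3 × E3 ↦ 1 - exp (-(s * ‖p.1 - p.2‖ ^ 2))) (Ψ.prod Ψ) :=
    (integrable_gaussianDeficit (symmetrization Ψ) hs).comp_aemeasurable h_sub
  have h_rhs : 16 * (1 + ‖ξ‖ ^ 2) * (s + gaussianDeficit (symmetrization Ψ) s) =
      ∫ p : E3 × E3, 16 * (1 + ‖ξ‖ ^ 2) * (s + (1 - exp (-(s * ‖p.1 - p.2‖ ^ 2))))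
        ∂(Ψ.prod Ψ) := by
    rw [integral_const_mul, gaussianDeficit, symmetrization, integral_map h_sub (by fun_prop),
      integral_add (integrable_const _) h_int]
    simp
  have h_wave (u w : E3) : Integrable (fun p : E3 × E3 ↦ wave ⟪p.2, u + w⟫ *
      ((wave ⟪p.1 - p.2, u⟫ + wave ⟪p.1 - p.2, w⟫) / 2)) (Ψ.prod Ψ) := by
    simp only [mul_div_assoc', mul_add, ← wave_add]
    exact ((integrable_wave (by fun_prop)).add (integrable_wave (by fun_prop))).div_const 2
  rw [h_rhs, ← mul_one (charFn Ψ ξ), ← charFn_zero Ψ, charFn_mul_charFn, charFn_mul_charFn,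
    charFn_mul_charFn, ← integral_const_mul, ← integral_add (h_wave _ _) (h_wave _ _),
    ← integral_sub ((h_wave _ _).fun_add (h_wave _ _)) ((h_wave _ _).const_mul _)]
  refine norm_integral_le_of_norm_le (((integrable_const _).add h_int).const_mul _)
    (.of_forall fun p ↦ ?_)
  refine le_trans (le_of_eq ?_) (norm_symmetrized_wave_le (X := (1 - s) * ⟪p.1 - p.2, ξ⟫) hs
    (sq_inner_le (p.1 - p.2) hη) (abs_inner_smul_le (p.1 - p.2) ξ hs))
  have h_phase (z : ℂ) : ‖wave ⟪p.2, ξ⟫ * z‖ = ‖z‖ := by rw [norm_mul, norm_wave, one_mul]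
  have h₁ : (1 - s) • ξ + η + (s • ξ - η) = ξ := by module
  have h₂ : (1 - s) • ξ - η + (s • ξ + η) = ξ := by module
  have h₃ : (1 - s) * ⟪p.1 - p.2, ξ⟫ + s * ⟪p.1 - p.2, ξ⟫ = ⟪p.1 - p.2, ξ⟫ := by ring
  rw [h₁, h₂, h₃, add_zero, inner_zero_right, wave_zero]
  refine Eq.trans ?_ (h_phase _)
  simp only [inner_add_right, inner_sub_right, inner_smul_right]
  ring_nf

lemma abs_symmetrized_cosDeficit_le (Θ : Measure E3) [IsProbabilityMeasure Θ] :
    |cosDeficit Θ ((1 - s) • ξ + η) + cosDeficit Θ ((1 - s) • ξ - η) - 2 * cosDeficit Θ ξ| ≤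
      16 * (1 + ‖ξ‖ ^ 2) * (s + gaussianDeficit Θ s) := by
  have h_rhs : 16 * (1 + ‖ξ‖ ^ 2) * (s + gaussianDeficit Θ s) =
      ∫ V, 16 * (1 + ‖ξ‖ ^ 2) * (s + (1 - exp (-(s * ‖V‖ ^ 2)))) ∂Θ := by
    rw [integral_const_mul, gaussianDeficit,
      integral_add (integrable_const _) (integrable_gaussianDeficit Θ hs)]
    simp
  have h_int := integrable_cosDeficit Θ
  unfold cosDeficit
  rw [h_rhs, ← integral_const_mul, ← integral_add (h_int _) (h_int _),
    ← integral_sub ((h_int _).fun_add (h_int _)) ((h_int _).const_mul _), ← Real.norm_eq_abs]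
  refine norm_integral_le_of_norm_le
    (((integrable_const _).add (integrable_gaussianDeficit Θ hs)).const_mul _)
    (.of_forall fun V ↦ le_trans (le_of_eq ?_) (abs_symmetrized_cos_le (X := (1 - s) * ⟪V, ξ⟫) hs
    (sq_inner_le V hη) (abs_inner_smul_le V ξ hs)))
  simp only [inner_add_right, inner_sub_right, inner_smul_right, Real.norm_eq_abs, ← add_mul,
    sub_add_cancel, one_mul]

omit hs hη in
lemma norm_collisionDefect_add_axialRotation_pi_le {L : E3 ≃ₗᵢ[ℝ] E3} (hL : IsFrameAt L ξ)
    (Ψ : Measure E3) [IsProbabilityMeasure Ψ] {ω : E3} (hω : ω ∈ upperHemisphere) :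
    ‖collisionDefect (charFn Ψ) ξ (L ω) + collisionDefect (charFn Ψ) ξ (L (axialRotation π ω))‖ ≤
      16 * (1 + ‖ξ‖ ^ 2) *
        (halfAngleSinSq ω + gaussianDeficit (symmetrization Ψ) (halfAngleSinSq ω)) := by
  have h := norm_symmetrized_charFn_le (halfAngleSinSq_nonneg hω) (norm_transversal_sq_le ξ L hω) Ψ
  rw [collisionDefect, collisionDefect, hL.freqPlus_axialRotation_pi, hL.freqMinus_axialRotation_pi,
    hL.freqPlus_eq, hL.freqMinus_eq]
  convert h using 2
  ring

end SymmetrizedBounds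

lemma abs_norm_sq_sub_norm_sq_mul_le {p q z : ℂ} (hp : ‖p‖ ≤ 1) (hq : ‖q‖ ≤ 1) (hz : ‖z‖ ≤ 1) :
    |‖z‖ ^ 2 - ‖p‖ ^ 2 * ‖q‖ ^ 2| ≤ 2 * ‖p * q - z‖ := by
  have h_factor : ‖z‖ ^ 2 - ‖p‖ ^ 2 * ‖q‖ ^ 2 = (‖z‖ + ‖p * q‖) * (‖z‖ - ‖p * q‖) := by
    rw [norm_mul]
    ring
  have hpq : ‖p * q‖ ≤ 1 := norm_mul p q ▸ mul_le_one₀ hp (norm_nonneg _) hq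
  rw [h_factor, abs_mul, abs_of_nonneg (by positivity), norm_sub_rev]
  gcongr
  · linarith
  · exact abs_norm_sub_norm_le z (p * q)

section MinimumPrinciple

/-- On the ball of radius `r`, `f ξ⁺ + f ξ⁻ ≤ f ξ` up to an error `o(sin²(θ/2))` along some
directions and their quarter turns about `ξ`. This is all that is retained of the collision operator
when `sin²(θ/2)` is not integrable against the kernel. -/
def IsNearlySuperadditive (f : E3 → ℝ) (r : ℝ) : Prop :=
  ∀ ξ : E3, ‖ξ‖ ≤ r → ∀ L : E3 ≃ₗᵢ[ℝ] E3, IsFrameAt L ξ → ∀ δ > 0,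
    ∃ ω ∈ upperHemisphere, 0 < halfAngleSinSq ω ∧ ∀ j : Fin 4,
      f (freqPlus ξ (L (axialRotation (j * (π / 2)) ω))) +
          f (freqMinus ξ (L (axialRotation (j * (π / 2)) ω))) ≤
        f ξ + δ * halfAngleSinSq ω

lemma isNearlySuperadditive_of_not_integrable {m : Measure E3} (hm : IsAxialKernel m)
    (hs : ¬Integrable halfAngleSinSq m) {φ : E3 → ℂ}
    (hφ : ∀ ξ L, IsFrameAt L ξ → Integrable (fun ω ↦ collisionDefect φ ξ (L ω)) m)
    {f : E3 → ℝ} {C r : ℝ} (hC : 0 ≤ C)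
    (hf : ∀ ξ, ‖ξ‖ ≤ r → ∀ L, IsFrameAt L ξ → ∀ ω ∈ upperHemisphere,
      f (freqPlus ξ (L ω)) + f (freqMinus ξ (L ω)) ≤ f ξ + C * ‖collisionDefect φ ξ (L ω)‖) :
    IsNearlySuperadditive f r := by
  intro ξ hξ L hL δ hδ
  by_contra! hcon
  set d : Fin 4 → E3 → ℝ := fun j ω ↦ ‖collisionDefect φ ξ (L (axialRotation (j * (π / 2)) ω))‖
  have h_int : Integrable (fun ω ↦ δ⁻¹ * C * ∑ j, d j ω) m := by
    refine .const_mul (integrable_finsetSum _ fun j _ ↦ ?_) _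
    exact (hφ ξ _ (hL.precomp (axialRotation_pole _))).norm
  refine hs (h_int.mono' (by fun_prop) ?_)
  filter_upwards [hm.ae_mem] with ω hω
  have h0 := halfAngleSinSq_nonneg hω
  have h_sum : 0 ≤ ∑ j, d j ω := Finset.sum_nonneg fun j _ ↦ norm_nonneg _
  rw [Real.norm_of_nonneg h0]
  rcases h0.eq_or_lt with h | hpos
  · exact h ▸ mul_nonneg (by positivity) h_sum
  obtain ⟨j, hj⟩ := hcon ω hω hpos
  have h_defect : δ * halfAngleSinSq ω ≤ C * d j ω := by
    linarith [hf ξ hξ L hL _ (axialRotation_mem_upperHemisphere hω (j * (π / 2)))]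
  have h_single : d j ω ≤ ∑ j, d j ω :=
    Finset.single_le_sum (f := fun j ↦ d j ω) (fun j _ ↦ norm_nonneg _) (Finset.mem_univ j)
  rw [mul_assoc, inv_mul_eq_div, le_div_iff₀ hδ, mul_comm]
  exact h_defect.trans (by gcongr)

/-- Arbitrarily close to the origin there are collisions at which `q ξ` and, up to quarter turns,
all `q ξ⁻` are nearly bounded by `κ|·|²`. -/
def IsSharpAtOrigin (q : E3 → ℝ) (κ : ℝ) : Prop :=
  ∀ ε > 0, ∀ ρ > 0, ∃ ξ ≠ 0, ‖ξ‖ ≤ ρ ∧ q ξ ≤ (κ + ε) * ‖ξ‖ ^ 2 ∧ ∃ L, IsFrameAt L ξ ∧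
    ∃ ω ∈ upperHemisphere, 0 < halfAngleSinSq ω ∧ ∀ j : Fin 4,
      q (freqMinus ξ (L (axialRotation (j * (π / 2)) ω))) ≤
        (κ + ε) * (halfAngleSinSq ω * ‖ξ‖ ^ 2)

lemma IsSharpAtOrigin.mono {q f : E3 → ℝ} {κ r : ℝ} (hf : IsSharpAtOrigin f κ) (hr : 0 < r)
    (hqf : ∀ ξ, ‖ξ‖ ≤ r → q ξ ≤ f ξ) : IsSharpAtOrigin q κ := by
  intro ε hε ρ hρ
  obtain ⟨ξ, hξ0, hξ, hfξ, L, hL, ω, hω, hs, hj⟩ := hf ε hε (min ρ r) (lt_min hρ hr)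
  have hξr := hξ.trans (min_le_right ρ r)
  refine ⟨ξ, hξ0, hξ.trans (min_le_left _ _), (hqf ξ hξr).trans hfξ, L, hL, ω, hω, hs,
    fun j ↦ (hqf _ ?_).trans (hj j)⟩
  exact (hL.norm_freqMinus_le (axialRotation_mem_upperHemisphere hω _)).trans hξr

lemma exists_min_div_norm_sq {E : Type*} [NormedAddCommGroup E] [ProperSpace E] {h : E → ℝ}
    {r s : ℝ} (hh : ContinuousOn h (closedBall 0 r)) (hs : 0 < s) {η : E} (hsη : s ≤ ‖η‖)
    (hηr : ‖η‖ ≤ r) :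
    ∃ (ξ : E) (F : ℝ), s ≤ ‖ξ‖ ∧ ‖ξ‖ ≤ r ∧ h ξ = F * ‖ξ‖ ^ 2 ∧
      ∀ ζ, s ≤ ‖ζ‖ → ‖ζ‖ ≤ r → F * ‖ζ‖ ^ 2 ≤ h ζ := by
  have h_mem (ζ : E) : ζ ∈ closedBall 0 r \ ball 0 s ↔ ‖ζ‖ ≤ r ∧ s ≤ ‖ζ‖ := by simp
  have h_pos {ζ : E} (hζ : s ≤ ‖ζ‖) : 0 < ‖ζ‖ ^ 2 := pow_pos (hs.trans_le hζ) 2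
  have h_cont : ContinuousOn (fun ζ ↦ h ζ / ‖ζ‖ ^ 2) (closedBall 0 r \ ball 0 s) :=
    (hh.mono sdiff_subset).div (by fun_prop) fun ζ hζ ↦ (h_pos ((h_mem ζ).1 hζ).2).ne'
  obtain ⟨ξ, hξ, h_min⟩ := ((isCompact_closedBall (0 : E) r).diff isOpen_ball).exists_isMinOn
    ⟨η, (h_mem η).2 ⟨hηr, hsη⟩⟩ h_cont
  obtain ⟨hξr, hsξ⟩ := (h_mem ξ).1 hξ
  refine ⟨ξ, h ξ / ‖ξ‖ ^ 2, hsξ, hξr, (div_mul_cancel₀ _ (h_pos hsξ).ne').symm, fun ζ hsζ hζr ↦ ?_⟩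
  exact (le_div_iff₀ (h_pos hsζ)).1 (h_min ((h_mem ζ).2 ⟨hζr, hsζ⟩))

namespace IsNearlySuperadditive

variable {f : E3 → ℝ} {r : ℝ} (hf : IsNearlySuperadditive f r)
  (hfc : ContinuousOn f (closedBall 0 r))
include hf hfc

/-- A quadratic lower bound propagates from a neighbourhood of the origin: otherwise
`f/|ξ|² + τ|ξ|²` has an interior minimum, where the quartic term makes `f` strictly
superadditive. -/
lemma mul_norm_sq_le {K s : ℝ} (hs : 0 < s) (hK : ∀ η, ‖η‖ ≤ s → K * ‖η‖ ^ 2 ≤ f η) {η : E3}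
    (hη : ‖η‖ ≤ r) : K * ‖η‖ ^ 2 ≤ f η := by
  by_contra! hlt
  have hsη : s < ‖η‖ := lt_of_not_ge fun h ↦ hlt.not_ge (hK η h)
  obtain ⟨τ, hτ, hητ⟩ : ∃ τ : ℝ, 0 < τ ∧ f η + τ * ‖η‖ ^ 4 < K * ‖η‖ ^ 2 := by
    obtain ⟨d, hd, hdK⟩ := exists_between (sub_pos.2 hlt)
    have hη4 : 0 < ‖η‖ ^ 4 := pow_pos (hs.trans hsη) 4
    exact ⟨d / ‖η‖ ^ 4, div_pos hd hη4, by rw [div_mul_cancel₀ _ hη4.ne']; linarith⟩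
  obtain ⟨ξ, F, hsξ, hξr, hξF, h_min⟩ :=
    exists_min_div_norm_sq (h := fun ζ ↦ f ζ + τ * ‖ζ‖ ^ 4) (by fun_prop) hs hsη.le hη
  have hξ : 0 < ‖ξ‖ := hs.trans_le hsξ
  have hFK : F < K := lt_of_mul_lt_mul_right ((h_min η hsη.le hη).trans_lt hητ) (sq_nonneg _)
  have h_below (ζ : E3) (hζ : ‖ζ‖ ≤ ‖ξ‖) : F * ‖ζ‖ ^ 2 ≤ f ζ + τ * ‖ζ‖ ^ 4 := by
    rcases le_total s ‖ζ‖ with h | h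
    · exact h_min ζ h (hζ.trans hξr)
    · calc F * ‖ζ‖ ^ 2 ≤ K * ‖ζ‖ ^ 2 := by gcongr
        _ ≤ f ζ := hK ζ h
        _ ≤ f ζ + τ * ‖ζ‖ ^ 4 := le_add_of_nonneg_right (by positivity)
  obtain ⟨ω, hω, hs0, hj⟩ := hf ξ hξr _ (isFrameAt_frame ξ) (τ * ‖ξ‖ ^ 4 / 2) (by positivity)
  have h_defect := hj 0
  have hp := h_below _ ((isFrameAt_frame ξ).norm_freqPlus_le hω)
  have hm := h_below _ ((isFrameAt_frame ξ).norm_freqMinus_le hω)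
  have h4 (x : E3) : ‖x‖ ^ 4 = (‖x‖ ^ 2) ^ 2 := by ring
  rw [h4, (isFrameAt_frame ξ).norm_freqPlus_sq hω] at hp
  rw [h4, (isFrameAt_frame ξ).norm_freqMinus_sq hω] at hm
  simp only [Fin.coe_ofNat_eq_mod, Nat.zero_mod, Nat.cast_zero, zero_mul,
    axialRotation_zero_angle] at h_defect
  have h_half := halfAngleSinSq_le_half hω
  have hτξ : 0 < τ * ‖ξ‖ ^ 4 * halfAngleSinSq ω := by positivity
  nlinarith

/-- Minimise `(f + a)/|ξ|²` with the small constant `a = ε|η|²/3`, which keeps the minimum away from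
the origin. -/
lemma isSharpAtOrigin {κ : ℝ} (hκ : 0 ≤ κ) (hf_nonneg : ∀ ξ, ‖ξ‖ ≤ r → 0 ≤ f ξ)
    (h_near : ∀ ε > 0, ∀ ρ > 0, ∃ η ≠ 0, ‖η‖ ≤ ρ ∧ ‖η‖ ≤ r ∧ f η < (κ + ε) * ‖η‖ ^ 2) :
    IsSharpAtOrigin f κ := by
  intro ε hε ρ hρ
  obtain ⟨η, hη, hηρ, hηr, hηf⟩ := h_near (ε / 3) (by positivity) ρ hρ
  set a := ε / 3 * ‖η‖ ^ 2 with ha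
  have ha_pos : 0 < a := by positivity
  obtain ⟨s, hs, hsη, hsa⟩ : ∃ s, 0 < s ∧ s ≤ ‖η‖ ∧ (κ + 2 * (ε / 3)) * s ^ 2 ≤ a := by
    refine ⟨min ‖η‖ √(a / (κ + 2 * (ε / 3))), by positivity, min_le_left _ _, ?_⟩
    calc (κ + 2 * (ε / 3)) * min ‖η‖ √(a / (κ + 2 * (ε / 3))) ^ 2
        ≤ (κ + 2 * (ε / 3)) * √(a / (κ + 2 * (ε / 3))) ^ 2 := by gcongr; exact min_le_right _ _
      _ = a := by rw [sq_sqrt (by positivity), mul_div_cancel₀ _ (by positivity)]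
  obtain ⟨ξ, F, hsξ, hξη, hξF, h_min⟩ := exists_min_div_norm_sq (h := fun ζ ↦ f ζ + a)
    ((hfc.mono (closedBall_subset_closedBall hηr)).add continuousOn_const) hs hsη le_rfl
  have hξ : 0 < ‖ξ‖ := hs.trans_le hsξ
  have hF : F < κ + 2 * (ε / 3) := by
    refine lt_of_mul_lt_mul_right ((h_min η hsη le_rfl).trans_lt ?_) (sq_nonneg ‖η‖)
    linarith [ha]
  have h_below (ζ : E3) (hζ : ‖ζ‖ ≤ ‖ξ‖) : F * ‖ζ‖ ^ 2 ≤ f ζ + a := by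
    rcases le_total s ‖ζ‖ with h | h
    · exact h_min ζ h (hζ.trans hξη)
    · calc F * ‖ζ‖ ^ 2 ≤ (κ + 2 * (ε / 3)) * s ^ 2 := by gcongr
        _ ≤ a := hsa
        _ ≤ f ζ + a := le_add_of_nonneg_left (hf_nonneg ζ (hζ.trans (hξη.trans hηr)))
  have hL := isFrameAt_frame ξ
  obtain ⟨ω, hω, hs0, hj⟩ := hf ξ (hξη.trans hηr) _ hL (ε / 3 * ‖ξ‖ ^ 2) (by positivity)
  refine ⟨ξ, norm_pos_iff.1 hξ, hξη.trans hηρ, ?_, _, hL, ω, hω, hs0, fun j ↦ ?_⟩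
  · nlinarith
  · have hω' := axialRotation_mem_upperHemisphere hω (j * (π / 2))
    have hp := h_below _ (hL.norm_freqPlus_le hω')
    rw [hL.norm_freqPlus_sq hω', halfAngleSinSq_axialRotation] at hp
    have hFs : F * (halfAngleSinSq ω * ‖ξ‖ ^ 2) ≤
        (κ + 2 * (ε / 3)) * (halfAngleSinSq ω * ‖ξ‖ ^ 2) := by
      gcongr
    linarith [hj j]

lemma exists_sharp_lower_bound (hr : 0 < r) (hf_nonneg : ∀ ξ, ‖ξ‖ ≤ r → 0 ≤ f ξ) :
    ∃ κ : ℝ, (∀ ξ, ‖ξ‖ ≤ r → κ * ‖ξ‖ ^ 2 ≤ f ξ) ∧ IsSharpAtOrigin f κ := by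
  set A : Set ℝ := {K | ∀ ξ, ‖ξ‖ ≤ r → K * ‖ξ‖ ^ 2 ≤ f ξ}
  have h_zero : (0 : ℝ) ∈ A := fun ξ hξ ↦ by rw [zero_mul]; exact hf_nonneg ξ hξ
  have h_bdd : BddAbove A := by
    refine ⟨f (r • pole) / r ^ 2, fun K hK ↦ (le_div_iff₀ (by positivity)).2 ?_⟩
    have h_norm : ‖r • pole‖ = r := by rw [norm_smul, norm_pole, Real.norm_of_nonneg hr.le, mul_one]
    simpa only [h_norm] using hK (r • pole) h_norm.le
  refine ⟨sSup A, fun ξ hξ ↦ ?_,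
    hf.isSharpAtOrigin hfc (le_csSup h_bdd h_zero) hf_nonneg fun ε hε ρ hρ ↦ ?_⟩
  · rcases eq_or_ne ξ 0 with rfl | h
    · simpa using hf_nonneg 0 hξ
    · have hξ2 : 0 < ‖ξ‖ ^ 2 := pow_pos (norm_pos_iff.2 h) 2
      exact (le_div_iff₀ hξ2).1 (csSup_le ⟨0, h_zero⟩ fun K hK ↦ (le_div_iff₀ hξ2).2 (hK ξ hξ))
  · by_contra! hcon
    have h_local (η : E3) (hη : ‖η‖ ≤ min ρ r) : (sSup A + ε) * ‖η‖ ^ 2 ≤ f η := by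
      rcases eq_or_ne η 0 with rfl | h
      · simpa using hf_nonneg 0 (hη.trans (min_le_right _ _))
      · exact hcon η h (hη.trans (min_le_left _ _)) (hη.trans (min_le_right _ _))
    have h_mem : sSup A + ε ∈ A := fun ξ hξ ↦ hf.mul_norm_sq_le hfc (lt_min hρ hr) h_local hξ
    linarith [le_csSup h_bdd h_mem]

end IsNearlySuperadditive

end MinimumPrinciple

section SecondMoment

lemma norm_wave_sub_taylor_le (y : ℝ) :
    ‖wave y - (1 - Complex.I * y - (y ^ 2 / 2 : ℝ))‖ ≤ 4 * (y ^ 2 * min 1 |y|) := by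
  rcases le_total |y| 1 with hy | hy
  · have h_norm : ‖-(Complex.I * (y : ℂ))‖ = |y| := by simp
    have h := Complex.exp_bound (h_norm.trans_le hy) (n := 3) (by norm_num)
    have h_poly : ∑ k ∈ Finset.range 3, (-(Complex.I * (y : ℂ))) ^ k / (k.factorial : ℂ) =
        1 - Complex.I * y - (y ^ 2 / 2 : ℝ) := by
      simp [Finset.sum_range_succ, Nat.factorial, mul_pow]
      ring
    have h_cube : |y| ^ 3 = y ^ 2 * |y| := by rw [pow_succ, sq_abs]
    rw [h_poly, h_norm, h_cube, mul_comm (y ^ 2 * |y|)] at h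
    rw [min_eq_right hy]
    refine h.trans ?_
    gcongr
    norm_num [Nat.factorial]
  · have h_poly : ‖1 - Complex.I * y - (y ^ 2 / 2 : ℝ)‖ ≤ 1 + |y| + y ^ 2 / 2 := by
      refine (norm_sub_le _ _).trans (add_le_add ((norm_sub_le _ _).trans_eq ?_) ?_)
      · simp
      · rw [Complex.norm_real, Real.norm_of_nonneg (by positivity)]
    rw [min_eq_left hy, mul_one]
    refine (norm_sub_le _ _).trans ?_
    rw [norm_wave]
    nlinarith [sq_abs y]

variable {E : Type*} [NormedAddCommGroup E] [InnerProductSpace ℝ E]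

lemma isLittleO_integral_wave_sub_taylor {Ω : Type*} [MeasurableSpace Ω] {μ : Measure Ω}
    {X : Ω → E} (hX : MemLp X 2 μ) :
    (fun ξ ↦ ∫ x, (wave ⟪X x, ξ⟫ - (1 - Complex.I * ⟪X x, ξ⟫ - (⟪X x, ξ⟫ ^ 2 / 2 : ℝ))) ∂μ)
      =o[𝓝 0] fun ξ ↦ ‖ξ‖ ^ 2 := by
  have h_int := hX.integrable_norm_pow two_ne_zero
  have h_meas := hX.1.norm
  set c : E → ℝ := fun ξ ↦ ∫ x, ‖X x‖ ^ 2 * min 1 (‖X x‖ * ‖ξ‖) ∂μ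
  have h_dom (ξ : E) (x : Ω) : ‖‖X x‖ ^ 2 * min 1 (‖X x‖ * ‖ξ‖)‖ ≤ ‖X x‖ ^ 2 := by
    rw [Real.norm_of_nonneg (by positivity)]
    exact mul_le_of_le_one_right (by positivity) (min_le_left _ _)
  have h_strong (ξ : E) : AEStronglyMeasurable (fun x ↦ ‖X x‖ ^ 2 * min 1 (‖X x‖ * ‖ξ‖)) μ :=
    (h_meas.pow 2).mul (aestronglyMeasurable_const.inf (h_meas.mul_const _))
  have h_lim : Tendsto c (𝓝 0) (𝓝 0) := by
    rw [← integral_zero Ω ℝ (μ := μ)]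
    refine tendsto_integral_filter_of_dominated_convergence _ (.of_forall h_strong)
      (.of_forall fun ξ ↦ .of_forall (h_dom ξ)) h_int (.of_forall fun x ↦ ?_)
    have h_cont : Continuous fun ξ : E ↦ ‖X x‖ ^ 2 * min 1 (‖X x‖ * ‖ξ‖) := by fun_prop
    simpa using h_cont.tendsto 0
  have h_bound (ξ : E) :
      ‖∫ x, (wave ⟪X x, ξ⟫ - (1 - Complex.I * ⟪X x, ξ⟫ - (⟪X x, ξ⟫ ^ 2 / 2 : ℝ))) ∂μ‖ ≤
        4 * ‖‖ξ‖ ^ 2 * c ξ‖ := by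
    rw [Real.norm_of_nonneg (mul_nonneg (sq_nonneg _) (integral_nonneg fun _ ↦ by positivity)),
      ← integral_const_mul, ← integral_const_mul]
    refine norm_integral_le_of_norm_le
      (((h_int.mono' (h_strong ξ) (.of_forall (h_dom ξ))).const_mul _).const_mul _)
      (.of_forall fun x ↦ (norm_wave_sub_taylor_le _).trans ?_)
    have h_inner := abs_real_inner_le_norm (X x) ξ
    have h_sq : ⟪X x, ξ⟫ ^ 2 ≤ ‖ξ‖ ^ 2 * ‖X x‖ ^ 2 := by
      rw [← sq_abs, ← mul_pow, mul_comm ‖ξ‖]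
      gcongr
    rw [← mul_assoc (‖ξ‖ ^ 2)]
    gcongr
  refine (Asymptotics.IsBigO.of_bound 4 (.of_forall h_bound)).trans_isLittleO ?_
  simpa using (Asymptotics.isBigO_refl (fun ξ : E ↦ ‖ξ‖ ^ 2) (𝓝 0)).mul_isLittleO
    ((Asymptotics.isLittleO_one_iff ℝ).2 h_lim)

lemma memLp_inner_const {Ω : Type*} [MeasurableSpace Ω] {μ : Measure Ω} {X : Ω → E}
    (hX : MemLp X 2 μ) (a : E) : MemLp (fun x ↦ ⟪X x, a⟫) 2 μ := by
  simpa only [real_inner_comm] using hX.const_inner (𝕜 := ℝ) a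

variable [MeasurableSpace E]

/-- `∫ ⟨V, a⟩² dΘ(V)`, the second moment of `Θ` in the direction `a`. -/
def secondMoment (Θ : Measure E) (a : E) : ℝ := ∫ V, ⟪V, a⟫ ^ 2 ∂Θ

lemma secondMoment_smul (Θ : Measure E) (c : ℝ) (a : E) :
    secondMoment Θ (c • a) = c ^ 2 * secondMoment Θ a := by
  simp only [secondMoment, inner_smul_right, mul_pow, integral_const_mul]

lemma secondMoment_nonneg (Θ : Measure E) (a : E) : 0 ≤ secondMoment Θ a :=
  integral_nonneg fun _ ↦ sq_nonneg _

variable {Θ : Measure E} (hΘ : MemLp id 2 Θ)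
include hΘ

lemma integrable_secondMoment (a : E) : Integrable (fun V ↦ ⟪V, a⟫ ^ 2) Θ :=
  (memLp_inner_const hΘ a).integrable_sq

lemma isLittleO_cosDeficit_sub_secondMoment [BorelSpace E] [SecondCountableTopology E]
    [IsFiniteMeasure Θ] :
    (fun ξ ↦ cosDeficit Θ ξ - secondMoment Θ ξ / 2) =o[𝓝 0] fun ξ ↦ ‖ξ‖ ^ 2 := by
  refine Asymptotics.IsBigO.trans_isLittleO (.of_bound 1 (.of_forall fun ξ ↦ ?_))
    (isLittleO_integral_wave_sub_taylor hΘ)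
  have h_lin : Integrable (fun V ↦ ⟪V, ξ⟫) Θ := (memLp_inner_const hΘ ξ).integrable one_le_two
  have h_sq := (integrable_secondMoment hΘ ξ).div_const 2
  have h_int : Integrable (fun V ↦ wave ⟪V, ξ⟫ -
      (1 - Complex.I * ⟪V, ξ⟫ - (⟪V, ξ⟫ ^ 2 / 2 : ℝ))) Θ :=
    (integrable_wave (by fun_prop)).sub
      (((integrable_const _).sub (h_lin.ofReal.const_mul _)).sub h_sq.ofReal)
  have h_re (y : ℝ) : (wave y - (1 - Complex.I * y - (y ^ 2 / 2 : ℝ))).re =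
      -((1 - cos y) - y ^ 2 / 2) := by
    rw [wave_eq_exp_mul_I, Complex.sub_re, Complex.exp_ofReal_mul_I_re, cos_neg]
    simp only [Complex.sub_re, Complex.one_re, Complex.mul_re, Complex.I_re, Complex.I_im,
      Complex.ofReal_re, Complex.ofReal_im]
    ring
  have h_eq : cosDeficit Θ ξ - secondMoment Θ ξ / 2 =
      -(∫ V, (wave ⟪V, ξ⟫ - (1 - Complex.I * ⟪V, ξ⟫ - (⟪V, ξ⟫ ^ 2 / 2 : ℝ))) ∂Θ).re := by
    rw [cosDeficit, secondMoment, ← integral_div, ← integral_sub (integrable_cosDeficit Θ ξ) h_sq,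
      ← RCLike.re_eq_complex_re, ← integral_re h_int, ← integral_neg]
    simp only [RCLike.re_eq_complex_re, h_re, neg_neg]
  rw [h_eq, norm_neg, one_mul]
  exact Complex.abs_re_le_norm _

end SecondMoment

section SharpMoments

lemma sum_sq_inner_quarterTurns (W ω : E3) :
    ∑ j : Fin 4, ⟪W, pole - axialRotation (j * (π / 2)) ω⟫ ^ 2 =
      4 * (1 - ω 0) ^ 2 * W 0 ^ 2 + 2 * (‖W‖ ^ 2 - W 0 ^ 2) * (‖ω‖ ^ 2 - ω 0 ^ 2) := by
  have h_three : (3 : ℝ) * (π / 2) = π + π / 2 := by ring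
  have h_two : (2 : ℝ) * (π / 2) = π := by ring
  have h_inner (φ : ℝ) : ⟪W, pole - axialRotation φ ω⟫ = W 0 * (1 - ω 0) -
      W 1 * (cos φ * ω 1 - sin φ * ω 2) - W 2 * (sin φ * ω 1 + cos φ * ω 2) := by
    rw [inner_sub_right, inner_pole_right, axialRotation_apply, PiLp.inner_apply,
      Fin.sum_univ_three]
    simp only [RCLike.inner_apply, conj_trivial, Matrix.cons_val]
    ring
  simp only [h_inner, EuclideanSpace.real_norm_sq_eq, Fin.sum_univ_three, Fin.sum_univ_four,
    Fin.coe_ofNat_eq_mod, Nat.reduceMod, Nat.cast_zero, Nat.cast_one,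
    Nat.cast_ofNat, zero_mul, one_mul, h_two, h_three, cos_zero, sin_zero, cos_pi_div_two,
    sin_pi_div_two, cos_pi, sin_pi, cos_add, sin_add]
  ring

lemma IsFrameAt.sum_sq_inner_freqMinus {ξ : E3} {L : E3 ≃ₗᵢ[ℝ] E3} (hL : IsFrameAt L ξ) {ω : E3}
    (hω : ‖ω‖ = 1) (V : E3) :
    ∑ j : Fin 4, ⟪V, freqMinus ξ (L (axialRotation (j * (π / 2)) ω))⟫ ^ 2 =
      halfAngleSinSq ω * ‖ξ‖ ^ 2 * (4 * halfAngleSinSq ω * ⟪V, L pole⟫ ^ 2 +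
        2 * (1 - halfAngleSinSq ω) * (‖V‖ ^ 2 - ⟪V, L pole⟫ ^ 2)) := by
  obtain ⟨W, rfl⟩ := L.surjective V
  have h_inner (σ : E3) : ⟪L W, freqMinus ξ (L σ)⟫ = ‖ξ‖ / 2 * ⟪W, pole - σ⟫ := by
    have h_freq : freqMinus ξ (L σ) = (‖ξ‖ / 2) • L (pole - σ) := by
      have h : (1 / 2 : ℝ) • ξ = (‖ξ‖ / 2) • L pole := by
        nth_rewrite 1 [← hL]
        module
      rw [freqMinus, h, map_sub, smul_sub]
    rw [h_freq, inner_smul_right, L.inner_map_map]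
  simp only [h_inner, mul_pow, ← Finset.mul_sum, sum_sq_inner_quarterTurns, L.norm_map,
    L.inner_map_map, inner_pole_right, hω, halfAngleSinSq]
  ring

section

variable {Θ : Measure E3} (hΘ : MemLp id 2 Θ)
include hΘ

lemma IsFrameAt.sum_secondMoment_freqMinus {ξ : E3} {L : E3 ≃ₗᵢ[ℝ] E3} (hL : IsFrameAt L ξ)
    {ω : E3} (hω : ‖ω‖ = 1) :
    ∑ j : Fin 4, secondMoment Θ (freqMinus ξ (L (axialRotation (j * (π / 2)) ω))) =
      halfAngleSinSq ω * ‖ξ‖ ^ 2 * (4 * halfAngleSinSq ω * secondMoment Θ (L pole) +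
        2 * (1 - halfAngleSinSq ω) * (∫ V, ‖V‖ ^ 2 ∂Θ - secondMoment Θ (L pole))) := by
  have h_sq := integrable_secondMoment hΘ
  have h_norm : Integrable (fun V : E3 ↦ ‖V‖ ^ 2) Θ := hΘ.integrable_norm_pow two_ne_zero
  have h_diff : Integrable (fun V ↦ ‖V‖ ^ 2 - ⟪V, L pole⟫ ^ 2) Θ := h_norm.sub (h_sq _)
  unfold secondMoment
  rw [← integral_finsetSum _ fun j _ ↦ h_sq _]
  simp only [hL.sum_sq_inner_freqMinus hω]
  rw [integral_const_mul, integral_add ((h_sq _).const_mul _) (h_diff.const_mul _),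
    integral_const_mul, integral_const_mul, integral_sub h_norm (h_sq _)]

lemma exists_sharp_secondMoments [IsFiniteMeasure Θ] {κ : ℝ}
    (hκ : IsSharpAtOrigin (cosDeficit Θ) κ) {ε : ℝ} (hε : 0 < ε) :
    ∃ a : E3, ‖a‖ = 1 ∧ secondMoment Θ a ≤ 2 * κ + ε ∧ ∃ S : ℝ, S ≤ 1 / 2 ∧
      4 * S * secondMoment Θ a + 2 * (1 - S) * (∫ V, ‖V‖ ^ 2 ∂Θ - secondMoment Θ a) ≤
        4 * (2 * κ + ε) := by
  obtain ⟨ρ, hρ, h_taylor⟩ := Metric.nhds_basis_closedBall.eventually_iff.1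
    ((isLittleO_cosDeficit_sub_secondMoment hΘ).def (show 0 < ε / 4 by positivity))
  have h_le {ξ : E3} (hξ : ‖ξ‖ ≤ ρ) : secondMoment Θ ξ ≤ 2 * cosDeficit Θ ξ + ε / 2 * ‖ξ‖ ^ 2 := by
    have h := (abs_le.1 (h_taylor (mem_closedBall_zero_iff.2 hξ))).1
    rw [Real.norm_of_nonneg (sq_nonneg _)] at h
    linarith
  obtain ⟨ξ, hξ0, hξρ, hξ, L, hL, ω, hω, hs, hj⟩ := hκ (ε / 4) (by positivity) ρ hρ
  have hξ_pos : 0 < ‖ξ‖ ^ 2 := by positivity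
  refine ⟨L pole, by rw [L.norm_map, norm_pole], le_of_mul_le_mul_left ?_ hξ_pos, halfAngleSinSq ω,
    halfAngleSinSq_le_half hω, le_of_mul_le_mul_left ?_ (mul_pos hs hξ_pos)⟩
  · rw [← secondMoment_smul, hL]
    linarith [h_le hξρ]
  · rw [← hL.sum_secondMoment_freqMinus hΘ hω.1]
    refine (Finset.sum_le_card_nsmul _ _ (halfAngleSinSq ω * ‖ξ‖ ^ 2 * (2 * κ + ε))
      fun j _ ↦ ?_).trans_eq ?_
    · have hω' := axialRotation_mem_upperHemisphere hω (j * (π / 2))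
      have h := h_le ((hL.norm_freqMinus_le hω').trans hξρ)
      rw [hL.norm_freqMinus_sq hω', halfAngleSinSq_axialRotation] at h
      linarith [hj j]
    · simp only [Finset.card_univ, Fintype.card_fin, nsmul_eq_mul]
      push_cast
      ring

end

lemma memLp_id_two_of_isSharpAtOrigin {Θ : Measure E3} [IsFiniteMeasure Θ] {κ : ℝ}
    (hκ : IsSharpAtOrigin (cosDeficit Θ) κ) : MemLp id 2 Θ := by
  set B : ℕ → Set E3 := fun n ↦ closedBall 0 n
  have hB (n : ℕ) : MeasurableSet (B n) := isClosed_closedBall.measurableSet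
  have h_memLp (n : ℕ) : MemLp id 2 (Θ.restrict (B n)) :=
    .of_bound (by fun_prop) n ((ae_restrict_mem (hB n)).mono fun V hV ↦ by simpa [B] using hV)
  have h_mono (n : ℕ) (ξ : E3) : cosDeficit (Θ.restrict (B n)) ξ ≤ cosDeficit Θ ξ :=
    setIntegral_le_integral (integrable_cosDeficit Θ ξ)
      (.of_forall fun V ↦ sub_nonneg.2 (cos_le_one _))
  have h_bound (n : ℕ) : ∫ V in B n, ‖V‖ ^ 2 ∂Θ ≤ 5 * (2 * κ + 1) := by
    obtain ⟨a, -, ha, S, hS, h⟩ := exists_sharp_secondMoments (h_memLp n)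
      (hκ.mono one_pos fun ξ _ ↦ h_mono n ξ) one_pos
    have h_nonneg := secondMoment_nonneg (Θ.restrict (B n)) a
    nlinarith
  refine (memLp_two_iff_integrable_sq_norm (by fun_prop)).2 <|
    (aecover_closedBall tendsto_natCast_atTop_atTop).integrable_of_integral_norm_bounded
      (5 * (2 * κ + 1)) (fun n ↦ (h_memLp n).integrable_norm_pow two_ne_zero)
      (.of_forall fun n ↦ ?_)
  simpa using h_bound n

lemma integral_norm_sq_le_of_isSharpAtOrigin {Θ : Measure E3} [IsFiniteMeasure Θ] {κ : ℝ}
    (hκ : IsSharpAtOrigin (cosDeficit Θ) κ) (hΘ : MemLp id 2 Θ)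
    (h_lower : ∀ a, ‖a‖ = 1 → 2 * κ ≤ secondMoment Θ a) : ∫ V, ‖V‖ ^ 2 ∂Θ ≤ 6 * κ := by
  refine le_of_forall_pos_le_add fun ε hε ↦ ?_
  obtain ⟨a, ha_norm, ha, S, hS, h⟩ :=
    exists_sharp_secondMoments hΘ hκ (show 0 < ε / 5 by positivity)
  have h_low := h_lower a ha_norm
  nlinarith

end SharpMoments

section IsotropicMoments

lemma integral_norm_sq_eq_sum_secondMoment {E ι : Type*} [NormedAddCommGroup E]
    [InnerProductSpace ℝ E] [MeasurableSpace E] [Fintype ι] {Θ : Measure E} (hΘ : MemLp id 2 Θ)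
    (e : OrthonormalBasis ι ℝ E) : ∫ V, ‖V‖ ^ 2 ∂Θ = ∑ i, secondMoment Θ (e i) := by
  unfold secondMoment
  rw [← integral_finsetSum _ fun i _ ↦ integrable_secondMoment hΘ (e i)]
  congr 1 with V
  simpa only [Real.norm_eq_abs, sq_abs] using (e.sum_sq_norm_inner_left V).symm

lemma two_mul_le_secondMoment {E : Type*} [NormedAddCommGroup E] [InnerProductSpace ℝ E]
    [MeasurableSpace E] [BorelSpace E] [SecondCountableTopology E] {Θ : Measure E}
    [IsFiniteMeasure Θ] (hΘ : MemLp id 2 Θ) {κ : ℝ}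
    (hκ : ∀ ε > 0, ∀ᶠ ξ in 𝓝 0, (κ - ε) * ‖ξ‖ ^ 2 ≤ cosDeficit Θ ξ) {a : E} (ha : ‖a‖ = 1) :
    2 * κ ≤ secondMoment Θ a := by
  refine le_of_forall_pos_le_add fun ε hε ↦ ?_
  have h_ray : Tendsto (fun t : ℝ ↦ t • a) (𝓝[>] 0) (𝓝 0) := by
    have h : Continuous fun t : ℝ ↦ t • a := by fun_prop
    simpa using (h.tendsto 0).mono_left nhdsWithin_le_nhds
  have h_taylor := (isLittleO_cosDeficit_sub_secondMoment hΘ).def (show 0 < ε / 4 by positivity)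
  obtain ⟨t, ⟨h_low, h_up⟩, ht : 0 < t⟩ := ((h_ray.eventually
    ((hκ (ε / 4) (by positivity)).and h_taylor)).and self_mem_nhdsWithin).exists
  have h := (abs_le.1 h_up).2
  simp only [secondMoment_smul, norm_smul, ha, mul_one, Real.norm_eq_abs, sq_abs,
    abs_of_nonneg (sq_nonneg t)] at h h_low
  have ht2 : 0 < t ^ 2 := by positivity
  refine le_of_mul_le_mul_left ?_ ht2
  linarith

lemma secondMoment_eq_of_isSharpAtOrigin {Θ : Measure E3} [IsFiniteMeasure Θ] {κ : ℝ}
    (hκ : IsSharpAtOrigin (cosDeficit Θ) κ) (hΘ : MemLp id 2 Θ)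
    (h_lower : ∀ a, ‖a‖ = 1 → 2 * κ ≤ secondMoment Θ a) (a : E3) :
    secondMoment Θ a = 2 * κ * ‖a‖ ^ 2 := by
  set e := (EuclideanSpace.basisFun (Fin 3) ℝ).map (frame a)
  have h_le (i : Fin 3) : 2 * κ ≤ secondMoment Θ (e i) := h_lower _ (e.orthonormal.1 i)
  have h_trace := integral_norm_sq_le_of_isSharpAtOrigin hκ hΘ h_lower
  rw [integral_norm_sq_eq_sum_secondMoment hΘ e, Fin.sum_univ_three] at h_trace
  have h_zero : secondMoment Θ (e 0) = 2 * κ := by linarith [h_le 0, h_le 1, h_le 2]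
  have ha : ‖a‖ • e 0 = a := by simpa [e, pole, IsFrameAt] using isFrameAt_frame a
  nth_rewrite 1 [← ha]
  rw [secondMoment_smul, h_zero, mul_comm]

lemma isNearlySuperadditive_neg_log_norm_sq_charFn {m : Measure E3} (hm : IsAxialKernel m)
    (hs : ¬Integrable halfAngleSinSq m) {Ψ : Measure E3} [IsProbabilityMeasure Ψ]
    (hΨ : ∀ ξ L, IsFrameAt L ξ → Integrable (fun ω ↦ collisionDefect (charFn Ψ) ξ (L ω)) m) {r : ℝ}
    (h_half : ∀ ξ, ‖ξ‖ ≤ r → 1 / 2 ≤ ‖charFn Ψ ξ‖ ^ 2) :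
    IsNearlySuperadditive (fun ξ ↦ -log (‖charFn Ψ ξ‖ ^ 2)) r := by
  refine isNearlySuperadditive_of_not_integrable hm hs hΨ (C := 8) (by norm_num)
    fun ξ hξ L hL ω hω ↦ ?_
  have hp := h_half _ ((hL.norm_freqPlus_le hω).trans hξ)
  have hq := h_half _ ((hL.norm_freqMinus_le hω).trans hξ)
  have hz := h_half ξ hξ
  have h_diff := abs_norm_sq_sub_norm_sq_mul_le (norm_charFn_le_one Ψ (freqPlus ξ (L ω)))
    (norm_charFn_le_one Ψ (freqMinus ξ (L ω))) (norm_charFn_le_one Ψ ξ)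
  unfold collisionDefect
  set P := ‖charFn Ψ (freqPlus ξ (L ω))‖ ^ 2
  set Q := ‖charFn Ψ (freqMinus ξ (L ω))‖ ^ 2
  set Z := ‖charFn Ψ ξ‖ ^ 2
  set D := ‖charFn Ψ (freqPlus ξ (L ω)) * charFn Ψ (freqMinus ξ (L ω)) - charFn Ψ ξ‖
  have h_quarter : 1 / 4 ≤ P * Q := by nlinarith
  have hPQ : 0 < P * Q := by linarith
  have h_log : -log P + -log Q - -log Z ≤ 8 * D := calc
    -log P + -log Q - -log Z = log (Z / (P * Q)) := by
      rw [log_div (by linarith) hPQ.ne', log_mul (by linarith) (by linarith)]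
      ring
    _ ≤ Z / (P * Q) - 1 := log_le_sub_one_of_pos (by positivity)
    _ = (Z - P * Q) / (P * Q) := div_sub_one hPQ.ne'
    _ ≤ 8 * D := by
      rw [div_le_iff₀ hPQ]
      nlinarith [le_abs_self (Z - P * Q), norm_nonneg
        (charFn Ψ (freqPlus ξ (L ω)) * charFn Ψ (freqMinus ξ (L ω)) - charFn Ψ ξ)]
  linarith

lemma exists_secondMoment_symmetrization_eq {m : Measure E3} (hm : IsAxialKernel m)
    (hs : ¬Integrable halfAngleSinSq m) {Ψ : Measure E3} [IsProbabilityMeasure Ψ]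
    (hΨ : ∀ ξ L, IsFrameAt L ξ → Integrable (fun ω ↦ collisionDefect (charFn Ψ) ξ (L ω)) m) :
    MemLp id 2 (symmetrization Ψ) ∧
      ∃ κ, ∀ a, secondMoment (symmetrization Ψ) a = 2 * κ * ‖a‖ ^ 2 := by
  have h_cont : Continuous fun ξ ↦ ‖charFn Ψ ξ‖ ^ 2 := by fun_prop
  obtain ⟨r, hr, h_half⟩ : ∃ r > 0, ∀ ξ, ‖ξ‖ ≤ r → 1 / 2 ≤ ‖charFn Ψ ξ‖ ^ 2 := by
    have h := (h_cont.tendsto 0).eventually_const_le (show 1 / 2 < ‖charFn Ψ 0‖ ^ 2 by norm_num)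
    obtain ⟨r, hr, h⟩ := nhds_basis_closedBall.eventually_iff.1 h
    exact ⟨r, hr, fun ξ hξ ↦ h (mem_closedBall_zero_iff.2 hξ)⟩
  have h_pos {ξ : E3} (hξ : ‖ξ‖ ≤ r) : 0 < ‖charFn Ψ ξ‖ ^ 2 := by linarith [h_half ξ hξ]
  have h_log_cont : ContinuousOn (fun ξ ↦ -log (‖charFn Ψ ξ‖ ^ 2)) (closedBall 0 r) :=
    (h_cont.continuousOn.log fun ξ hξ ↦ (h_pos (mem_closedBall_zero_iff.1 hξ)).ne').neg
  have h_q_le (ξ : E3) (hξ : ‖ξ‖ ≤ r) :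
      cosDeficit (symmetrization Ψ) ξ ≤ -log (‖charFn Ψ ξ‖ ^ 2) := by
    linarith [log_le_sub_one_of_pos (h_pos hξ), norm_charFn_sq Ψ ξ]
  have h_super := isNearlySuperadditive_neg_log_norm_sq_charFn hm hs hΨ h_half
  obtain ⟨κ, h_low, h_sharp⟩ := h_super.exists_sharp_lower_bound h_log_cont hr
    fun ξ hξ ↦ (cosDeficit_nonneg _ ξ).trans (h_q_le ξ hξ)
  have hκ_sharp := h_sharp.mono hr h_q_le
  have hΘ := memLp_id_two_of_isSharpAtOrigin hκ_sharp
  refine ⟨hΘ, κ, secondMoment_eq_of_isSharpAtOrigin hκ_sharp hΘ fun a ha ↦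
    two_mul_le_secondMoment hΘ (fun ε hε ↦ ?_) ha⟩
  have h_near : ∀ᶠ ξ in 𝓝 0, κ - ε < κ * ‖charFn Ψ ξ‖ ^ 2 :=
    (continuous_const.mul h_cont).continuousAt.eventually_const_lt (by simpa using hε)
  filter_upwards [h_near, closedBall_mem_nhds 0 hr] with ξ hξ hξr
  rw [mem_closedBall_zero_iff] at hξr
  have h_inv := one_sub_inv_le_log_of_pos (h_pos hξr)
  have h_cancel := inv_mul_cancel₀ (h_pos hξr).ne'
  nlinarith [h_low ξ hξr, norm_charFn_sq Ψ ξ, h_pos hξr, sq_nonneg ‖ξ‖]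

end IsotropicMoments

section GaussianLaw

open ProbabilityTheory

section

variable {E : Type*} [NormedAddCommGroup E] [InnerProductSpace ℝ E] [MeasurableSpace E]
  [BorelSpace E] [SecondCountableTopology E] {Ψ : Measure E} [IsProbabilityMeasure Ψ]

omit [InnerProductSpace ℝ E] in
lemma memLp_id_two_of_symmetrization (h : MemLp id 2 (symmetrization Ψ)) : MemLp id 2 Ψ := by
  have h_prod : Integrable (fun p : E × E ↦ ‖p.1 - p.2‖ ^ 2) (Ψ.prod Ψ) :=
    (integrable_map_measure (by fun_prop) (by fun_prop)).1 (h.integrable_norm_pow two_ne_zero)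
  obtain ⟨w, hw⟩ := h_prod.prod_left_ae.exists
  have h_shift : MemLp (fun v ↦ v - w) 2 Ψ := (memLp_two_iff_integrable_sq_norm (by fun_prop)).2 hw
  refine (h_shift.add (memLp_const w)).congr_norm (by fun_prop) (.of_forall fun v ↦ ?_)
  simp

lemma secondMoment_symmetrization (h : MemLp id 2 Ψ) (a : E) :
    secondMoment (symmetrization Ψ) a = 2 * Var[fun v ↦ ⟪v, a⟫; Ψ] := by
  set X : E → ℝ := fun v ↦ ⟪v, a⟫
  have hX : MemLp X 2 Ψ := memLp_inner_const h a
  have h_int : Integrable X Ψ := hX.integrable one_le_two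
  have h_mean : ∫ p : E × E, (X p.1 + (-X) p.2) ∂Ψ.prod Ψ = 0 := by
    rw [integral_add (h_int.comp_fst Ψ) (h_int.neg.comp_snd Ψ), integral_fun_fst,
      integral_fun_snd, integral_neg' X]
    simp
  calc secondMoment (symmetrization Ψ) a
      = ∫ p : E × E, (X p.1 + (-X) p.2) ^ 2 ∂Ψ.prod Ψ := by
        rw [secondMoment, symmetrization, integral_map (by fun_prop) (by fun_prop)]
        simp only [X, inner_sub_left, Pi.neg_apply, ← sub_eq_add_neg]
    _ = Var[fun p : E × E ↦ X p.1 + (-X) p.2; Ψ.prod Ψ] :=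
        (variance_of_integral_eq_zero (by fun_prop) h_mean).symm
    _ = Var[X; Ψ] + Var[-X; Ψ] := variance_add_prod hX hX.neg
    _ = 2 * Var[X; Ψ] := by rw [variance_neg, two_mul]

end

/-- The Fourier transform of the Gaussian law with mean `u` and covariance `κ • 1`. -/
def gaussianCharFn (u : E3) (κ : ℝ) (ξ : E3) : ℂ :=
  wave ⟪u, ξ⟫ * exp (-(κ / 2 * ‖ξ‖ ^ 2))

@[fun_prop]
lemma continuous_gaussianCharFn (u : E3) (κ : ℝ) : Continuous (gaussianCharFn u κ) := by
  unfold gaussianCharFn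
  fun_prop

lemma norm_gaussianCharFn_le_one (u : E3) {κ : ℝ} (hκ : 0 ≤ κ) (ξ : E3) :
    ‖gaussianCharFn u κ ξ‖ ≤ 1 := by
  rw [gaussianCharFn, norm_mul, norm_wave, one_mul, Complex.norm_real,
    Real.norm_of_nonneg (exp_nonneg _), exp_le_one_iff, neg_nonpos]
  positivity

lemma freqPlus_add_freqMinus (ξ σ : E3) : freqPlus ξ σ + freqMinus ξ σ = ξ := by
  rw [freqMinus_eq_sub, add_sub_cancel]

lemma IsFrameAt.gaussianCharFn_mul {L : E3 ≃ₗᵢ[ℝ] E3} {ξ : E3} (hL : IsFrameAt L ξ) {ω : E3}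
    (hω : ω ∈ upperHemisphere) (u : E3) (κ : ℝ) :
    gaussianCharFn u κ (freqPlus ξ (L ω)) * gaussianCharFn u κ (freqMinus ξ (L ω)) =
      gaussianCharFn u κ ξ := by
  have h_norm : ‖freqPlus ξ (L ω)‖ ^ 2 + ‖freqMinus ξ (L ω)‖ ^ 2 = ‖ξ‖ ^ 2 := by
    rw [hL.norm_freqPlus_sq hω, hL.norm_freqMinus_sq hω]
    ring
  unfold gaussianCharFn
  rw [mul_mul_mul_comm, ← wave_add, ← inner_add_right, freqPlus_add_freqMinus,
    ← Complex.ofReal_mul, ← exp_add, ← neg_add, ← mul_add, h_norm]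

lemma isLittleO_exp_neg_mul_norm_sq (E : Type*) [NormedAddCommGroup E] (c : ℝ) :
    (fun ξ : E ↦ exp (-(c * ‖ξ‖ ^ 2)) - (1 - c * ‖ξ‖ ^ 2)) =o[𝓝 0] fun ξ ↦ ‖ξ‖ ^ 2 := by
  have h_lim : Tendsto (fun ξ : E ↦ -(c * ‖ξ‖ ^ 2)) (𝓝 0) (𝓝 0) := by
    have h : Continuous fun ξ : E ↦ -(c * ‖ξ‖ ^ 2) := by fun_prop
    simpa using h.tendsto 0
  have h := (hasDerivAt_iff_isLittleO_nhds_zero.1 (hasDerivAt_exp 0)).comp_tendsto h_lim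
  simp only [Function.comp_def, zero_add, exp_zero, smul_eq_mul, mul_one] at h
  refine (h.trans_isBigO (Asymptotics.isBigO_const_mul_self c _ _).neg_left).congr_left
    fun ξ ↦ ?_
  ring

lemma integral_wave_sub_taylor {Ω : Type*} [MeasurableSpace Ω] {μ : Measure Ω}
    [IsProbabilityMeasure μ] {Y : Ω → ℝ} (hY : MemLp Y 2 μ) :
    ∫ x, (wave (Y x) - (1 - Complex.I * Y x - (Y x ^ 2 / 2 : ℝ))) ∂μ =
      ∫ x, wave (Y x) ∂μ - (1 - Complex.I * (∫ x, Y x ∂μ : ℝ) - ((∫ x, Y x ^ 2 ∂μ) / 2 : ℝ)) := by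
  have h_lin : Integrable (fun x ↦ Complex.I * (Y x : ℂ)) μ :=
    (hY.integrable one_le_two).ofReal.const_mul _
  have h_sq : Integrable (fun x ↦ ((Y x ^ 2 / 2 : ℝ) : ℂ)) μ :=
    (hY.integrable_sq.div_const 2).ofReal
  have h_affine : Integrable (fun x ↦ 1 - Complex.I * (Y x : ℂ)) μ :=
    (integrable_const _).sub h_lin
  have h_poly : Integrable (fun x ↦ 1 - Complex.I * (Y x : ℂ) - (Y x ^ 2 / 2 : ℝ)) μ :=
    h_affine.sub h_sq
  rw [integral_sub (integrable_wave hY.aemeasurable) h_poly, integral_sub h_affine h_sq,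
    integral_sub (integrable_const _) h_lin, integral_const_mul, integral_complex_ofReal,
    integral_complex_ofReal, integral_div]
  simp

lemma isLittleO_charFn_sub_gaussianCharFn {Ψ : Measure E3} [IsProbabilityMeasure Ψ]
    (h : MemLp id 2 Ψ) {κ : ℝ} (hκ : ∀ a, Var[fun v ↦ ⟪v, a⟫; Ψ] = κ * ‖a‖ ^ 2) :
    (fun ξ ↦ charFn Ψ ξ - gaussianCharFn (∫ v, v ∂Ψ) κ ξ) =o[𝓝 0] fun ξ ↦ ‖ξ‖ ^ 2 := by
  set u := ∫ v, v ∂Ψ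
  have hX : MemLp (fun v ↦ v - u) 2 Ψ := h.sub (memLp_const u)
  have h_exp := Complex.isLittleO_ofReal_left.2 (isLittleO_exp_neg_mul_norm_sq E3 (κ / 2))
  refine .of_norm_left <|
    ((isLittleO_integral_wave_sub_taylor hX).sub h_exp).norm_left.congr_left fun ξ ↦ ?_
  have h_expect : ∫ v, ⟪v, ξ⟫ ∂Ψ = ⟪u, ξ⟫ := by
    simp only [real_inner_comm ξ]
    exact integral_inner (h.integrable one_le_two) ξ
  have h_mean : ∫ v, ⟪v - u, ξ⟫ ∂Ψ = 0 := by
    simp only [inner_sub_left]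
    have h_int : Integrable (fun v ↦ ⟪v, ξ⟫) Ψ := (memLp_inner_const h ξ).integrable one_le_two
    rw [integral_sub h_int (integrable_const _), h_expect]
    simp
  have h_var : ∫ v, ⟪v - u, ξ⟫ ^ 2 ∂Ψ = κ * ‖ξ‖ ^ 2 := by
    rw [← hκ, variance_eq_integral (by fun_prop), h_expect]
    simp only [inner_sub_left]
  have h_factor : charFn Ψ ξ = wave ⟪u, ξ⟫ * ∫ v, wave ⟪v - u, ξ⟫ ∂Ψ := by
    simp only [charFn_eq_integral_wave, ← integral_const_mul, ← wave_add, ← inner_add_left,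
      add_sub_cancel]
  rw [integral_wave_sub_taylor (memLp_inner_const hX ξ), h_mean, h_var, h_factor, gaussianCharFn,
    ← mul_sub, norm_mul, norm_wave, one_mul]
  congr 1
  push_cast
  ring

lemma norm_mul_sub_mul_le {p q p' q' : ℂ} (hp : ‖p‖ ≤ 1) (hq' : ‖q'‖ ≤ 1) :
    ‖p * q - p' * q'‖ ≤ ‖p - p'‖ + ‖q - q'‖ := by
  have h : p * q - p' * q' = (p - p') * q' + p * (q - q') := by ring
  rw [h]
  refine (norm_add_le _ _).trans (add_le_add ?_ ?_)
  · rw [norm_mul]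
    exact mul_le_of_le_one_right (norm_nonneg _) hq'
  · rw [norm_mul]
    exact mul_le_of_le_one_left (norm_nonneg _) hp

lemma IsFrameAt.norm_charFn_sub_gaussianCharFn_le {L : E3 ≃ₗᵢ[ℝ] E3} {ξ : E3}
    (hL : IsFrameAt L ξ) {ω : E3} (hω : ω ∈ upperHemisphere) (Ψ : Measure E3)
    [IsProbabilityMeasure Ψ] (u : E3) {κ : ℝ} (hκ : 0 ≤ κ) :
    ‖charFn Ψ ξ - gaussianCharFn u κ ξ‖ ≤
      ‖charFn Ψ (freqPlus ξ (L ω)) - gaussianCharFn u κ (freqPlus ξ (L ω))‖ +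
        ‖charFn Ψ (freqMinus ξ (L ω)) - gaussianCharFn u κ (freqMinus ξ (L ω))‖ +
          ‖collisionDefect (charFn Ψ) ξ (L ω)‖ := by
  refine le_trans ?_ (add_le_add_left (norm_mul_sub_mul_le (norm_charFn_le_one Ψ _)
    (norm_gaussianCharFn_le_one u hκ _)) _)
  rw [hL.gaussianCharFn_mul hω]
  refine le_trans (le_of_eq ?_) (norm_sub_le _ _)
  rw [collisionDefect, sub_sub_sub_cancel_left]

lemma exists_charFn_eq_gaussianCharFn {m : Measure E3} (hm : IsAxialKernel m)
    (hs : ¬Integrable halfAngleSinSq m) {Ψ : Measure E3} [IsProbabilityMeasure Ψ]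
    (hΨ : ∀ ξ L, IsFrameAt L ξ → Integrable (fun ω ↦ collisionDefect (charFn Ψ) ξ (L ω)) m) :
    ∃ u κ, charFn Ψ = gaussianCharFn u κ := by
  obtain ⟨h_symm, κ, hκ⟩ := exists_secondMoment_symmetrization_eq hm hs hΨ
  have h := memLp_id_two_of_symmetrization h_symm
  have h_var (a : E3) : Var[fun v ↦ ⟪v, a⟫; Ψ] = κ * ‖a‖ ^ 2 := by
    linarith [hκ a, secondMoment_symmetrization h a]
  have hκ_nonneg : 0 ≤ κ := by simpa using (variance_nonneg _ Ψ).trans_eq (h_var pole)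
  set u := ∫ v, v ∂Ψ
  refine ⟨u, κ, funext fun η ↦ sub_eq_zero.1 <| norm_le_zero_iff.1 ?_⟩
  set D : E3 → ℝ := fun ξ ↦ ‖charFn Ψ ξ - gaussianCharFn u κ ξ‖
  have h_super : IsNearlySuperadditive (fun ξ ↦ -D ξ) ‖η‖ := by
    refine isNearlySuperadditive_of_not_integrable hm hs hΨ zero_le_one fun ξ _ L hL ω hω ↦ ?_
    linarith [hL.norm_charFn_sub_gaussianCharFn_le hω Ψ u hκ_nonneg]
  have h_cont : Continuous fun ξ ↦ -D ξ := by fun_prop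
  have h_le (ε : ℝ) (hε : 0 < ε) : -ε * ‖η‖ ^ 2 ≤ -D η := by
    obtain ⟨s, hs, h_near⟩ := nhds_basis_closedBall.eventually_iff.1
      ((isLittleO_charFn_sub_gaussianCharFn h h_var).def hε)
    refine h_super.mul_norm_sq_le h_cont.continuousOn hs (fun ξ hξ ↦ ?_) le_rfl
    have h := h_near (mem_closedBall_zero_iff.2 hξ)
    rw [Real.norm_of_nonneg (sq_nonneg _)] at h
    linarith
  refine le_of_forall_pos_le_add fun ε hε ↦ ?_
  have h := h_le (ε / (‖η‖ ^ 2 + 1)) (by positivity)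
  have h_frac : ε / (‖η‖ ^ 2 + 1) * ‖η‖ ^ 2 ≤ ε := by
    rw [div_mul_eq_mul_div, div_le_iff₀ (by positivity)]
    linarith
  linarith

theorem collisionDefect_charFn_eq_zero {m : Measure E3} (hm : IsAxialKernel m)
    (hs : ¬Integrable halfAngleSinSq m) {Ψ : Measure E3} [IsProbabilityMeasure Ψ]
    (hΨ : ∀ ξ L, IsFrameAt L ξ → Integrable (fun ω ↦ collisionDefect (charFn Ψ) ξ (L ω)) m)
    {L : E3 ≃ₗᵢ[ℝ] E3} {ξ : E3} (hL : IsFrameAt L ξ) {ω : E3} (hω : ω ∈ upperHemisphere) :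
    collisionDefect (charFn Ψ) ξ (L ω) = 0 := by
  obtain ⟨u, κ, h⟩ := exists_charFn_eq_gaussianCharFn hm hs hΨ
  rw [collisionDefect, h, hL.gaussianCharFn_mul hω, sub_self]

end GaussianLaw

section AngularDeficit

/-- `∫₀^{2π} (1 - cos(z cos φ)) dφ`: the cosine deficit of a vector of length `z`, averaged over the
rotations of the plane. -/
def angularDeficit (z : ℝ) : ℝ := ∫ φ in (0 : ℝ)..2 * π, (1 - cos (z * cos φ))

lemma integral_one_sub_cos_mul_cos_sub (z δ : ℝ) :
    ∫ φ in (0 : ℝ)..2 * π, (1 - cos (z * cos (φ - δ))) = angularDeficit z := by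
  have h_per : Function.Periodic (fun φ ↦ 1 - cos (z * cos φ)) (2 * π) := fun φ ↦ by simp
  rw [intervalIntegral.integral_comp_sub_right (fun φ ↦ 1 - cos (z * cos φ)), angularDeficit]
  simpa [sub_eq_neg_add] using h_per.intervalIntegral_add_eq (0 - δ) 0

lemma sq_mul_le_one_sub_cos {y : ℝ} (hy : |y| ≤ 1) : 2 / 5 * y ^ 2 ≤ 1 - cos y := by
  have h_cos := (abs_le.1 (Real.cos_bound hy)).2
  have h_sq : |y| ^ 2 ≤ 1 := pow_le_one₀ (abs_nonneg _) hy
  have h_four : |y| ^ 4 = y ^ 2 * |y| ^ 2 := by rw [← sq_abs y]; ring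
  nlinarith [sq_nonneg y]

lemma sq_le_angularDeficit {z : ℝ} (hz : |z| ≤ 1) : z ^ 2 ≤ angularDeficit z := by
  have h_le (φ : ℝ) : 2 / 5 * z ^ 2 * cos φ ^ 2 ≤ 1 - cos (z * cos φ) := by
    refine (le_of_eq (by ring)).trans (sq_mul_le_one_sub_cos (y := z * cos φ) ?_)
    rw [abs_mul]
    exact mul_le_one₀ hz (abs_nonneg _) (abs_cos_le_one φ)
  calc z ^ 2 ≤ 2 / 5 * z ^ 2 * π := by nlinarith [pi_gt_three, sq_nonneg z]
    _ = ∫ φ in (0 : ℝ)..2 * π, 2 / 5 * z ^ 2 * cos φ ^ 2 := by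
      rw [intervalIntegral.integral_const_mul, integral_cos_sq]
      simp
    _ ≤ angularDeficit z := intervalIntegral.integral_mono (by positivity)
      (Continuous.intervalIntegrable (by fun_prop) _ _)
      (Continuous.intervalIntegrable (by fun_prop) _ _) h_le

/-- A planar vector of length at most `2z` is the sum of two vectors of length `z`. -/
lemma angularDeficit_le_four_mul {z z' : ℝ} (hz : 0 < z) (hz' : 0 ≤ z') (h : z' ≤ 2 * z) :
    angularDeficit z' ≤ 4 * angularDeficit z := by
  set δ := arccos (z' / (2 * z))
  have h_cos : z' = 2 * z * cos δ := by
    rw [cos_arccos (by linarith [show 0 ≤ z' / (2 * z) by positivity])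
      ((div_le_one (by positivity)).2 h)]
    field_simp
  have h_le (φ : ℝ) : 1 - cos (z' * cos φ) ≤
      2 * (1 - cos (z * cos (φ - δ))) + 2 * (1 - cos (z * cos (φ - -δ))) := by
    have h_sum : z * cos (φ - δ) - -(z * cos (φ - -δ)) = z' * cos φ := by
      rw [sub_neg_eq_add φ, cos_sub, cos_add, h_cos]; ring
    simpa only [h_sum, cos_neg] using one_sub_cos_sub_le (z * cos (φ - δ)) (-(z * cos (φ - -δ)))
  have h_int := intervalIntegral.integral_mono (μ := volume) two_pi_pos.le
    (Continuous.intervalIntegrable (by fun_prop) _ _)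
    (Continuous.intervalIntegrable (by fun_prop) _ _) h_le
  rw [intervalIntegral.integral_add (Continuous.intervalIntegrable (by fun_prop) _ _)
    (Continuous.intervalIntegrable (by fun_prop) _ _), intervalIntegral.integral_const_mul,
    intervalIntegral.integral_const_mul, integral_one_sub_cos_mul_cos_sub,
    integral_one_sub_cos_mul_cos_sub] at h_int
  unfold angularDeficit at *
  linarith

lemma min_one_sq_le_angularDeficit {z : ℝ} (hz : 0 ≤ z) :
    min 1 (z ^ 2) ≤ 4 * angularDeficit z := by
  rcases le_total z 1 with h | h
  · have h_sq := sq_le_angularDeficit (abs_le.2 ⟨by linarith, h⟩)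
    linarith [min_le_right 1 (z ^ 2), sq_nonneg z]
  · calc min 1 (z ^ 2) ≤ 1 ^ 2 := by simp
      _ ≤ angularDeficit 1 := sq_le_angularDeficit (by simp)
      _ ≤ 4 * angularDeficit z :=
        angularDeficit_le_four_mul (by linarith) zero_le_one (by linarith)

lemma min_one_sq_add_sq_le_integral (A B : ℝ) :
    min 1 (A ^ 2 + B ^ 2) ≤
      4 * ∫ φ in (0 : ℝ)..2 * π, (1 - cos (A * cos φ + B * sin φ)) := by
  set w : ℂ := ⟨A, B⟩
  have h_polar (φ : ℝ) : A * cos φ + B * sin φ = ‖w‖ * cos (φ - w.arg) := by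
    have hA : ‖w‖ * cos w.arg = A := Complex.norm_mul_cos_arg w
    have hB : ‖w‖ * sin w.arg = B := Complex.norm_mul_sin_arg w
    rw [cos_sub, ← hA, ← hB]; ring
  have h_norm : A ^ 2 + B ^ 2 = ‖w‖ ^ 2 := by
    rw [← Complex.normSq_eq_norm_sq, Complex.normSq_apply]; ring
  simp_rw [h_polar, integral_one_sub_cos_mul_cos_sub, h_norm]
  exact min_one_sq_le_angularDeficit (norm_nonneg _)

end AngularDeficit

section GramDeterminant

variable {E : Type*} [NormedAddCommGroup E] [InnerProductSpace ℝ E]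

/-- The Gram determinant of `ξ` and `V`: the squared area of the parallelogram they span. -/
def gramDet (ξ V : E) : ℝ := ‖ξ‖ ^ 2 * ‖V‖ ^ 2 - ⟪V, ξ⟫ ^ 2

lemma gramDet_nonneg (ξ V : E) : 0 ≤ gramDet ξ V := by
  have h := real_inner_mul_inner_self_le V ξ
  rw [real_inner_self_eq_norm_sq, real_inner_self_eq_norm_sq] at h
  unfold gramDet
  linarith

@[fun_prop]
lemma continuous_gramDet (ξ : E) : Continuous (gramDet ξ) := by
  unfold gramDet; fun_prop

lemma norm_mem_Icc_of_norm_sub_smul_le {ρ : ℝ} (hρ : 0 ≤ ρ) {ξ d : E} (hd : ‖d‖ = 1)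
    (h : ‖ξ - ρ • d‖ ≤ ρ / 10) : ‖ξ‖ ∈ Icc (9 / 10 * ρ) (11 / 10 * ρ) := by
  have hρd : ‖ρ • d‖ = ρ := by rw [norm_smul, hd, Real.norm_of_nonneg hρ, mul_one]
  have h_abs := abs_le.1 (abs_norm_sub_norm_le ξ (ρ • d))
  rw [hρd] at h_abs
  constructor <;> linarith

lemma le_gramDet_of_norm_sub_smul_le {ρ : ℝ} (hρ : 0 ≤ ρ) {ξ d : E} (hd : ‖d‖ = 1)
    (h : ‖ξ - ρ • d‖ ≤ ρ / 10) (V : E) :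
    ρ ^ 2 * ((3 / 5) * ‖V‖ ^ 2 - ⟪V, d⟫ ^ 2) ≤ gramDet ξ V := by
  have h_norm : (9 / 10 * ρ) ^ 2 * ‖V‖ ^ 2 ≤ ‖ξ‖ ^ 2 * ‖V‖ ^ 2 := by
    gcongr; exact (norm_mem_Icc_of_norm_sub_smul_le hρ hd h).1
  have h_d : |⟪V, d⟫| ≤ ‖V‖ := by simpa [hd] using abs_real_inner_le_norm V d
  have h_inner : |⟪V, ξ⟫| ≤ ρ * |⟪V, d⟫| + ρ / 10 * ‖V‖ := by
    have h_split : ⟪V, ξ⟫ = ρ * ⟪V, d⟫ + ⟪V, ξ - ρ • d⟫ := by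
      rw [inner_sub_right, inner_smul_right]; ring
    rw [h_split]
    refine (abs_add_le _ _).trans (add_le_add (by rw [abs_mul, abs_of_nonneg hρ]) ?_)
    refine (abs_real_inner_le_norm _ _).trans ?_
    rw [mul_comm]; gcongr
  have h_sq : ⟪V, ξ⟫ ^ 2 ≤ (ρ * |⟪V, d⟫| + ρ / 10 * ‖V‖) ^ 2 := by rw [← sq_abs]; gcongr
  have h_cross : ρ ^ 2 * (|⟪V, d⟫| * ‖V‖) ≤ ρ ^ 2 * ‖V‖ ^ 2 := by
    rw [sq ‖V‖]; gcongr
  have h_sq_abs := sq_abs ⟪V, d⟫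
  unfold gramDet
  nlinarith

lemma le_gramDet_add_gramDet {ρ : ℝ} (hρ : 0 ≤ ρ) {ξ ξ' d d' : E} (hd : ‖d‖ = 1) (hd' : ‖d'‖ = 1)
    (hdd' : ⟪d, d'⟫ = 0) (h : ‖ξ - ρ • d‖ ≤ ρ / 10) (h' : ‖ξ' - ρ • d'‖ ≤ ρ / 10) (V : E) :
    1 / 5 * ρ ^ 2 * ‖V‖ ^ 2 ≤ gramDet ξ V + gramDet ξ' V := by
  have h_bessel : ⟪V, d⟫ ^ 2 + ⟪V, d'⟫ ^ 2 ≤ ‖V‖ ^ 2 := by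
    have h_ortho : Orthonormal ℝ ![d, d'] := by
      rw [orthonormal_iff_ite]
      intro i j
      fin_cases i <;> fin_cases j <;> simp [hd, hd', hdd', real_inner_comm]
    simpa [real_inner_comm] using h_ortho.sum_inner_products_le (s := Finset.univ) V
  have h_mul := mul_le_mul_of_nonneg_left h_bessel (sq_nonneg ρ)
  linarith [le_gramDet_of_norm_sub_smul_le hρ hd h V, le_gramDet_of_norm_sub_smul_le hρ hd' h' V]

end GramDeterminant

section PenalizedMax

lemma exists_penalized_max {E : Type*} [NormedAddCommGroup E] [ProperSpace E] {f : E → ℝ}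
    (hf : Continuous f) (hf01 : ∀ x, f x ∈ Icc 0 1) {ρ : ℝ} (hρ : 0 < ρ) {c : E}
    (hc : ‖c‖ ≤ 2 * ρ) :
    ∃ ξ, ‖ξ - c‖ ≤ ρ / 10 ∧ ∀ η, ‖η‖ ≤ 2 * ρ →
      f η ≤ f ξ + 100 / ρ ^ 2 * (‖η - c‖ ^ 2 - ‖ξ - c‖ ^ 2) := by
  obtain ⟨ξ, -, h_max⟩ := (isCompact_closedBall (0 : E) (2 * ρ)).exists_isMaxOn
    ⟨c, by simpa using hc⟩ (f := fun η ↦ f η - 100 / ρ ^ 2 * ‖η - c‖ ^ 2) (by fun_prop)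
  have h_le {η : E} (hη : ‖η‖ ≤ 2 * ρ) :
      f η - 100 / ρ ^ 2 * ‖η - c‖ ^ 2 ≤ f ξ - 100 / ρ ^ 2 * ‖ξ - c‖ ^ 2 :=
    h_max (by simpa using hη)
  refine ⟨ξ, le_of_sq_le_sq ?_ (by positivity), fun η hη ↦ by linarith [h_le hη]⟩
  have h_center := h_le hc
  rw [sub_self, norm_zero] at h_center
  have h_pen : 100 / ρ ^ 2 * ‖ξ - c‖ ^ 2 ≤ 1 := by linarith [(hf01 c).1, (hf01 ξ).2]
  rw [div_mul_eq_mul_div, div_le_one (by positivity)] at h_pen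
  linarith

end PenalizedMax

section TransversalDeficit

lemma IsFrameAt.norm_freqPlus_sub_sq_add {ξ : E3} {L : E3 ≃ₗᵢ[ℝ] E3} (hL : IsFrameAt L ξ)
    {ω : E3} (hω : ω ∈ upperHemisphere) (c : E3) :
    (‖freqPlus ξ (L ω) - c‖ ^ 2 - ‖ξ - c‖ ^ 2)
        + (‖freqPlus ξ (L (axialRotation π ω)) - c‖ ^ 2 - ‖ξ - c‖ ^ 2) =
      2 * halfAngleSinSq ω * (‖c‖ ^ 2 - ‖ξ - c‖ ^ 2) := by
  have h_inner : ⟪freqPlus ξ (L ω), c⟫ + ⟪freqPlus ξ (L (axialRotation π ω)), c⟫ =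
      2 * (1 - halfAngleSinSq ω) * ⟪ξ, c⟫ := by
    rw [← inner_add_left, hL.freqPlus_eq, hL.freqPlus_axialRotation_pi, add_add_sub_cancel,
      ← two_smul ℝ, smul_smul, real_inner_smul_left]
  simp only [@norm_sub_sq_real, hL.norm_freqPlus_sq hω,
    hL.norm_freqPlus_sq (axialRotation_mem_upperHemisphere hω π), halfAngleSinSq_axialRotation]
  linear_combination (-2) * h_inner

variable (Ψ : Measure E3) [IsProbabilityMeasure Ψ]

@[fun_prop]
lemma continuous_cosDeficit_symmetrization : Continuous (cosDeficit (symmetrization Ψ)) := by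
  have h : cosDeficit (symmetrization Ψ) = fun ξ ↦ 1 - ‖charFn Ψ ξ‖ ^ 2 := by
    ext ξ; rw [norm_charFn_sq]; ring
  rw [h]
  fun_prop

lemma half_cosDeficit_freqMinus_le {ξ σ : E3} (h : 1 / 2 ≤ ‖charFn Ψ (freqPlus ξ σ)‖ ^ 2) :
    1 / 2 * cosDeficit (symmetrization Ψ) (freqMinus ξ σ) ≤
      ‖charFn Ψ (freqPlus ξ σ)‖ ^ 2 - ‖charFn Ψ ξ‖ ^ 2
        + 2 * ‖collisionDefect (charFn Ψ) ξ σ‖ := by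
  have h_defect := (abs_le.1 (abs_norm_sq_sub_norm_sq_mul_le
    (norm_charFn_le_one Ψ (freqPlus ξ σ)) (norm_charFn_le_one Ψ (freqMinus ξ σ))
    (norm_charFn_le_one Ψ ξ))).2
  rw [norm_charFn_sq Ψ (freqMinus ξ σ)] at h_defect
  unfold collisionDefect
  linarith [mul_le_mul_of_nonneg_right h
    (cosDeficit_nonneg (symmetrization Ψ) (freqMinus ξ σ))]

/-- Near a maximum of a penalized `|ψ|²`, the two collision outcomes related by a half-turn cannot
both gain on `|ψ(ξ)|²`, so `|ψ(ξ⁻)|²` is forced close to `1` for both of them. -/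
lemma cosDeficit_two_smul_transversal_le {ρ : ℝ} (hρ : 0 < ρ)
    (hΨ : ∀ η, ‖η‖ ≤ 2 * ρ → 1 / 2 ≤ ‖charFn Ψ η‖ ^ 2) {c ξ : E3} (hc : ‖c‖ = ρ)
    (hξ : ‖ξ‖ ≤ 2 * ρ) (h_max : ∀ η, ‖η‖ ≤ 2 * ρ → ‖charFn Ψ η‖ ^ 2 ≤
      ‖charFn Ψ ξ‖ ^ 2 + 100 / ρ ^ 2 * (‖η - c‖ ^ 2 - ‖ξ - c‖ ^ 2))
    {L : E3 ≃ₗᵢ[ℝ] E3} (hL : IsFrameAt L ξ) {ω : E3} (hω : ω ∈ upperHemisphere) :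
    cosDeficit (symmetrization Ψ) ((2 : ℝ) • transversal ξ L ω) ≤
      4 * (200 * halfAngleSinSq ω + 2 * ‖collisionDefect (charFn Ψ) ξ (L ω)‖
        + 2 * ‖collisionDefect (charFn Ψ) ξ (L (axialRotation π ω))‖) := by
  have hω' := axialRotation_mem_upperHemisphere hω π
  have hp := (hL.norm_freqPlus_le hω).trans hξ
  have hp' := (hL.norm_freqPlus_le hω').trans hξ
  have h_split := cosDeficit_sub_le (symmetrization Ψ)
    (freqMinus ξ (L (axialRotation π ω))) (freqMinus ξ (L ω))
  have h_diff : freqMinus ξ (L (axialRotation π ω)) - freqMinus ξ (L ω) =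
      (2 : ℝ) • transversal ξ L ω := by
    rw [hL.freqMinus_axialRotation_pi, hL.freqMinus_eq]; module
  have h_pen : 100 / ρ ^ 2 * (‖freqPlus ξ (L ω) - c‖ ^ 2 - ‖ξ - c‖ ^ 2)
      + 100 / ρ ^ 2 * (‖freqPlus ξ (L (axialRotation π ω)) - c‖ ^ 2 - ‖ξ - c‖ ^ 2) ≤
        200 * halfAngleSinSq ω := by
    rw [← mul_add, hL.norm_freqPlus_sub_sq_add hω, hc, div_mul_eq_mul_div,
      div_le_iff₀ (by positivity)]
    linarith [mul_nonneg (halfAngleSinSq_nonneg hω) (sq_nonneg ‖ξ - c‖)]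
  rw [h_diff] at h_split
  linarith [half_cosDeficit_freqMinus_le Ψ (hΨ _ hp), half_cosDeficit_freqMinus_le Ψ (hΨ _ hp'),
    h_max _ hp, h_max _ hp']

variable {m : Measure E3} (hm : IsAxialKernel m) (hs : Integrable halfAngleSinSq m)
  (hΨ : ∀ ξ L, IsFrameAt L ξ → Integrable (fun ω ↦ collisionDefect (charFn Ψ) ξ (L ω)) m)
include hm hs hΨ

lemma exists_integrable_cosDeficit_transversal {ρ : ℝ} (hρ : 0 < ρ)
    (hΨρ : ∀ η, ‖η‖ ≤ 2 * ρ → 1 / 2 ≤ ‖charFn Ψ η‖ ^ 2) {d : E3} (hd : ‖d‖ = 1) :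
    ∃ ξ, ‖ξ - ρ • d‖ ≤ ρ / 10 ∧ ∃ L, IsFrameAt L ξ ∧
      Integrable (fun ω ↦ cosDeficit (symmetrization Ψ) ((2 : ℝ) • transversal ξ L ω)) m := by
  have hc : ‖ρ • d‖ = ρ := by rw [norm_smul, hd, Real.norm_of_nonneg hρ.le, mul_one]
  obtain ⟨ξ, hξ, h_max⟩ := exists_penalized_max (f := fun η ↦ ‖charFn Ψ η‖ ^ 2) (by fun_prop)
    (fun η ↦ ⟨by positivity, pow_le_one₀ (norm_nonneg _) (norm_charFn_le_one Ψ η)⟩) hρ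
    (hc.trans_le (by linarith))
  have hL := isFrameAt_frame ξ
  refine ⟨ξ, hξ, frame ξ, hL, ((((hs.const_mul 200).add ((hΨ ξ _ hL).norm.const_mul 2)).add
    ((hΨ ξ _ (hL.precomp (axialRotation_pole π))).norm.const_mul 2)).const_mul 4).mono' ?_ ?_⟩
  · unfold transversal
    exact Continuous.aestronglyMeasurable (by fun_prop)
  · filter_upwards [hm.ae_mem] with ω hω
    rw [Real.norm_of_nonneg (cosDeficit_nonneg _ _)]
    exact cosDeficit_two_smul_transversal_le Ψ hρ hΨρ hc
      (by linarith [(norm_mem_Icc_of_norm_sub_smul_le hρ.le hd hξ).2]) h_max hL hω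

end TransversalDeficit

section RotationAverage

variable {ξ : E3} {L : E3 ≃ₗᵢ[ℝ] E3}

lemma IsFrameAt.exists_inner_transversal_axialRotation (hL : IsFrameAt L ξ) {ω : E3}
    (hω : ‖ω‖ = 1) (V : E3) :
    ∃ A B : ℝ, A ^ 2 + B ^ 2 = 4 * (halfAngleSinSq ω * (1 - halfAngleSinSq ω)) * gramDet ξ V ∧
      ∀ φ, ⟪V, (2 : ℝ) • transversal ξ L (axialRotation φ ω)⟫ = A * cos φ + B * sin φ := by
  obtain ⟨w, rfl⟩ := L.surjective V
  have h_inner (x y : E3) : ⟪x, y⟫ = x 0 * y 0 + x 1 * y 1 + x 2 * y 2 := by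
    simp [PiLp.inner_apply, Fin.sum_univ_three, mul_comm]
  have h_norm (x : E3) : ‖x‖ ^ 2 = x 0 ^ 2 + x 1 ^ 2 + x 2 ^ 2 := by
    rw [EuclideanSpace.real_norm_sq_eq, Fin.sum_univ_three]
  have h_axis : ⟪L w, ξ⟫ = ‖ξ‖ * w 0 := by
    nth_rewrite 1 [← hL]
    rw [inner_smul_right, L.inner_map_map, inner_pole_right]
  have hω_sq : ω 0 ^ 2 + ω 1 ^ 2 + ω 2 ^ 2 = 1 := by rw [← h_norm, hω, one_pow]
  refine ⟨‖ξ‖ * (w 1 * ω 1 + w 2 * ω 2), ‖ξ‖ * (w 2 * ω 1 - w 1 * ω 2), ?_, fun φ ↦ ?_⟩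
  · rw [gramDet, h_axis, L.norm_map, h_norm w, halfAngleSinSq]
    linear_combination ‖ξ‖ ^ 2 * (w 1 ^ 2 + w 2 ^ 2) * hω_sq
  · rw [transversal, smul_smul, inner_smul_right, L.inner_map_map, h_inner]
    simp [axialRotation_apply]
    ring

lemma integrable_min_one {X : Type*} [MeasurableSpace X] {μ : Measure X} [IsFiniteMeasure μ]
    {f : X → ℝ} (hf : AEStronglyMeasurable f μ) (hf_nonneg : ∀ x, 0 ≤ f x) :
    Integrable (fun x ↦ min 1 (f x)) μ := by
  refine .of_bound (aestronglyMeasurable_const.inf hf) 1 (.of_forall fun x ↦ ?_)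
  rw [Real.norm_of_nonneg (le_min zero_le_one (hf_nonneg x))]
  exact min_le_left _ _

@[fun_prop]
lemma continuous_transversal (ξ : E3) (L : E3 ≃ₗᵢ[ℝ] E3) : Continuous (transversal ξ L) := by
  unfold transversal; fun_prop

lemma IsFrameAt.integral_min_one_gramDet_le (hL : IsFrameAt L ξ) {ω : E3}
    (hω : ω ∈ upperHemisphere) (Θ : Measure E3) [IsProbabilityMeasure Θ] :
    ∫ V, min 1 (2 * halfAngleSinSq ω * gramDet ξ V) ∂Θ ≤
      4 * ∫ φ in Ioc 0 (2 * π), cosDeficit Θ ((2 : ℝ) • transversal ξ L (axialRotation φ ω)) := by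
  have hs := halfAngleSinSq_nonneg hω
  have h_rot := continuous_axialRotation
  have h_int : Integrable (Function.uncurry fun (φ : ℝ) (V : E3) ↦
      1 - cos ⟪V, (2 : ℝ) • transversal ξ L (axialRotation φ ω)⟫)
      ((volume.restrict (Ioc 0 (2 * π))).prod Θ) :=
    (integrable_const 1).sub (.of_bound (Continuous.aestronglyMeasurable (by fun_prop)) 1
      (.of_forall fun _ ↦ abs_cos_le_one _))
  have h_swap : ∫ φ in Ioc 0 (2 * π),
      cosDeficit Θ ((2 : ℝ) • transversal ξ L (axialRotation φ ω)) =
        ∫ V, (∫ φ in Ioc 0 (2 * π),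
          (1 - cos ⟪V, (2 : ℝ) • transversal ξ L (axialRotation φ ω)⟫)) ∂Θ :=
    integral_integral_swap h_int
  rw [h_swap, ← integral_const_mul]
  refine integral_mono (integrable_min_one (by fun_prop) fun V ↦
    mul_nonneg (by positivity) (gramDet_nonneg ξ V)) (h_int.integral_prod_right.const_mul 4)
    fun V ↦ ?_
  obtain ⟨A, B, hAB, h_inner⟩ := hL.exists_inner_transversal_axialRotation hω.1 V
  simp only [h_inner]
  rw [← intervalIntegral.integral_of_le two_pi_pos.le]
  refine le_trans (min_le_min_left 1 ?_) (min_one_sq_add_sq_le_integral A B)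
  rw [hAB]
  refine mul_le_mul_of_nonneg_right ?_ (gramDet_nonneg ξ V)
  nlinarith [halfAngleSinSq_le_half hω]

variable (Ψ : Measure E3) [IsProbabilityMeasure Ψ] {m : Measure E3} [SFinite m]
  (hm : IsAxialKernel m)
include hm

lemma IsFrameAt.integrable_min_one_gramDet (hL : IsFrameAt L ξ)
    (h : Integrable (fun ω ↦ cosDeficit (symmetrization Ψ) ((2 : ℝ) • transversal ξ L ω)) m) :
    Integrable (fun ω ↦
      ∫ V, min 1 (2 * halfAngleSinSq ω * gramDet ξ V) ∂(symmetrization Ψ)) m := by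
  have h_rot := continuous_axialRotation
  have h_prod : Integrable (fun p : ℝ × E3 ↦ cosDeficit (symmetrization Ψ)
      ((2 : ℝ) • transversal ξ L (axialRotation p.1 p.2)))
      ((volume.restrict (Ioc 0 (2 * π))).prod m) := by
    rw [integrable_prod_iff (Continuous.aestronglyMeasurable (by fun_prop))]
    refine ⟨.of_forall fun φ ↦ (hm.integrable_comp (axialRotation_pole φ)).2 h, ?_⟩
    simp only [fun φ ↦ hm.integral_comp (axialRotation_pole φ) fun ω ↦
      ‖cosDeficit (symmetrization Ψ) ((2 : ℝ) • transversal ξ L ω)‖]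
    exact integrable_const _
  refine (h_prod.integral_prod_right.const_mul 4).mono' ?_ ?_
  · exact (StronglyMeasurable.integral_prod_right (f := fun (ω V : E3) ↦
      min 1 (2 * halfAngleSinSq ω * gramDet ξ V))
      (Continuous.stronglyMeasurable (by unfold Function.uncurry; fun_prop))).aestronglyMeasurable
  · filter_upwards [hm.ae_mem] with ω hω
    have hs := halfAngleSinSq_nonneg hω
    rw [Real.norm_of_nonneg (integral_nonneg fun V ↦ le_min zero_le_one
      (mul_nonneg (by positivity) (gramDet_nonneg ξ V)))]
    exact hL.integral_min_one_gramDet_le hω _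

end RotationAverage

section TailFunctional

lemma min_one_add_le {a b : ℝ} (ha : 0 ≤ a) (hb : 0 ≤ b) : min 1 (a + b) ≤ min 1 a + min 1 b := by
  rcases le_total 1 a with h1 | h1 <;> rcases le_total 1 b with h2 | h2 <;>
    simp only [min_eq_left, min_eq_right, h1, h2] <;>
    first | exact min_le_right _ _ | exact (min_le_left _ _).trans (by linarith)

lemma mul_min_one_le {c y : ℝ} (hc : 0 ≤ c) (hc1 : c ≤ 1) (hy : 0 ≤ y) :
    c * min 1 y ≤ min 1 (c * y) :=
  le_min (mul_le_one₀ hc1 (le_min zero_le_one hy) (min_le_left _ _))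
    (mul_le_mul_of_nonneg_left (min_le_right _ _) hc)

lemma gaussianDeficit_le_integral_min_one (Θ : Measure E3) [IsProbabilityMeasure Θ] {S : ℝ}
    (hS : 0 ≤ S) : gaussianDeficit Θ S ≤ ∫ V, min 1 (S * ‖V‖ ^ 2) ∂Θ := by
  refine integral_mono (integrable_gaussianDeficit Θ hS)
    (integrable_min_one (by fun_prop) fun V ↦ by positivity) fun V ↦ le_min ?_ ?_
  · exact (one_sub_exp_neg_mem_Icc (by positivity)).2
  · linarith [add_one_le_exp (-(S * ‖V‖ ^ 2))]

lemma stronglyMeasurable_gaussianDeficit_halfAngleSinSq (Θ : Measure E3) [SFinite Θ] :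
    StronglyMeasurable fun ω ↦ gaussianDeficit Θ (halfAngleSinSq ω) :=
  StronglyMeasurable.integral_prod_right
    (f := fun (ω V : E3) ↦ 1 - exp (-(halfAngleSinSq ω * ‖V‖ ^ 2)))
    (Continuous.stronglyMeasurable (by unfold Function.uncurry; fun_prop))

lemma mul_gaussianDeficit_le {ρ : ℝ} {ξ ξ' : E3}
    (h_gram : ∀ V, 1 / 5 * ρ ^ 2 * ‖V‖ ^ 2 ≤ gramDet ξ V + gramDet ξ' V) (Θ : Measure E3)
    [IsProbabilityMeasure Θ] {s : ℝ} (hs : 0 ≤ s) :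
    min 1 (2 / 5 * ρ ^ 2) * gaussianDeficit Θ s ≤
      ∫ V, min 1 (2 * s * gramDet ξ V) ∂Θ + ∫ V, min 1 (2 * s * gramDet ξ' V) ∂Θ := by
  set c := min 1 (2 / 5 * ρ ^ 2)
  have hc : 0 ≤ c := le_min zero_le_one (by positivity)
  have h_nonneg (ξ V : E3) : 0 ≤ 2 * s * gramDet ξ V :=
    mul_nonneg (by positivity) (gramDet_nonneg ξ V)
  have h_int (ξ : E3) : Integrable (fun V ↦ min 1 (2 * s * gramDet ξ V)) Θ :=
    integrable_min_one (by fun_prop) (h_nonneg ξ)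
  calc c * gaussianDeficit Θ s
      ≤ ∫ V, c * min 1 (s * ‖V‖ ^ 2) ∂Θ := by
        rw [integral_const_mul]
        gcongr
        exact gaussianDeficit_le_integral_min_one Θ hs
    _ ≤ ∫ V, (min 1 (2 * s * gramDet ξ V) + min 1 (2 * s * gramDet ξ' V)) ∂Θ := by
        refine integral_mono
          ((integrable_min_one (by fun_prop) fun V ↦ by positivity).const_mul c)
          ((h_int ξ).add (h_int ξ')) fun V ↦ ?_
        calc c * min 1 (s * ‖V‖ ^ 2)
            ≤ min 1 (c * (s * ‖V‖ ^ 2)) := mul_min_one_le hc (min_le_left _ _) (by positivity)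
          _ ≤ min 1 (2 / 5 * ρ ^ 2 * (s * ‖V‖ ^ 2)) := by gcongr; exact min_le_right _ _
          _ ≤ min 1 (2 * s * gramDet ξ V + 2 * s * gramDet ξ' V) := by
            refine min_le_min_left 1 ?_
            linarith [mul_le_mul_of_nonneg_left (h_gram V) (show 0 ≤ 2 * s by positivity)]
          _ ≤ _ := min_one_add_le (h_nonneg ξ V) (h_nonneg ξ' V)
    _ = _ := integral_add (h_int ξ) (h_int ξ')

lemma exists_half_le_norm_charFn_sq (Ψ : Measure E3) [IsProbabilityMeasure Ψ] :
    ∃ ρ > 0, ∀ η, ‖η‖ ≤ 2 * ρ → 1 / 2 ≤ ‖charFn Ψ η‖ ^ 2 := by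
  have h_cont : ContinuousAt (fun η ↦ ‖charFn Ψ η‖ ^ 2) 0 := by fun_prop
  have h_zero : (1 / 2 : ℝ) < ‖charFn Ψ 0‖ ^ 2 := by rw [charFn_zero]; norm_num
  obtain ⟨ε, hε, h⟩ := Metric.eventually_nhds_iff.1 (h_cont.eventually (lt_mem_nhds h_zero))
  exact ⟨ε / 4, by positivity, fun η hη ↦ (h (by rw [dist_zero_right]; linarith)).le⟩

theorem integrable_gaussianDeficit_halfAngleSinSq {m : Measure E3} [SFinite m]
    (hm : IsAxialKernel m) (hs : Integrable halfAngleSinSq m) (Ψ : Measure E3)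
    [IsProbabilityMeasure Ψ]
    (hΨ : ∀ ξ L, IsFrameAt L ξ → Integrable (fun ω ↦ collisionDefect (charFn Ψ) ξ (L ω)) m) :
    Integrable (fun ω ↦ gaussianDeficit (symmetrization Ψ) (halfAngleSinSq ω)) m := by
  obtain ⟨ρ, hρ, hΨρ⟩ := exists_half_le_norm_charFn_sq Ψ
  set d : E3 := EuclideanSpace.single 1 1
  set d' : E3 := EuclideanSpace.single 2 1
  have hd : ‖d‖ = 1 := by simp [d]
  have hd' : ‖d'‖ = 1 := by simp [d']
  have hdd' : ⟪d, d'⟫ = 0 := by simp [d, d', EuclideanSpace.inner_single_left]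
  obtain ⟨ξ, hξ, L, hL, h_int⟩ := exists_integrable_cosDeficit_transversal Ψ hm hs hΨ hρ hΨρ hd
  obtain ⟨ξ', hξ', L', hL', h_int'⟩ :=
    exists_integrable_cosDeficit_transversal Ψ hm hs hΨ hρ hΨρ hd'
  have h_gram := le_gramDet_add_gramDet hρ.le hd hd' hdd' hξ hξ'
  have hc : 0 < min 1 (2 / 5 * ρ ^ 2) := by positivity
  refine (((hL.integrable_min_one_gramDet Ψ hm h_int).add
    (hL'.integrable_min_one_gramDet Ψ hm h_int')).const_mul (min 1 (2 / 5 * ρ ^ 2))⁻¹).mono'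
    (stronglyMeasurable_gaussianDeficit_halfAngleSinSq _).aestronglyMeasurable ?_
  filter_upwards [hm.ae_mem] with ω hω
  have hs := halfAngleSinSq_nonneg hω
  rw [Real.norm_of_nonneg (gaussianDeficit_nonneg _ hs), Pi.add_apply, ← div_eq_inv_mul,
    le_div_iff₀' hc]
  exact mul_gaussianDeficit_le h_gram _ hs

end TailFunctional

section IsotropicMeasures

variable {E : Type*} [NormedAddCommGroup E] [InnerProductSpace ℝ E] [MeasurableSpace E]
  [BorelSpace E]

/-- A measure is isotropic if every linear isometry preserves it. -/
def IsIsotropic (μ : Measure E) : Prop := ∀ R : E ≃ₗᵢ[ℝ] E, MeasurePreserving R μ μ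

omit [MeasurableSpace E] [BorelSpace E] in
lemma exists_isometry_apply_eq {x y : E} (h : ‖x‖ = ‖y‖) : ∃ R : E ≃ₗᵢ[ℝ] E, R x = y :=
  ⟨(Submodule.span ℝ {x - y})ᗮ.reflection, Submodule.reflection_sub h⟩

lemma IsIsotropic.charFun_eq_of_norm_eq {μ : Measure E} (hμ : IsIsotropic μ) {V W : E}
    (h : ‖V‖ = ‖W‖) : charFun μ V = charFun μ W := by
  obtain ⟨R, rfl⟩ := exists_isometry_apply_eq h
  rw [charFun_apply, charFun_apply,
    ← (hμ R).integral_comp R.toHomeomorph.measurableEmbedding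
      fun x ↦ Complex.exp (⟪x, R V⟫ * Complex.I)]
  simp only [R.inner_map_map]

variable [FiniteDimensional ℝ E]

lemma isIsotropic_ambientSphereMeasure : IsIsotropic (ambientSphereMeasure E) :=
  measurePreserving_ambientSphereMeasure

lemma ambientSphereMeasure_real_univ_ne_zero [Nontrivial E] :
    (ambientSphereMeasure E).real univ ≠ 0 := by
  rw [ambientSphereMeasure, map_measureReal_apply measurable_subtype_coe .univ, preimage_univ]
  exact (measureReal_eq_zero_iff).not.2
    (Measure.measure_univ_ne_zero.2 (Measure.toSphere_ne_zero (volume : Measure E)))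

-- Averaging over the direction of the frequency turns the kernel `exp (i⟪x, V⟫)` into a function
-- of `‖x‖` alone.
lemma IsIsotropic.measureReal_smul_charFun [Nontrivial E] {μ : Measure E} [IsFiniteMeasure μ]
    (hμ : IsIsotropic μ) (V : E) {e : E} (he : ‖e‖ = 1) :
    (ambientSphereMeasure E).real univ • charFun μ V =
      ∫ r, charFun (ambientSphereMeasure E) ((r * ‖V‖) • e) ∂(μ.map (‖·‖)) := by
  have h_int : Integrable (Function.uncurry fun (u x : E) ↦
      Complex.exp (⟪x, ‖V‖ • u⟫ * Complex.I)) ((ambientSphereMeasure E).prod μ) :=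
    .of_bound (Continuous.aestronglyMeasurable (by unfold Function.uncurry; fun_prop)) 1
      (.of_forall fun p ↦ by simp [Function.uncurry, Complex.norm_exp_ofReal_mul_I])
  calc (ambientSphereMeasure E).real univ • charFun μ V
      = ∫ u, charFun μ (‖V‖ • u) ∂(ambientSphereMeasure E) := by
        rw [← integral_const]
        refine integral_congr_ae ?_
        filter_upwards [ae_norm_eq_one_ambientSphereMeasure] with u hu
        exact hμ.charFun_eq_of_norm_eq (by simp [norm_smul, hu])
    _ = ∫ x, charFun (ambientSphereMeasure E) (‖V‖ • x) ∂μ := by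
        simp only [charFun_apply]
        rw [integral_integral_swap h_int]
        simp only [real_inner_smul_right, real_inner_comm]
    _ = ∫ x, charFun (ambientSphereMeasure E) ((‖x‖ * ‖V‖) • e) ∂μ := by
        congr with x
        exact isIsotropic_ambientSphereMeasure.charFun_eq_of_norm_eq
          (by simp [norm_smul, he, mul_comm])
    _ = ∫ r, charFun (ambientSphereMeasure E) ((r * ‖V‖) • e) ∂(μ.map (‖·‖)) := by
        rw [integral_map measurable_norm.aemeasurable]
        exact (stronglyMeasurable_charFun.measurable.comp (by fun_prop)).aestronglyMeasurable

theorem IsIsotropic.ext_of_map_norm_eq [Nontrivial E] {μ ν : Measure E} [IsFiniteMeasure μ]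
    [IsFiniteMeasure ν] (hμ : IsIsotropic μ) (hν : IsIsotropic ν)
    (h : μ.map (‖·‖) = ν.map (‖·‖)) : μ = ν := by
  obtain ⟨e, he⟩ := exists_norm_eq E zero_le_one
  refine Measure.ext_of_charFun (funext fun V ↦ ?_)
  refine smul_right_injective ℂ (ambientSphereMeasure_real_univ_ne_zero (E := E)) ?_
  simp only [hμ.measureReal_smul_charFun V he, hν.measureReal_smul_charFun V he, h]

end IsotropicMeasures

section Gaussian

variable {E : Type*} [NormedAddCommGroup E] [InnerProductSpace ℝ E] [MeasurableSpace E]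
  [BorelSpace E] [FiniteDimensional ℝ E]

variable (E) in
/-- The centred isotropic Gaussian measure with Fourier transform `exp (-S‖V‖²)`, for `S ≥ 0`. -/
def heatGaussian (S : ℝ) : Measure E := (ProbabilityTheory.stdGaussian E).map (√(2 * S) • ·)

instance (S : ℝ) : IsProbabilityMeasure (heatGaussian E S) :=
  Measure.isProbabilityMeasure_map (by fun_prop)

lemma isIsotropic_heatGaussian (S : ℝ) : IsIsotropic (heatGaussian E S) := fun R ↦ by
  refine ⟨R.continuous.measurable, ?_⟩
  have h_comm : R ∘ (√(2 * S) • ·) = (√(2 * S) • ·) ∘ R := funext fun x ↦ map_smul R _ x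
  have hR : Measurable R := R.continuous.measurable
  rw [heatGaussian, Measure.map_map hR (by fun_prop), h_comm,
    ← Measure.map_map (by fun_prop) hR, ProbabilityTheory.stdGaussian_map]

lemma map_smul_heatGaussian {c S : ℝ} (hc : 0 ≤ c) :
    (heatGaussian E S).map (√c • ·) = heatGaussian E (c * S) := by
  rw [heatGaussian, heatGaussian, Measure.map_map (by fun_prop) (by fun_prop)]
  congr 1 with x
  simp only [Function.comp_apply, smul_smul]
  rw [← sqrt_mul hc, show c * (2 * S) = 2 * (c * S) by ring]

lemma integrable_norm_sq_heatGaussian (S : ℝ) :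
    Integrable (fun ξ ↦ ‖ξ‖ ^ 2) (heatGaussian E S) := by
  rw [heatGaussian, integrable_map_measure (by fun_prop) (by fun_prop)]
  have h_sq : Integrable (fun x ↦ ‖x‖ ^ 2) (ProbabilityTheory.stdGaussian E) :=
    (ProbabilityTheory.IsGaussian.memLp_id _ 2 (by simp)).integrable_norm_pow (by simp)
  refine (h_sq.const_mul (√(2 * S) ^ 2)).congr (.of_forall fun x ↦ ?_)
  simp [norm_smul, mul_pow]

lemma integral_cos_inner_heatGaussian {S : ℝ} (hS : 0 ≤ S) (V : E) :
    ∫ ξ, cos ⟪V, ξ⟫ ∂(heatGaussian E S) = exp (-(S * ‖V‖ ^ 2)) := by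
  have h_charFun : charFun (heatGaussian E S) V = (exp (-(S * ‖V‖ ^ 2)) : ℝ) := by
    rw [heatGaussian, charFun_map_smul, ProbabilityTheory.charFun_stdGaussian, norm_smul,
      norm_of_nonneg (sqrt_nonneg _), ← Complex.ofReal_pow, mul_pow, sq_sqrt (by positivity)]
    push_cast
    ring_nf
  rw [← Complex.ofReal_re (exp _), ← h_charFun, charFun_apply, ← RCLike.re_eq_complex_re,
    ← integral_re]
  · simp [Complex.exp_ofReal_mul_I_re, real_inner_comm]
  · exact .of_bound (by fun_prop) 1 (.of_forall fun x ↦ by simp [Complex.norm_exp_ofReal_mul_I])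

lemma integral_cosDeficit_heatGaussian (Θ : Measure E) [IsFiniteMeasure Θ] {S : ℝ} (hS : 0 ≤ S) :
    ∫ ξ, cosDeficit Θ ξ ∂(heatGaussian E S) = gaussianDeficit Θ S := by
  have h_int : Integrable (Function.uncurry fun (ξ V : E) ↦ 1 - cos ⟪V, ξ⟫)
      ((heatGaussian E S).prod Θ) :=
    (integrable_const 1).sub (.of_bound (Continuous.aestronglyMeasurable (by fun_prop)) 1
      (.of_forall fun p ↦ abs_cos_le_one _))
  have h_cos (V : E) : Integrable (fun ξ ↦ cos ⟪V, ξ⟫) (heatGaussian E S) :=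
    .of_bound (by fun_prop) 1 (.of_forall fun p ↦ abs_cos_le_one _)
  simp only [cosDeficit, gaussianDeficit]
  rw [integral_integral_swap h_int]
  congr with V
  rw [integral_sub (integrable_const 1) (h_cos V), integral_cos_inner_heatGaussian hS]
  simp

end Gaussian

section ScatteredGaussian

variable {m : Measure E3}

lemma measurable_freqPlus_frame : Measurable fun p : E3 × E3 ↦ freqPlus p.1 (frame p.1 p.2) := by
  have h := measurable_frame
  unfold freqPlus
  fun_prop

lemma IsAxialKernel.map_freqPlus_eq (hm : IsAxialKernel m) {ξ : E3} {L L' : E3 ≃ₗᵢ[ℝ] E3}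
    (hL : IsFrameAt L ξ) (hL' : IsFrameAt L' ξ) :
    m.map (fun ω ↦ freqPlus ξ (L ω)) = m.map (fun ω ↦ freqPlus ξ (L' ω)) := by
  rcases eq_or_ne ξ 0 with rfl | hξ
  · simp
  have h_pole : L' pole = L pole := by
    rw [hL.map_pole hξ, hL'.map_pole hξ]
  have h_fix : L'.trans L.symm pole = pole := by simp [h_pole]
  have h_cont : Continuous fun ω ↦ freqPlus ξ (L ω) := by unfold freqPlus; fun_prop
  nth_rewrite 1 [← (hm.measurePreserving _ h_fix).map_eq]
  rw [Measure.map_map h_cont.measurable (hm.measurePreserving _ h_fix).measurable]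
  congr 1 with ω
  simp

lemma freqPlus_map (R : E3 ≃ₗᵢ[ℝ] E3) (ξ σ : E3) : freqPlus (R ξ) (R σ) = R (freqPlus ξ σ) := by
  simp [freqPlus]

lemma IsIsotropic.map_freqPlus [SFinite m] (hm : IsAxialKernel m) {μ : Measure E3} [SFinite μ]
    (hμ : IsIsotropic μ) :
    IsIsotropic ((μ.prod m).map fun p ↦ freqPlus p.1 (frame p.1 p.2)) := fun R ↦ by
  have h_meas (ξ : E3) (L : E3 ≃ₗᵢ[ℝ] E3) : Measurable fun ω ↦ freqPlus ξ (L ω) := by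
    unfold freqPlus; fun_prop
  refine ⟨R.continuous.measurable, Measure.ext fun A hA ↦ ?_⟩
  have hRA : MeasurableSet (R ⁻¹' A) := R.continuous.measurable hA
  have h_fiber (ξ : E3) : m ((fun ω ↦ freqPlus ξ (frame ξ ω)) ⁻¹' (R ⁻¹' A)) =
      m ((fun ω ↦ freqPlus (R ξ) (frame (R ξ) ω)) ⁻¹' A) := by
    have h_frame := hm.map_freqPlus_eq ((isFrameAt_frame ξ).postcomp R) (isFrameAt_frame (R ξ))
    rw [← Measure.map_apply (h_meas _ _) hA, ← h_frame, Measure.map_apply (h_meas _ _) hA]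
    simp [preimage_preimage, freqPlus_map]
  rw [Measure.map_apply R.continuous.measurable hA,
    Measure.map_apply measurable_freqPlus_frame hA, Measure.map_apply measurable_freqPlus_frame hRA,
    Measure.prod_apply (measurable_freqPlus_frame hA),
    Measure.prod_apply (measurable_freqPlus_frame hRA)]
  refine (lintegral_congr h_fiber).trans ?_
  exact (hμ R).lintegral_comp (measurable_measure_prodMk_left (measurable_freqPlus_frame hA))

lemma IsIsotropic.map_smul_prod {Ω : Type*} [MeasurableSpace Ω] {ρ : Measure Ω} [SFinite ρ]
    {μ : Measure E3} [SFinite μ] (hμ : IsIsotropic μ) {c : Ω → ℝ} (hc : Measurable c) :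
    IsIsotropic ((μ.prod ρ).map fun p ↦ c p.2 • p.1) := fun R ↦ by
  have hR := R.continuous.measurable
  have h_smul : Measurable fun p : E3 × Ω ↦ c p.2 • p.1 := by fun_prop
  refine ⟨hR, ?_⟩
  rw [Measure.map_map hR h_smul]
  nth_rewrite 2 [← ((hμ R).prod (MeasurePreserving.id ρ)).map_eq]
  rw [Measure.map_map h_smul (by fun_prop)]
  congr 1 with p
  simp

lemma IsIsotropic.map_freqPlus_eq_map_smul [IsFiniteMeasure m] (hm : IsAxialKernel m)
    {μ : Measure E3} [IsFiniteMeasure μ] (hμ : IsIsotropic μ) :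
    ((μ.prod m).map fun p ↦ freqPlus p.1 (frame p.1 p.2)) =
      (μ.prod m).map fun p ↦ √(1 - halfAngleSinSq p.2) • p.1 := by
  have h_smul : Measurable fun p : E3 × E3 ↦ √(1 - halfAngleSinSq p.2) • p.1 := by fun_prop
  have h_sqrt : Measurable fun ω ↦ √(1 - halfAngleSinSq ω) := by fun_prop
  refine (hμ.map_freqPlus hm).ext_of_map_norm_eq (hμ.map_smul_prod h_sqrt) ?_
  rw [Measure.map_map measurable_norm measurable_freqPlus_frame,
    Measure.map_map measurable_norm h_smul]
  refine Measure.map_congr ?_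
  filter_upwards [(Measure.quasiMeasurePreserving_snd (μ := μ)).ae hm.ae_mem] with p hp
  rw [Function.comp_apply, Function.comp_apply, norm_smul, norm_of_nonneg (sqrt_nonneg _),
    ← sq_eq_sq₀ (norm_nonneg _) (by positivity), (isFrameAt_frame _).norm_freqPlus_sq hp,
    mul_pow, sq_sqrt (by linarith [halfAngleSinSq_le_half hp])]

lemma cosDeficit_symmetrization_le_one (Ψ : Measure E3) [IsProbabilityMeasure Ψ] (ξ : E3) :
    cosDeficit (symmetrization Ψ) ξ ≤ 1 := by
  linarith [norm_charFn_sq Ψ ξ, sq_nonneg ‖charFn Ψ ξ‖]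

lemma integrable_cosDeficit_symmetrization_comp (Ψ : Measure E3) [IsProbabilityMeasure Ψ]
    {Ω : Type*} [MeasurableSpace Ω] {ρ : Measure Ω} [IsFiniteMeasure ρ] {f : Ω → E3}
    (hf : Measurable f) : Integrable (fun x ↦ cosDeficit (symmetrization Ψ) (f x)) ρ := by
  have h_meas := (continuous_cosDeficit_symmetrization Ψ).measurable
  refine .of_bound (h_meas.comp hf).aestronglyMeasurable 1 (.of_forall fun x ↦ ?_)
  rw [norm_of_nonneg (cosDeficit_nonneg _ _)]
  exact cosDeficit_symmetrization_le_one Ψ (f x)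

lemma integral_heatGaussian_cosDeficit_freqPlus [IsFiniteMeasure m] (hm : IsAxialKernel m)
    (Ψ : Measure E3) [IsProbabilityMeasure Ψ] {S : ℝ} (hS : 0 ≤ S) :
    ∫ p, cosDeficit (symmetrization Ψ) (freqPlus p.1 (frame p.1 p.2))
        ∂((heatGaussian E3 S).prod m) =
      ∫ ω, gaussianDeficit (symmetrization Ψ) ((1 - halfAngleSinSq ω) * S) ∂m := by
  have h_cont := continuous_cosDeficit_symmetrization Ψ
  have h_smul : Measurable fun p : E3 × E3 ↦ √(1 - halfAngleSinSq p.2) • p.1 := by fun_prop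
  rw [← integral_map (φ := fun p : E3 × E3 ↦ freqPlus p.1 (frame p.1 p.2))
      measurable_freqPlus_frame.aemeasurable h_cont.aestronglyMeasurable,
    (isIsotropic_heatGaussian S).map_freqPlus_eq_map_smul hm,
    integral_map h_smul.aemeasurable h_cont.aestronglyMeasurable, integral_prod_symm]
  · refine integral_congr_ae ?_
    filter_upwards [hm.ae_mem] with ω hω
    have hs : 0 ≤ 1 - halfAngleSinSq ω := by linarith [halfAngleSinSq_le_half hω]
    rw [← integral_cosDeficit_heatGaussian _ (mul_nonneg hs hS), ← map_smul_heatGaussian hs,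
      integral_map (by fun_prop) h_cont.aestronglyMeasurable]
  · exact integrable_cosDeficit_symmetrization_comp Ψ h_smul

end ScatteredGaussian

section CollisionWeight

/-- The weight `s + ∫ (1 - exp (-s|V|²)) dΘ(V)`, with `s` the squared sine of the half angle and
`Θ` the symmetrization of `Ψ`. It dominates the collision bracket averaged over antipodal azimuths,
uniformly for bounded frequencies. -/
def collisionWeight (Ψ : Measure E3) (ω : E3) : ℝ :=
  halfAngleSinSq ω + gaussianDeficit (symmetrization Ψ) (halfAngleSinSq ω)

lemma collisionWeight_nonneg (Ψ : Measure E3) {ω : E3} (hω : ω ∈ upperHemisphere) :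
    0 ≤ collisionWeight Ψ ω :=
  add_nonneg (halfAngleSinSq_nonneg hω) (gaussianDeficit_nonneg _ (halfAngleSinSq_nonneg hω))

/-- The increment of `cosDeficit` from `ξ` to `ξ⁺`, averaged over antipodal azimuths. Without the
averaging it need not be integrable against a singular kernel. -/
def cosDeficitIncrement (Ψ : Measure E3) (ξ ω : E3) : ℝ :=
  (cosDeficit (symmetrization Ψ) (freqPlus ξ (frame ξ ω)) +
    cosDeficit (symmetrization Ψ) (freqPlus ξ (frame ξ (axialRotation π ω)))) / 2 -
  cosDeficit (symmetrization Ψ) ξ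

variable (Ψ : Measure E3) [IsProbabilityMeasure Ψ]

lemma measurable_cosDeficitIncrement :
    Measurable fun p : E3 × E3 ↦ cosDeficitIncrement Ψ p.1 p.2 := by
  have h_freq := measurable_freqPlus_frame
  have h_rot : Measurable fun p : E3 × E3 ↦
      freqPlus p.1 (frame p.1 (axialRotation π p.2)) :=
    h_freq.comp (measurable_fst.prodMk
      ((axialRotation π).continuous.measurable.comp measurable_snd))
  have h_cos := (continuous_cosDeficit_symmetrization Ψ).measurable
  exact (((h_cos.comp h_freq).add (h_cos.comp h_rot)).div_const 2).sub (h_cos.comp measurable_fst)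

lemma abs_cosDeficitIncrement_le (ξ : E3) {ω : E3} (hω : ω ∈ upperHemisphere) :
    |cosDeficitIncrement Ψ ξ ω| ≤ 8 * (1 + ‖ξ‖ ^ 2) * collisionWeight Ψ ω := by
  have h := abs_symmetrized_cosDeficit_le (halfAngleSinSq_nonneg hω)
    (norm_transversal_sq_le ξ (frame ξ) hω) (symmetrization Ψ)
  rw [← (isFrameAt_frame ξ).freqPlus_eq, ← (isFrameAt_frame ξ).freqPlus_axialRotation_pi] at h
  rw [abs_le] at h ⊢
  unfold cosDeficitIncrement collisionWeight
  constructor <;> linarith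

variable {m : Measure E3} (hm : IsAxialKernel m)
include hm

lemma integrable_cosDeficitIncrement (h : Integrable (collisionWeight Ψ) m) (ξ : E3) :
    Integrable (cosDeficitIncrement Ψ ξ) m := by
  refine (h.const_mul (8 * (1 + ‖ξ‖ ^ 2))).mono'
    ((measurable_cosDeficitIncrement Ψ).comp measurable_prodMk_left).aestronglyMeasurable ?_
  filter_upwards [hm.ae_mem] with ω hω using abs_cosDeficitIncrement_le Ψ ξ hω

lemma integrable_cosDeficitIncrement_prod [SFinite m] (h : Integrable (collisionWeight Ψ) m)
    (S : ℝ) : Integrable (fun p : E3 × E3 ↦ cosDeficitIncrement Ψ p.1 p.2)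
      ((heatGaussian E3 S).prod m) := by
  have h_sq := ((integrable_const 1).add (integrable_norm_sq_heatGaussian (E := E3) S)).const_mul 8
  refine (h_sq.mul_prod h).mono' (measurable_cosDeficitIncrement Ψ).aestronglyMeasurable ?_
  filter_upwards [(Measure.quasiMeasurePreserving_snd (μ := heatGaussian E3 S)).ae hm.ae_mem]
    with p hp using abs_cosDeficitIncrement_le Ψ p.1 hp

lemma integral_cosDeficitIncrement [IsFiniteMeasure m] (ξ : E3) :
    ∫ ω, cosDeficitIncrement Ψ ξ ω ∂m =
      ∫ ω, cosDeficit (symmetrization Ψ) (freqPlus ξ (frame ξ ω)) ∂m -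
        m.real univ * cosDeficit (symmetrization Ψ) ξ := by
  have h_int : Integrable (fun ω ↦ cosDeficit (symmetrization Ψ) (freqPlus ξ (frame ξ ω))) m :=
    integrable_cosDeficit_symmetrization_comp Ψ
      (measurable_freqPlus_frame.comp measurable_prodMk_left)
  have h_rot := (hm.integrable_comp (axialRotation_pole π)).2 h_int
  unfold cosDeficitIncrement
  rw [integral_sub ((h_int.fun_add h_rot).div_const 2) (integrable_const _), integral_div,
    integral_add h_int h_rot, hm.integral_comp (axialRotation_pole π)
      fun ω ↦ cosDeficit (symmetrization Ψ) (freqPlus ξ (frame ξ ω)), integral_const, smul_eq_mul]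
  ring

end CollisionWeight

section GaussianAverage

lemma neg_mul_gaussianDeficit_le {E : Type*} [NormedAddCommGroup E]
    [MeasurableSpace E] [BorelSpace E] [SecondCountableTopology E] (Θ : Measure E)
    [IsFiniteMeasure Θ] {S s : ℝ} (hS : 0 ≤ S) (hs : 0 ≤ s) (hs' : s ≤ 1) :
    -(s * gaussianDeficit Θ S) ≤ gaussianDeficit Θ ((1 - s) * S) - gaussianDeficit Θ S := by
  have h_int := integrable_gaussianDeficit Θ hS
  have h_int' := integrable_gaussianDeficit Θ (mul_nonneg (sub_nonneg.2 hs') hS)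
  suffices (1 - s) * gaussianDeficit Θ S ≤ gaussianDeficit Θ ((1 - s) * S) by linarith
  unfold gaussianDeficit
  rw [← integral_const_mul]
  refine integral_mono (h_int.const_mul _) h_int' fun V ↦ ?_
  have h_convex := convexOn_exp.2 (mem_univ (-(S * ‖V‖ ^ 2))) (mem_univ 0) (sub_nonneg.2 hs') hs
    (by ring)
  simp only [smul_eq_mul, mul_zero, add_zero, exp_zero, mul_one] at h_convex
  rw [show (1 - s) * -(S * ‖V‖ ^ 2) = -((1 - s) * S * ‖V‖ ^ 2) by ring] at h_convex
  linarith

variable (Ψ : Measure E3) [IsProbabilityMeasure Ψ] {m : Measure E3} (hm : IsAxialKernel m)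
  (hs : Integrable halfAngleSinSq m) {S : ℝ} (hS : 0 ≤ S)
include hm hs hS

lemma neg_mul_gaussianDeficit_le_integral_of_isFiniteMeasure [IsFiniteMeasure m] :
    -((∫ ω, halfAngleSinSq ω ∂m) * gaussianDeficit (symmetrization Ψ) S) ≤
      ∫ ξ, ∫ ω, cosDeficitIncrement Ψ ξ ω ∂m ∂(heatGaussian E3 S) := by
  set Θ := symmetrization Ψ
  have h_deficit : Integrable (fun ω ↦ gaussianDeficit Θ ((1 - halfAngleSinSq ω) * S)) m := by
    refine .of_bound (StronglyMeasurable.aestronglyMeasurable ?_) 1 ?_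
    · exact StronglyMeasurable.integral_prod_right
        (f := fun ω V ↦ 1 - exp (-((1 - halfAngleSinSq ω) * S * ‖V‖ ^ 2)))
        (Continuous.stronglyMeasurable (by unfold Function.uncurry; fun_prop))
    · filter_upwards [hm.ae_mem] with ω hω
      have h_nonneg : 0 ≤ (1 - halfAngleSinSq ω) * S :=
        mul_nonneg (by linarith [halfAngleSinSq_le_half hω]) hS
      rw [norm_of_nonneg (gaussianDeficit_nonneg _ h_nonneg)]
      exact gaussianDeficit_le_one _ h_nonneg
  have h_cos : Integrable (cosDeficit Θ) (heatGaussian E3 S) :=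
    integrable_cosDeficit_symmetrization_comp Ψ measurable_id
  have h_plus : Integrable (fun p : E3 × E3 ↦ cosDeficit Θ (freqPlus p.1 (frame p.1 p.2)))
      ((heatGaussian E3 S).prod m) :=
    integrable_cosDeficit_symmetrization_comp Ψ measurable_freqPlus_frame
  calc -((∫ ω, halfAngleSinSq ω ∂m) * gaussianDeficit Θ S)
      = ∫ ω, -(halfAngleSinSq ω * gaussianDeficit Θ S) ∂m := by
        rw [integral_neg, integral_mul_const]
    _ ≤ ∫ ω, (gaussianDeficit Θ ((1 - halfAngleSinSq ω) * S) - gaussianDeficit Θ S) ∂m := by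
        refine integral_mono_ae (hs.mul_const _).neg (h_deficit.sub (integrable_const _)) ?_
        filter_upwards [hm.ae_mem] with ω hω using neg_mul_gaussianDeficit_le Θ hS
          (halfAngleSinSq_nonneg hω) (by linarith [halfAngleSinSq_le_half hω])
    _ = ∫ ξ, ∫ ω, cosDeficitIncrement Ψ ξ ω ∂m ∂(heatGaussian E3 S) := by
        simp only [integral_cosDeficitIncrement Ψ hm]
        rw [integral_sub h_plus.integral_prod_left (h_cos.const_mul _), ← integral_prod _ h_plus,
          integral_heatGaussian_cosDeficit_freqPlus hm Ψ hS, integral_const_mul,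
          integral_cosDeficit_heatGaussian _ hS, integral_sub h_deficit (integrable_const _),
          integral_const, smul_eq_mul]

end GaussianAverage

section Truncation

lemma tendsto_setIntegral_one_div_lt {Ω : Type*} [MeasurableSpace Ω] {μ : Measure Ω} {s f : Ω → ℝ}
    (hs : Measurable s) (hf : Integrable f μ) (hsf : ∀ᵐ ω ∂μ, s ω ≤ 0 → f ω = 0) :
    Tendsto (fun n : ℕ ↦ ∫ ω in {ω | 1 / ((n : ℝ) + 1) < s ω}, f ω ∂μ) atTop
      (𝓝 (∫ ω, f ω ∂μ)) := by
  have h_mono : Monotone fun n : ℕ ↦ {ω | 1 / ((n : ℝ) + 1) < s ω} := fun i j hij ω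
    (hω : 1 / ((i : ℝ) + 1) < s ω) ↦ (Nat.one_div_le_one_div hij).trans_lt hω
  have h_iUnion : ⋃ n : ℕ, {ω | 1 / ((n : ℝ) + 1) < s ω} = {ω | 0 < s ω} := by
    ext ω
    simp only [mem_iUnion, mem_ofPred_eq]
    exact ⟨fun ⟨n, hn⟩ ↦ Nat.one_div_pos_of_nat.trans hn, exists_nat_one_div_lt⟩
  have h_lim := tendsto_setIntegral_of_monotone
    (fun n : ℕ ↦ measurableSet_lt measurable_const hs) h_mono hf.integrableOn
  rwa [h_iUnion, setIntegral_eq_integral_of_ae_compl_eq_zero] at h_lim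
  filter_upwards [hsf] with ω hω h using hω (not_lt.1 h)

lemma IsAxialKernel.restrict_lt_halfAngleSinSq {m : Measure E3} (hm : IsAxialKernel m) (c : ℝ) :
    IsAxialKernel (m.restrict {ω | c < halfAngleSinSq ω}) where
  ae_mem := ae_restrict_of_ae hm.ae_mem
  measurePreserving R hR := by
    have h_meas : MeasurableSet {ω | c < halfAngleSinSq ω} :=
      measurableSet_lt measurable_const continuous_halfAngleSinSq.measurable
    simpa [halfAngleSinSq, preimage_ofPred_eq, coord_zero_eq_of_map_pole hR] using
      (hm.measurePreserving R hR).restrict_preimage h_meas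

/-- Away from grazing collisions the kernel is finite; the general case follows by exhaustion. -/
theorem neg_mul_gaussianDeficit_le_integral (Ψ : Measure E3) [IsProbabilityMeasure Ψ]
    {m : Measure E3} [SFinite m] (hm : IsAxialKernel m) (hs : Integrable halfAngleSinSq m)
    (hw : Integrable (collisionWeight Ψ) m) {S : ℝ} (hS : 0 ≤ S) :
    -((∫ ω, halfAngleSinSq ω ∂m) * gaussianDeficit (symmetrization Ψ) S) ≤
      ∫ ξ, ∫ ω, cosDeficitIncrement Ψ ξ ω ∂m ∂(heatGaussian E3 S) := by
  have h_int := integrable_cosDeficitIncrement_prod Ψ hm hw S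
  have h_grazing : ∀ᵐ ω ∂m, halfAngleSinSq ω ≤ 0 →
      ∫ ξ, cosDeficitIncrement Ψ ξ ω ∂(heatGaussian E3 S) = 0 := by
    filter_upwards [hm.ae_mem] with ω hω h
    have h_zero : halfAngleSinSq ω = 0 := h.antisymm (halfAngleSinSq_nonneg hω)
    refine integral_eq_zero_of_ae (.of_forall fun ξ ↦ ?_)
    simpa [collisionWeight, h_zero, gaussianDeficit] using abs_cosDeficitIncrement_le Ψ ξ hω
  have h_lim := tendsto_setIntegral_one_div_lt continuous_halfAngleSinSq.measurable
    h_int.integral_prod_right h_grazing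
  rw [integral_integral_swap h_int]
  refine ge_of_tendsto' h_lim fun n ↦ ?_
  set A := {ω | 1 / ((n : ℝ) + 1) < halfAngleSinSq ω}
  have : IsFiniteMeasure (m.restrict A) :=
    isFiniteMeasure_restrict.2 (hs.measure_gt_lt_top Nat.one_div_pos_of_nat).ne
  have hA : IsAxialKernel (m.restrict A) := hm.restrict_lt_halfAngleSinSq _
  rw [← integral_integral_swap (integrable_cosDeficitIncrement_prod Ψ hA hw.integrableOn S)]
  refine le_trans ?_
    (neg_mul_gaussianDeficit_le_integral_of_isFiniteMeasure Ψ hA hs.integrableOn hS)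
  refine neg_le_neg (mul_le_mul_of_nonneg_right ?_ (gaussianDeficit_nonneg _ hS))
  refine setIntegral_le_integral hs ?_
  filter_upwards [hm.ae_mem] with ω hω using halfAngleSinSq_nonneg hω

end Truncation

section CollisionIntegral

/-- The Bobylev collision integral of `φ`, written in the frame at `ξ`. -/
def collisionIntegral (m : Measure E3) (φ : E3 → ℂ) (ξ : E3) : ℂ :=
  ∫ ω, collisionDefect φ ξ (frame ξ ω) ∂m

lemma stronglyMeasurable_collisionIntegral (m : Measure E3) [SFinite m] {φ : E3 → ℂ}
    (hφ : Measurable φ) : StronglyMeasurable (collisionIntegral m φ) := by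
  refine StronglyMeasurable.integral_prod_right
    (f := fun ξ ω ↦ collisionDefect φ ξ (frame ξ ω)) (Measurable.stronglyMeasurable ?_)
  simp only [Function.uncurry_def, collisionDefect, freqMinus_eq_sub]
  exact ((hφ.comp measurable_freqPlus_frame).mul
    (hφ.comp (measurable_fst.sub measurable_freqPlus_frame))).sub (hφ.comp measurable_fst)

/-- The rate `-d|φ(ξ)|²/dt` at which the flow `dφ/dt = collisionIntegral m φ` dissipates `|φ(ξ)|²`,
which is the time derivative of `cosDeficit`. -/
def dissipation (m : Measure E3) (φ : E3 → ℂ) (ξ : E3) : ℝ :=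
  -(2 * ⟪φ ξ, collisionIntegral m φ ξ⟫)

lemma stronglyMeasurable_dissipation (m : Measure E3) [SFinite m] {φ : E3 → ℂ}
    (hφ : Measurable φ) : StronglyMeasurable (dissipation m φ) :=
  ((hφ.stronglyMeasurable.inner (stronglyMeasurable_collisionIntegral m hφ)).const_mul 2).neg

lemma norm_sq_sub_norm_sq_le_neg_two_mul_inner (z p : ℂ) {q : ℂ} (hq : ‖q‖ ≤ 1) :
    ‖z‖ ^ 2 - ‖p‖ ^ 2 ≤ -(2 * ⟪z, p * q - z⟫) := by
  have h_mul : ‖p * q‖ ≤ ‖p‖ := by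
    rw [norm_mul]
    exact mul_le_of_le_one_right (norm_nonneg p) hq
  have h_inner : ⟪z, p * q⟫ ≤ ‖z‖ * ‖p‖ :=
    (real_inner_le_norm _ _).trans (mul_le_mul_of_nonneg_left h_mul (norm_nonneg z))
  rw [inner_sub_right, real_inner_self_eq_norm_sq]
  linarith [two_mul_le_add_sq ‖z‖ ‖p‖]

variable {m : Measure E3} (hm : IsAxialKernel m)
include hm

lemma two_mul_integral_collisionDefect {φ : E3 → ℂ} {ξ : E3} {L : E3 ≃ₗᵢ[ℝ] E3}
    (h : Integrable (fun ω ↦ collisionDefect φ ξ (L ω)) m) :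
    2 * ∫ ω, collisionDefect φ ξ (L ω) ∂m =
      ∫ ω, (collisionDefect φ ξ (L ω) + collisionDefect φ ξ (L (axialRotation π ω))) ∂m := by
  rw [integral_add h ((hm.integrable_comp (axialRotation_pole π)).2 h),
    hm.integral_comp (axialRotation_pole π) fun ω ↦ collisionDefect φ ξ (L ω), two_mul]

/-- Two frames at the same nonzero frequency differ by a rotation about the pole. -/
lemma integral_collisionDefect_eq_collisionIntegral {φ : E3 → ℂ} (hφ : φ 0 = 1) {ξ : E3}
    {L : E3 ≃ₗᵢ[ℝ] E3} (hL : IsFrameAt L ξ) :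
    ∫ ω, collisionDefect φ ξ (L ω) ∂m = collisionIntegral m φ ξ := by
  unfold collisionIntegral
  rcases eq_or_ne ξ 0 with rfl | hξ
  · simp only [collisionDefect_zero_freq hφ]
  have hR : (L.trans (frame ξ).symm) pole = pole := by
    rw [LinearIsometryEquiv.trans_apply, hL.map_pole hξ, ← (isFrameAt_frame ξ).map_pole hξ,
      LinearIsometryEquiv.symm_apply_apply]
  simpa using hm.integral_comp hR fun ω ↦ collisionDefect φ ξ (frame ξ ω)

variable (Ψ : Measure E3) [IsProbabilityMeasure Ψ]
  (hΨ : ∀ ξ L, IsFrameAt L ξ → Integrable (fun ω ↦ collisionDefect (charFn Ψ) ξ (L ω)) m)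
include hΨ

lemma integrable_collisionWeight [SFinite m] (hs : Integrable halfAngleSinSq m) :
    Integrable (collisionWeight Ψ) m :=
  hs.add (integrable_gaussianDeficit_halfAngleSinSq hm hs Ψ hΨ)

lemma norm_collisionIntegral_le (hw : Integrable (collisionWeight Ψ) m) (ξ : E3) :
    ‖collisionIntegral m (charFn Ψ) ξ‖ ≤ 8 * (1 + ‖ξ‖ ^ 2) * ∫ ω, collisionWeight Ψ ω ∂m := by
  have h_two : ‖2 * collisionIntegral m (charFn Ψ) ξ‖ ≤
      ∫ ω, 16 * (1 + ‖ξ‖ ^ 2) * collisionWeight Ψ ω ∂m := by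
    rw [collisionIntegral, two_mul_integral_collisionDefect hm (hΨ ξ _ (isFrameAt_frame ξ))]
    refine norm_integral_le_of_norm_le (hw.const_mul _) ?_
    filter_upwards [hm.ae_mem] with ω hω
      using norm_collisionDefect_add_axialRotation_pi_le (isFrameAt_frame ξ) Ψ hω
  rw [integral_const_mul, norm_mul, Complex.norm_ofNat] at h_two
  linarith

lemma abs_dissipation_le (hw : Integrable (collisionWeight Ψ) m) (ξ : E3) :
    |dissipation m (charFn Ψ) ξ| ≤ 16 * (1 + ‖ξ‖ ^ 2) * ∫ ω, collisionWeight Ψ ω ∂m := by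
  have h_inner := abs_real_inner_le_norm (charFn Ψ ξ) (collisionIntegral m (charFn Ψ) ξ)
  have h_mul := mul_le_of_le_one_left (norm_nonneg (collisionIntegral m (charFn Ψ) ξ))
    (norm_charFn_le_one Ψ ξ)
  rw [dissipation, abs_neg, abs_mul, abs_two]
  linarith [norm_collisionIntegral_le hm Ψ hΨ hw ξ]

lemma integral_cosDeficitIncrement_le_dissipation (hw : Integrable (collisionWeight Ψ) m) (ξ : E3) :
    ∫ ω, cosDeficitIncrement Ψ ξ ω ∂m ≤ dissipation m (charFn Ψ) ξ := by
  set φ := charFn Ψ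
  have h_int := hΨ ξ _ (isFrameAt_frame ξ)
  have h_int_sym := h_int.add ((hm.integrable_comp (axialRotation_pole π)).2 h_int)
  have h_pointwise (ω : E3) : ‖φ ξ‖ ^ 2 - ‖φ (freqPlus ξ (frame ξ ω))‖ ^ 2 ≤
      -(2 * ⟪φ ξ, collisionDefect φ ξ (frame ξ ω)⟫) :=
    norm_sq_sub_norm_sq_le_neg_two_mul_inner _ _ (norm_charFn_le_one Ψ _)
  calc ∫ ω, cosDeficitIncrement Ψ ξ ω ∂m
      ≤ ∫ ω, -⟪φ ξ, collisionDefect φ ξ (frame ξ ω) +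
          collisionDefect φ ξ (frame ξ (axialRotation π ω))⟫ ∂m := by
        refine integral_mono (integrable_cosDeficitIncrement Ψ hm hw ξ)
          (h_int_sym.const_inner (φ ξ)).neg fun ω ↦ ?_
        have h := h_pointwise ω
        have h_rot := h_pointwise (axialRotation π ω)
        simp only [φ, norm_charFn_sq] at h h_rot
        simp only [cosDeficitIncrement, inner_add_right, φ]
        linarith
    _ = -⟪φ ξ, 2 * collisionIntegral m φ ξ⟫ := by
        rw [integral_neg, collisionIntegral, two_mul_integral_collisionDefect hm h_int]
        exact congrArg _ (integral_inner h_int_sym (φ ξ))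
    _ = dissipation m φ ξ := by
        rw [dissipation, two_mul, inner_add_right, two_mul]

end CollisionIntegral

section Flow

/-- The total mass of `collisionWeight`, which controls the collision integral of `charFn Ψ`. -/
def totalCollisionWeight (m Ψ : Measure E3) : ℝ := ∫ ω, collisionWeight Ψ ω ∂m

lemma totalCollisionWeight_nonneg {m : Measure E3} (hm : IsAxialKernel m) (Ψ : Measure E3) :
    0 ≤ totalCollisionWeight m Ψ :=
  integral_nonneg_of_ae (hm.ae_mem.mono fun _ ↦ collisionWeight_nonneg Ψ)

/-- A solution of the Bobylev equation with kernel `m` among characteristic functions of probability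
measures. The times `t ≤ 0` carry no equation, so that a solution on `[0, ∞)` may be prolonged by
its initial value. -/
structure IsBobylevFlow (m : Measure E3) (Ψ : ℝ → ProbabilityMeasure E3) : Prop where
  continuous : Continuous fun p : ℝ × E3 ↦ charFn (Ψ p.1) p.2
  integrable : ∀ t ξ L, IsFrameAt L ξ →
    Integrable (fun ω ↦ collisionDefect (charFn (Ψ t)) ξ (L ω)) m
  hasDerivAt : ∀ t > 0, ∀ ξ,
    HasDerivAt (fun τ ↦ charFn (Ψ τ) ξ) (collisionIntegral m (charFn (Ψ t)) ξ) t

namespace IsBobylevFlow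

variable {m : Measure E3} {Ψ : ℝ → ProbabilityMeasure E3} (h : IsBobylevFlow m Ψ)
include h

lemma hasDerivAt_cosDeficit {t : ℝ} (ht : 0 < t) (ξ : E3) :
    HasDerivAt (fun τ ↦ cosDeficit (symmetrization (Ψ τ : Measure E3)) ξ)
      (dissipation m (charFn (Ψ t)) ξ) t := by
  refine ((h.hasDerivAt t ht ξ).norm_sq.const_sub 1).congr_of_eventuallyEq (.of_forall fun τ ↦ ?_)
  simp [norm_charFn_sq]

lemma continuous_cosDeficit (ξ : E3) :
    Continuous fun t ↦ cosDeficit (symmetrization (Ψ t : Measure E3)) ξ := by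
  have h_cont : Continuous fun t ↦ charFn (Ψ t) ξ := h.continuous.comp (.prodMk_left ξ)
  refine ((continuous_const (y := 1)).sub (h_cont.norm.pow 2)).congr fun t ↦ ?_
  simp [norm_charFn_sq]

lemma continuous_gaussianDeficit {S : ℝ} (hS : 0 ≤ S) :
    Continuous fun t ↦ gaussianDeficit (symmetrization (Ψ t : Measure E3)) S := by
  simp only [← integral_cosDeficit_heatGaussian _ hS]
  refine continuous_of_dominated (bound := fun _ ↦ 1)
    (fun t ↦ (continuous_cosDeficit_symmetrization _).aestronglyMeasurable)
    (fun t ↦ .of_forall fun ξ ↦ ?_) (integrable_const _)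
    (.of_forall h.continuous_cosDeficit)
  rw [norm_of_nonneg (cosDeficit_nonneg _ _)]
  exact cosDeficit_symmetrization_le_one _ ξ

variable [SFinite m] (hm : IsAxialKernel m) (hs : Integrable halfAngleSinSq m)
include hm hs

lemma integrable_collisionWeight (t : ℝ) : Integrable (collisionWeight (Ψ t)) m :=
  _root_.integrable_collisionWeight hm _ (h.integrable t) hs

lemma hasDerivAt_gaussianDeficit {S t : ℝ} (hS : 0 ≤ S) (ht : 0 < t)
    (hN : IsBoundedUnder (· ≤ ·) (𝓝 t) fun τ ↦ totalCollisionWeight m (Ψ τ)) :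
    Integrable (dissipation m (charFn (Ψ t))) (heatGaussian E3 S) ∧
      HasDerivAt (fun τ ↦ gaussianDeficit (symmetrization (Ψ τ : Measure E3)) S)
        (∫ ξ, dissipation m (charFn (Ψ t)) ξ ∂(heatGaussian E3 S)) t := by
  obtain ⟨K, hK⟩ := hN
  simp only [← integral_cosDeficit_heatGaussian _ hS]
  refine hasDerivAt_integral_of_dominated_loc_of_deriv_le
    (F := fun τ ξ ↦ cosDeficit (symmetrization (Ψ τ : Measure E3)) ξ)
    (F' := fun τ ξ ↦ dissipation m (charFn (Ψ τ)) ξ)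
    (bound := fun ξ ↦ 16 * (1 + ‖ξ‖ ^ 2) * K)
    (inter_mem (eventually_map.1 hK) (Ioi_mem_nhds ht))
    (.of_forall fun τ ↦ (continuous_cosDeficit_symmetrization _).aestronglyMeasurable)
    (integrable_cosDeficit_symmetrization_comp _ measurable_id)
    (stronglyMeasurable_dissipation m (continuous_charFn _).measurable).aestronglyMeasurable
    (.of_forall fun ξ τ hτ ↦ ?_)
    ((((integrable_const 1).add (integrable_norm_sq_heatGaussian S)).const_mul 16).mul_const K)
    (.of_forall fun ξ τ hτ ↦ h.hasDerivAt_cosDeficit hτ.2 ξ)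
  exact (abs_dissipation_le hm _ (h.integrable τ) (h.integrable_collisionWeight hm hs τ) ξ).trans
    (mul_le_mul_of_nonneg_left hτ.1 (by positivity))

lemma neg_mul_gaussianDeficit_le_integral_dissipation {S t : ℝ} (hS : 0 ≤ S)
    (h_int : Integrable (dissipation m (charFn (Ψ t))) (heatGaussian E3 S)) :
    -((∫ ω, halfAngleSinSq ω ∂m) * gaussianDeficit (symmetrization (Ψ t : Measure E3)) S) ≤
      ∫ ξ, dissipation m (charFn (Ψ t)) ξ ∂(heatGaussian E3 S) := by
  have hw := h.integrable_collisionWeight hm hs t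
  exact (neg_mul_gaussianDeficit_le_integral _ hm hs hw hS).trans
    (integral_mono (integrable_cosDeficitIncrement_prod _ hm hw S).integral_prod_left h_int
      (integral_cosDeficitIncrement_le_dissipation hm _ (h.integrable t) hw))

lemma gaussianDeficit_le_exp_mul_of_isBoundedUnder {S a c : ℝ} (hS : 0 ≤ S) (ha : 0 ≤ a)
    (hac : a ≤ c)
    (hN : ∀ t ∈ Ioo a c, IsBoundedUnder (· ≤ ·) (𝓝 t) fun τ ↦ totalCollisionWeight m (Ψ τ)) :
    gaussianDeficit (symmetrization (Ψ a : Measure E3)) S ≤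
      exp ((∫ ω, halfAngleSinSq ω ∂m) * (c - a)) *
        gaussianDeficit (symmetrization (Ψ c : Measure E3)) S := by
  set β := ∫ ω, halfAngleSinSq ω ∂m
  set g := fun t ↦ gaussianDeficit (symmetrization (Ψ t : Measure E3)) S
  have hg : Continuous g := h.continuous_gaussianDeficit hS
  have h_mono : MonotoneOn (fun t ↦ exp (β * t) * g t) (Icc a c) := by
    refine monotoneOn_of_hasDerivWithinAt_nonneg (convex_Icc a c)
      (f' := fun t ↦ exp (β * t) * (β * 1) * g t +
        exp (β * t) * ∫ ξ, dissipation m (charFn (Ψ t)) ξ ∂(heatGaussian E3 S))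
      (by fun_prop) (fun t ht ↦ ?_) fun t ht ↦ ?_ <;> rw [interior_Icc] at ht
    all_goals
      obtain ⟨h_int, h_deriv⟩ :=
        h.hasDerivAt_gaussianDeficit hm hs hS (ha.trans_lt ht.1) (hN t ht)
    · exact (((hasDerivAt_id t).const_mul β).exp.mul h_deriv).hasDerivWithinAt
    · have h_lower := h.neg_mul_gaussianDeficit_le_integral_dissipation hm hs hS h_int
      rw [mul_one, mul_assoc, ← mul_add]
      exact mul_nonneg (exp_nonneg _) (neg_le_iff_add_nonneg'.1 h_lower)
  have h_endpoints := h_mono (left_mem_Icc.2 hac) (right_mem_Icc.2 hac) hac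
  rw [mul_sub, exp_sub, div_mul_eq_mul_div, le_div_iff₀' (exp_pos _)]
  exact h_endpoints

end IsBobylevFlow

end Flow

section Fatou

lemma lowerSemicontinuous_integral {X Ω : Type*} [TopologicalSpace X] [SequentialSpace X]
    [MeasurableSpace Ω] {μ : Measure Ω} {f : X → Ω → ℝ} (h_nonneg : ∀ x, 0 ≤ᵐ[μ] f x)
    (h_int : ∀ x, Integrable (f x) μ) (h_cont : ∀ᵐ ω ∂μ, Continuous fun x ↦ f x ω) :
    LowerSemicontinuous fun x ↦ ∫ ω, f x ω ∂μ := by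
  refine lowerSemicontinuous_iff_isClosed_preimage.2 fun k ↦ IsSeqClosed.isClosed ?_
  intro u x (hu : ∀ n, ∫ ω, f (u n) ω ∂μ ≤ k) hux
  have hk : 0 ≤ k := (integral_nonneg_of_ae (h_nonneg (u 0))).trans (hu 0)
  refine (ENNReal.ofReal_le_ofReal_iff hk).1 ?_
  calc ENNReal.ofReal (∫ ω, f x ω ∂μ)
      = ∫⁻ ω, ENNReal.ofReal (f x ω) ∂μ :=
        ofReal_integral_eq_lintegral_ofReal (h_int x) (h_nonneg x)
    _ = ∫⁻ ω, liminf (fun n ↦ ENNReal.ofReal (f (u n) ω)) atTop ∂μ := by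
        refine lintegral_congr_ae ?_
        filter_upwards [h_cont] with ω hω
        exact (ENNReal.tendsto_ofReal ((hω.tendsto x).comp hux)).liminf_eq.symm
    _ ≤ liminf (fun n ↦ ∫⁻ ω, ENNReal.ofReal (f (u n) ω) ∂μ) atTop :=
        lintegral_liminf_le' fun n ↦ (h_int (u n)).aemeasurable.ennreal_ofReal
    _ ≤ ENNReal.ofReal k := by
        refine liminf_le_of_frequently_le' (.of_forall fun n ↦ ?_)
        rw [← ofReal_integral_eq_lintegral_ofReal (h_int _) (h_nonneg _)]
        exact ENNReal.ofReal_le_ofReal (hu n)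

end Fatou

section LocalBoundedness

lemma exists_isBoundedUnder_nhdsWithin_of_lowerSemicontinuous {X : Type*} [TopologicalSpace X]
    {N : X → ℝ} (hN : LowerSemicontinuous N) {F : Set X} [BaireSpace F] (hF : F.Nonempty) :
    ∃ x ∈ F, IsBoundedUnder (· ≤ ·) (𝓝[F] x) N := by
  have := hF.to_subtype
  obtain ⟨k, x, hx⟩ := nonempty_interior_of_iUnion_of_closed (X := F)
    (f := fun k : ℕ ↦ {x : F | N x ≤ k})
    (fun k ↦ (hN.isClosed_preimage k).preimage continuous_subtype_val)
    (iUnion_eq_univ_iff.2 fun x ↦ exists_nat_ge (N x))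
  refine ⟨x, x.2, k, ?_⟩
  rw [nhdsWithin_eq_map_subtype_coe x.2]
  exact mem_interior_iff_mem_nhds.1 hx

lemma isOpen_isBoundedUnder_nhdsWithin {X : Type*} [TopologicalSpace X] (N : X → ℝ) (s : Set X) :
    IsOpen {x | IsBoundedUnder (· ≤ ·) (𝓝[s] x) N} :=
  isOpen_iff_mem_nhds.2 fun _ ⟨K, hK⟩ ↦
    (eventually_nhds_nhdsWithin.2 (eventually_map.1 hK)).mono fun _ hy ↦ ⟨K, hy⟩

lemma exists_mem_or_eq_right_forall_Ioo_notMem {F : Set ℝ} (hF : IsClosed F) {t d : ℝ}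
    (htd : t ≤ d) : ∃ c ∈ Icc t d, (c ∈ F ∨ c = d) ∧ ∀ s ∈ Ioo t c, s ∉ F := by
  obtain ⟨c, ⟨hc, hcF⟩, h_least⟩ :=
    (isCompact_Icc.inter_right (hF.union isClosed_singleton)).exists_isLeast
      ⟨d, right_mem_Icc.2 htd, Or.inr (mem_singleton d)⟩
  exact ⟨c, hc, hcF, fun s hs hsF ↦
    hs.2.not_ge (h_least ⟨⟨hs.1.le, hs.2.le.trans hc.2⟩, Or.inl hsF⟩)⟩

/-- By Baire, `N` is bounded on a relatively open part of its set of bad points. To the left of it,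
every good point propagates backwards the bound at the next bad point. -/
theorem isBoundedUnder_nhdsWithin_Ici_of_le_exp_mul {N : ℝ → ℝ} {B a : ℝ} (hB : 0 ≤ B)
    (hN_nonneg : ∀ t, 0 ≤ N t) (hN : LowerSemicontinuous N)
    (h_back : ∀ t c, a ≤ t → t ≤ c → (∀ s ∈ Ioo t c, IsBoundedUnder (· ≤ ·) (𝓝 s) N) →
      N t ≤ exp (B * (c - t)) * N c) {t : ℝ} (ht : a ≤ t) :
    IsBoundedUnder (· ≤ ·) (𝓝[Ici a] t) N := by
  set F : Set ℝ := Ici a ∩ {t | IsBoundedUnder (· ≤ ·) (𝓝[Ici a] t) N}ᶜ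
  by_contra h_bad
  have hF : IsClosed F :=
    isClosed_Ici.inter (isOpen_isBoundedUnder_nhdsWithin N (Ici a)).isClosed_compl
  have : CompleteSpace F := hF.completeSpace_coe
  obtain ⟨x, hx, k, hk⟩ :=
    exists_isBoundedUnder_nhdsWithin_of_lowerSemicontinuous hN (F := F) ⟨t, ht, h_bad⟩
  obtain ⟨ε, hε, hk⟩ := Metric.mem_nhdsWithin_iff.1 (eventually_map.1 hk)
  refine hx.2 ⟨exp (B * ε) * max k (N (x + ε / 2)), eventually_map.2 ?_⟩
  filter_upwards [self_mem_nhdsWithin, nhdsWithin_le_nhds (ball_mem_nhds x (half_pos hε))]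
    with s hs hsx
  rw [Real.ball_eq_Ioo] at hsx
  obtain ⟨c, ⟨hsc, hcd⟩, hcF, h_gap⟩ :=
    exists_mem_or_eq_right_forall_Ioo_notMem hF hsx.2.le
  have h_good : ∀ r ∈ Ioo s c, IsBoundedUnder (· ≤ ·) (𝓝 r) N := fun r hr ↦ by
    have har : a < r := (mem_Ici.1 hs).trans_lt hr.1
    rw [← nhdsWithin_eq_nhds.2 (Ici_mem_nhds har)]
    exact not_not.1 fun h ↦ h_gap r hr ⟨har.le, h⟩
  have hNc : N c ≤ max k (N (x + ε / 2)) := by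
    rcases hcF with hcF | rfl
    · refine (hk ⟨?_, hcF⟩).trans (le_max_left _ _)
      rw [Real.ball_eq_Ioo]
      constructor <;> linarith [hsx.1]
    · exact le_max_right _ _
  calc N s ≤ exp (B * (c - s)) * N c := h_back s c hs hsc h_good
    _ ≤ exp (B * ε) * max k (N (x + ε / 2)) := by
      gcongr
      · exact hN_nonneg c
      · linarith [hsx.1]

end LocalBoundedness

section CollisionIntegralContinuity

lemma integral_halfAngleSinSq_nonneg {m : Measure E3} (hm : IsAxialKernel m) :
    0 ≤ ∫ ω, halfAngleSinSq ω ∂m :=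
  integral_nonneg_of_ae (hm.ae_mem.mono fun _ ↦ halfAngleSinSq_nonneg)

namespace IsBobylevFlow

variable {m : Measure E3} {Ψ : ℝ → ProbabilityMeasure E3} (h : IsBobylevFlow m Ψ)
include h

lemma continuousAt_collisionDefect {L : E3 → E3 ≃ₗᵢ[ℝ] E3} {ξ₀ ω : E3}
    (hL : ContinuousAt (fun ξ ↦ ‖ξ‖ • L ξ ω) ξ₀) (t₀ : ℝ) :
    ContinuousAt (fun p : ℝ × E3 ↦ collisionDefect (charFn (Ψ p.1)) p.2 (L p.2 ω)) (t₀, ξ₀) := by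
  have h_charFn {g : ℝ × E3 → E3} (hg : ContinuousAt g (t₀, ξ₀)) :
      ContinuousAt (fun p : ℝ × E3 ↦ charFn (Ψ p.1) (g p)) (t₀, ξ₀) :=
    ContinuousAt.comp' (g := fun p : ℝ × E3 ↦ charFn (Ψ p.1) p.2) h.continuous.continuousAt
      (continuousAt_fst.prodMk hg)
  have h_plus : ContinuousAt (fun p : ℝ × E3 ↦ freqPlus p.2 (L p.2 ω)) (t₀, ξ₀) := by
    have h_freq (ξ : E3) : freqPlus ξ (L ξ ω) = (1 / 2 : ℝ) • (ξ + ‖ξ‖ • L ξ ω) := by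
      rw [freqPlus, smul_add, smul_smul, one_div_mul_eq_div]
    simp only [h_freq]
    have h_frame : ContinuousAt (fun p : ℝ × E3 ↦ ‖p.2‖ • L p.2 ω) (t₀, ξ₀) :=
      hL.tendsto.comp (continuousAt_snd (p := (t₀, ξ₀)))
    exact (continuousAt_snd.fun_add h_frame).fun_const_smul _
  have h_minus : ContinuousAt (fun p : ℝ × E3 ↦ freqMinus p.2 (L p.2 ω)) (t₀, ξ₀) := by
    simp only [freqMinus_eq_sub]
    exact continuousAt_snd.sub h_plus
  exact ((h_charFn h_plus).mul (h_charFn h_minus)).sub (h_charFn continuousAt_snd)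

variable [SFinite m] (hm : IsAxialKernel m) (hs : Integrable halfAngleSinSq m)
include hm hs

lemma lowerSemicontinuous_totalCollisionWeight :
    LowerSemicontinuous fun t ↦ totalCollisionWeight m (Ψ t) :=
  lowerSemicontinuous_integral
    (fun _ ↦ hm.ae_mem.mono fun _ ↦ collisionWeight_nonneg _)
    (h.integrable_collisionWeight hm hs)
    (hm.ae_mem.mono fun _ hω ↦
      continuous_const.add (h.continuous_gaussianDeficit (halfAngleSinSq_nonneg hω)))

lemma isBoundedUnder_totalCollisionWeight {t : ℝ} (ht : 0 ≤ t) :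
    IsBoundedUnder (· ≤ ·) (𝓝[Ici 0] t) fun τ ↦ totalCollisionWeight m (Ψ τ) := by
  have hβ := integral_halfAngleSinSq_nonneg hm
  refine isBoundedUnder_nhdsWithin_Ici_of_le_exp_mul hβ
    (fun t ↦ totalCollisionWeight_nonneg hm (Ψ t))
    (h.lowerSemicontinuous_totalCollisionWeight hm hs) (fun t c ht htc h_bdd ↦ ?_) ht
  unfold totalCollisionWeight
  rw [← integral_const_mul]
  refine integral_mono_ae (h.integrable_collisionWeight hm hs t)
    ((h.integrable_collisionWeight hm hs c).const_mul _) ?_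
  filter_upwards [hm.ae_mem] with ω hω
  have hsω := halfAngleSinSq_nonneg hω
  have h_exp := one_le_exp (mul_nonneg hβ (sub_nonneg.2 htc))
  rw [collisionWeight, collisionWeight, mul_add]
  exact add_le_add (le_mul_of_one_le_left hsω h_exp)
    (h.gaussianDeficit_le_exp_mul_of_isBoundedUnder hm hs hsω ht htc h_bdd)

lemma gaussianDeficit_le_exp_mul {S a c : ℝ} (hS : 0 ≤ S) (ha : 0 ≤ a) (hac : a ≤ c) :
    gaussianDeficit (symmetrization (Ψ a : Measure E3)) S ≤
      exp ((∫ ω, halfAngleSinSq ω ∂m) * (c - a)) *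
        gaussianDeficit (symmetrization (Ψ c : Measure E3)) S := by
  refine h.gaussianDeficit_le_exp_mul_of_isBoundedUnder hm hs hS ha hac fun t ht ↦ ?_
  have ht₀ : 0 < t := ha.trans_lt ht.1
  rw [← nhdsWithin_eq_nhds.2 (Ici_mem_nhds ht₀)]
  exact h.isBoundedUnder_totalCollisionWeight hm hs ht₀.le

lemma norm_symmetrized_collisionDefect_le {t T r : ℝ} {ξ ω : E3} {L : E3 ≃ₗᵢ[ℝ] E3} (ht : 0 ≤ t)
    (htT : t ≤ T) (hξ : ‖ξ‖ ≤ r) (hL : IsFrameAt L ξ) (hω : ω ∈ upperHemisphere) :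
    ‖collisionDefect (charFn (Ψ t)) ξ (L ω) +
        collisionDefect (charFn (Ψ t)) ξ (L (axialRotation π ω))‖ ≤
      16 * (1 + r ^ 2) * (halfAngleSinSq ω + exp ((∫ ω, halfAngleSinSq ω ∂m) * T) *
        gaussianDeficit (symmetrization (Ψ T : Measure E3)) (halfAngleSinSq ω)) := by
  have hsω := halfAngleSinSq_nonneg hω
  have hβ := integral_halfAngleSinSq_nonneg hm
  refine (norm_collisionDefect_add_axialRotation_pi_le hL (Ψ t) hω).trans ?_
  gcongr
  · exact add_nonneg hsω (gaussianDeficit_nonneg _ hsω)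
  · refine (h.gaussianDeficit_le_exp_mul hm hs hsω ht htT).trans ?_
    gcongr
    · exact gaussianDeficit_nonneg _ hsω
    · linarith

omit [SFinite m] hs in
lemma collisionIntegral_eq_symmetrized {t : ℝ} {ξ : E3} {L : E3 ≃ₗᵢ[ℝ] E3} (hL : IsFrameAt L ξ) :
    collisionIntegral m (charFn (Ψ t)) ξ =
      2⁻¹ * ∫ ω, (collisionDefect (charFn (Ψ t)) ξ (L ω) +
        collisionDefect (charFn (Ψ t)) ξ (L (axialRotation π ω))) ∂m := by
  rw [← two_mul_integral_collisionDefect hm (h.integrable _ _ _ hL),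
    integral_collisionDefect_eq_collisionIntegral hm (charFn_zero _) hL,
    inv_mul_cancel_left₀ two_ne_zero]

theorem continuousOn_collisionIntegral :
    ContinuousOn (fun p : ℝ × E3 ↦ collisionIntegral m (charFn (Ψ p.1)) p.2)
      (Ici 0 ×ˢ univ) := by
  rintro ⟨t₀, ξ₀⟩ -
  obtain ⟨L, hL, hL_cont⟩ := exists_frames_continuousAt ξ₀
  have h_near : ∀ᶠ p : ℝ × E3 in 𝓝[Ici 0 ×ˢ univ] (t₀, ξ₀),
      (0 ≤ p.1 ∧ p.1 ≤ t₀ + 1) ∧ ‖p.2‖ ≤ ‖ξ₀‖ + 1 := by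
    have h_time : ∀ᶠ p : ℝ × E3 in 𝓝 (t₀, ξ₀), p.1 < t₀ + 1 :=
      continuousAt_fst.eventually_lt_const (lt_add_one t₀)
    have h_freq : ∀ᶠ p : ℝ × E3 in 𝓝 (t₀, ξ₀), ‖p.2‖ < ‖ξ₀‖ + 1 :=
      continuousAt_snd.norm.eventually_lt_const (lt_add_one ‖ξ₀‖)
    filter_upwards [self_mem_nhdsWithin, nhdsWithin_le_nhds h_time, nhdsWithin_le_nhds h_freq]
      with p hp hpt hpξ using ⟨⟨hp.1, hpt.le⟩, hpξ.le⟩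
  simp only [h.collisionIntegral_eq_symmetrized hm (hL _)]
  refine continuousWithinAt_const.mul (continuousWithinAt_of_dominated
    (bound := fun ω ↦ 16 * (1 + (‖ξ₀‖ + 1) ^ 2) * (halfAngleSinSq ω +
      exp ((∫ ω, halfAngleSinSq ω ∂m) * (t₀ + 1)) *
        gaussianDeficit (symmetrization (Ψ (t₀ + 1) : Measure E3)) (halfAngleSinSq ω)))
    (.of_forall fun p ↦ ?_)
    (h_near.mono fun p hp ↦ hm.ae_mem.mono fun ω hω ↦
      h.norm_symmetrized_collisionDefect_le hm hs hp.1.1 hp.1.2 hp.2 (hL p.2) hω)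
    ?_ (.of_forall fun ω ↦ ?_))
  · have h_int := h.integrable p.1 p.2 _ (hL p.2)
    exact (h_int.add ((hm.integrable_comp (axialRotation_pole π)).2 h_int)).aestronglyMeasurable
  · have h_int := integrable_gaussianDeficit_halfAngleSinSq hm hs _ (h.integrable (t₀ + 1))
    exact (hs.add (h_int.const_mul _)).const_mul _
  · exact ((h.continuousAt_collisionDefect (hL_cont ω) t₀).add
      (h.continuousAt_collisionDefect (hL_cont _) t₀)).continuousWithinAt

end IsBobylevFlow

end CollisionIntegralContinuity

section Solution

variable {b : ℝ → ℝ} {ψ₀ : E3 → ℂ} {ψ : ℝ → E3 → ℂ} (hψ : IsBobylevSolution b ψ ψ₀)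
include hψ

lemma exists_probabilityMeasure_charFn_eq :
    ∃ Ψ : ℝ → ProbabilityMeasure E3, ∀ t, ψ (max t 0) = charFn (Ψ t) := by
  have h (t : ℝ) : ∃ Ψ : ProbabilityMeasure E3, ψ (max t 0) = charFn Ψ := by
    obtain ⟨Ψ, hΨ, h_eq⟩ := hψ.isCharFn (max t 0) (le_max_right _ _)
    exact ⟨⟨Ψ, hΨ⟩, h_eq⟩
  exact ⟨fun t ↦ (h t).choose, fun t ↦ (h t).choose_spec⟩

variable (hb : Measurable b) (hb_nonneg : ∀ x, 0 ≤ b x) {Ψ : ℝ → ProbabilityMeasure E3}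
  (hΨ : ∀ t, ψ (max t 0) = charFn (Ψ t))
include hb hb_nonneg hΨ

omit hψ in
lemma integral_bobylevIntegrand_eq_collisionIntegral {t : ℝ} (ht : 0 ≤ t) (ξ : E3) :
    ∫ σ, bobylevIntegrand b ψ t ξ σ ∂sphμ =
      collisionIntegral (foldedKernel b) (charFn (Ψ t)) ξ := by
  have h_eq : ψ t = charFn (Ψ t) := by rw [← hΨ t, max_eq_left ht]
  rcases eq_or_ne ξ 0 with rfl | hξ
  · have h_zero : ψ t 0 = 1 := by rw [h_eq, charFn_zero]
    simp only [bobylevIntegrand_zero_freq h_zero, collisionIntegral,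
      collisionDefect_zero_freq (charFn_zero _), integral_zero]
  · rw [integral_bobylevIntegrand hb hb_nonneg (h_eq ▸ continuous_charFn _) hξ (isFrameAt_frame ξ),
      h_eq, collisionIntegral]

lemma integrable_collisionDefect_foldedKernel (t : ℝ) (ξ : E3) (L : E3 ≃ₗᵢ[ℝ] E3)
    (hL : IsFrameAt L ξ) :
    Integrable (fun ω ↦ collisionDefect (charFn (Ψ t)) ξ (L ω)) (foldedKernel b) := by
  rcases eq_or_ne ξ 0 with rfl | hξ
  · simp only [collisionDefect_zero_freq (charFn_zero _)]
    exact integrable_zero _ _ _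
  · rw [← hΨ t]
    exact (integrable_bobylevIntegrand_iff hb hb_nonneg (hΨ t ▸ continuous_charFn _) hξ hL).1
      (hψ.integrable _ (le_max_right _ _) ξ)

lemma isBobylevFlow_foldedKernel : IsBobylevFlow (foldedKernel b) Ψ where
  continuous := by
    simp only [← hΨ]
    exact hψ.cont.comp_continuous (f := fun p : ℝ × E3 ↦ (max p.1 0, p.2)) (by fun_prop)
      fun p ↦ ⟨mem_Ici.2 (le_max_right p.1 0), mem_univ _⟩
  integrable := integrable_collisionDefect_foldedKernel hψ hb hb_nonneg hΨ
  hasDerivAt t ht ξ := by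
    rw [← integral_bobylevIntegrand_eq_collisionIntegral hb hb_nonneg hΨ ht.le]
    refine ((hψ.eq t ht.le ξ).hasDerivAt (Ici_mem_nhds ht)).congr_of_eventuallyEq ?_
    filter_upwards [Ici_mem_nhds ht] with s hs
    rw [← hΨ s, max_eq_left hs]

end Solution

theorem time_derivative_continuous_general (b : ℝ → ℝ) (hb_meas : Measurable b)
    (hb_nonneg : ∀ x, 0 ≤ b x) (ψ₀ : E3 → ℂ) (ψ : ℝ → E3 → ℂ) (hψ : IsBobylevSolution b ψ ψ₀) :
    ContinuousOn (fun p : ℝ × E3 ↦ ∫ σ, bobylevIntegrand b ψ p.1 p.2 σ ∂sphμ)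
      (Ici 0 ×ˢ univ) := by
  obtain ⟨Ψ, hΨ⟩ := exists_probabilityMeasure_charFn_eq hψ
  have hm := isAxialKernel_foldedKernel hb_meas
  have h_flow := isBobylevFlow_foldedKernel hψ hb_meas hb_nonneg hΨ
  suffices ContinuousOn
      (fun p : ℝ × E3 ↦ collisionIntegral (foldedKernel b) (charFn (Ψ p.1)) p.2)
      (Ici 0 ×ˢ univ) from
    this.congr fun p hp ↦
      integral_bobylevIntegrand_eq_collisionIntegral hb_meas hb_nonneg hΨ hp.1 p.2
  by_cases hs : Integrable halfAngleSinSq (foldedKernel b)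
  · exact h_flow.continuousOn_collisionIntegral hm hs
  · refine (continuousOn_const (c := 0)).congr fun p _ ↦ integral_eq_zero_of_ae ?_
    filter_upwards [hm.ae_mem] with ω hω using
      collisionDefect_charFn_eq_zero hm hs (h_flow.integrable p.1) (isFrameAt_frame p.2) hω

/-- continuity of the time derivative of the solution, i.e. of
the collision integral `(t,ξ) ↦ ∂_t ψ(t,ξ)`. -/
theorem time_derivative_continuous
    (b : ℝ → ℝ) (hb_meas : Measurable b) (hb_nonneg : ∀ x, 0 ≤ b x)
    (α₀ : ℝ) (hα₀0 : 0 < α₀) (hα₀2 : α₀ ≤ 2)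
    (hint : (∫⁻ θ : ℝ in Set.Ioc 0 (π/2),
        ENNReal.ofReal (Real.sin (θ/2) ^ α₀ * b (Real.cos θ) * Real.sin θ)) < ⊤)
    (α : ℝ) (hα : α₀ ≤ α) (hα2 : α ≤ 2)
    (ψ₀ : E3 → ℂ) (hψ₀ : memK α ψ₀)
    (ψ : ℝ → E3 → ℂ) (hψ : IsBobylevSolution b ψ ψ₀)
    (hψK : ∀ t ≥ 0, memK α (ψ t)) (hψc : KContinuous α ψ) :
    ContinuousOn (fun p : ℝ × E3 => ∫ σ, bobylevIntegrand b ψ p.1 p.2 σ ∂sphμ)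
      (Set.Ici 0 ×ˢ Set.univ) := by
  exact time_derivative_continuous_general b hb_meas hb_nonneg ψ₀ ψ hψ
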